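/- arXiv:1806.08351 — 3 statements merged into one kernel-verified Lean document; each statement's English description precedes it below -/
import Mathlib

section
/- Twelve-Point Theorem for ℓ-reflexive pairs: Let ℓ be a positive integer and let Q ⊆ ℝ² be an ℓ-reflexive polygon with respect to ℤ². Then #(frontier Q ∩ ℤ²) + #(frontier Q* ∩ ℤ²) = 12, where Q* := ℓ·Q° is the dual of Q. -/
open Set

noncomputable section

abbrev V : Type := ℝ × ℝ

/-- Standard inner product on ℝ². -/
def dotV (x y : V) : ℝ := x.1 * y.1 + x.2 * y.2

/-- The standard lattice ℤ² viewed inside ℝ². -/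
def latticePts : Set V := {x : V | ∃ p : ℤ × ℤ, x = ((p.1 : ℝ), (p.2 : ℝ))}

/-- A polygon: convex hull of a finite set of points that affinely spans ℝ². -/
def IsPolygon (Q : Set V) : Prop :=
  ∃ A : Finset V, Q = convexHull ℝ (A : Set V) ∧ affineSpan ℝ (A : Set V) = ⊤

/-- An edge of `Q`: a one-dimensional face, i.e. the argmin set of some nonzero
linear functional, containing more than one point. -/
def IsEdge (Q F : Set V) : Prop :=
  (∃ η : V, η ≠ 0 ∧ F = {y ∈ Q | ∀ z ∈ Q, dotV η y ≤ dotV η z}) ∧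
    ∃ y₁ ∈ F, ∃ y₂ ∈ F, y₁ ≠ y₂

/-- A primitive lattice point: the only lattice points on the segment `conv {0, v}`
are `0` and `v`. -/
def IsPrimitive (v : V) : Prop :=
  v ∈ latticePts ∧ v ≠ 0 ∧ segment ℝ (0 : V) v ∩ latticePts = {(0 : V), v}

/-- An ℓ-reflexive polygon with respect to ℤ². -/
structure IsLReflexive (ℓ : ℕ) (Q : Set V) : Prop where
  polygon : IsPolygon Q
  vertices_primitive : ∀ v ∈ Set.extremePoints ℝ Q, IsPrimitive v
  zero_mem_interior : (0 : V) ∈ interior Q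
  edge_cond : ∀ F, IsEdge Q F →
    ∃ η : V, IsPrimitive η ∧ F ⊆ {y : V | dotV η y = -(ℓ : ℝ)}

/-- The polar polygon `Q° = {x | ⟨x,y⟩ ≥ -1 for all y ∈ Q}`. -/
def polarPolygon (Q : Set V) : Set V := {x : V | ∀ y ∈ Q, -1 ≤ dotV x y}

/-- The dual of an ℓ-reflexive polygon: `Q* = ℓ·Q°`. -/
def dualPolygon (ℓ : ℕ) (Q : Set V) : Set V := (fun x : V => (ℓ : ℝ) • x) '' polarPolygon Q

/-!
The proof turns the theorem into a statement about the cyclic sequence of boundary lattice points,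
and proves that statement with Dedekind sums.

**From the polygon to a sequence.** Let `B` be the set of lattice points on the frontier of `Q`. For
`v ∈ B` let `η v` be the primitive integral normal of the edge that leaves `v` counterclockwise, so
that `η v` equals `-ℓ` at `v` and is at least `-ℓ` on `Q`. Turning `η v` by a right angle gives the
primitive direction of that edge, so `v + rot (η v)` is the next lattice point on the boundary, and
`det (v, v + rot (η v)) = ℓ`. `IsLReflexive.exists_next` constructs `η v`: a supporting functional at
`v` is tilted until it meets a vertex on the counterclockwise side of `v`, and the face on which
the tilted functional is minimal is an edge. The structure `BoundaryData` records what is needed of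
`B` and `η`.

**Dual points are bends.** The difference between the normals after and before `v` vanishes on `v`.
If `v` is a vertex it is primitive, so the difference is `c v • rot v` with an integer `c v ≥ 0`; if
`v` is not a vertex, the two normals agree and `c v = 0` (`BoundaryData.exists_bend`). Lattice points
on the boundary of `Q*` are the integral functionals with minimum `-ℓ` on `Q`, and each such
functional is `η (τ v) + j • rot v` for exactly one `v ∈ B` and one `0 < j ≤ c v`, where `τ v` is the
point before `v`. So there are `∑ c v` of them (`BoundaryData.ncard_dual`).

**The sum.** It remains to show `#B + ∑ c v = 12` (`BoundaryData.card_add_sum_bend`). Consecutive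
points satisfy `next + previous = (2 - c v) • v`. Hence every `v ∈ B` has integral coordinates
`(X v, Y v)` in terms of two consecutive points `v₀, v₁`, and consecutive coordinate vectors have
determinant one. Let `S` be twelve times the Dedekind sum. Its reciprocity law says that, when
`x y' - x' y = 1` and `y, y' > 0`,
`(S (x, y) - x / y) - (S (x', y') - x' / y') = y / y' + y' / y - 3`,
and `potential_step` extends this to all signs of `y, y'`, with `3` replaced by
`3 * sign y * sign y'`. Around the cycle the left side telescopes to zero. On the right, the two
quotients with denominator `Y v` add up to `2 - c v`. The sequence goes around the origin once,
because no boundary point lies strictly between two consecutive ones (`BoundaryData.cone`); hence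
`∑ (1 - sign y * sign y') = 4`, and so `0 = 2 #B - ∑ c v - 3 (#B - 4)`.
-/

/-! ### Dedekind sums and their reciprocity law -/

/-- The sum of `i * (h * i mod k)` over `0 ≤ i < k`. -/
def dedM (h : ℤ) (k : ℕ) : ℤ := ∑ i ∈ Finset.range k, (i : ℤ) * ((h * i) % k)

/-- Twelve times the classical Dedekind sum `s(h, k)`, written with residues in place of
sawtooth functions; the two agree for `h` coprime to `k > 0`. -/
def dedS (h : ℤ) (k : ℕ) : ℚ := 12 * (dedM h k : ℚ) / (k : ℚ) ^ 2 - 3 * ((k : ℚ) - 1)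

/-- Multiplication by `h` permutes the residues modulo `k`, with inverse multiplication by `h'`. -/
lemma sum_reindex {k : ℕ} (hk : 0 < k) {h h' : ℤ} (hh : h * h' ≡ 1 [ZMOD k]) (f : ℤ → ℤ → ℤ) :
    ∑ i ∈ Finset.range k, f i ((h * i) % k) = ∑ i ∈ Finset.range k, f ((h' * i) % k) i := by
  have hk0 : (k : ℤ) ≠ 0 := by positivity
  have hkp : (0 : ℤ) < k := by positivity
  have key : ∀ (a b : ℤ), a * b ≡ 1 [ZMOD k] → ∀ i ∈ Finset.range k,
      (b * ((a * i) % k)) % k = (i : ℤ) := by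
    intro a b hab i hi
    have hi' : (i : ℤ) < k := by exact_mod_cast Finset.mem_range.mp hi
    have h1 : b * ((a * i) % k) ≡ i [ZMOD k] := by
      calc b * ((a * i) % k) ≡ b * (a * i) [ZMOD k] := (Int.mod_modEq _ _).mul_left _
        _ = (a * b) * i := by ring
        _ ≡ 1 * i [ZMOD k] := hab.mul_right _
        _ = i := one_mul _
    rw [h1.eq, Int.emod_eq_of_lt (by positivity) hi']
  have hh' : h' * h ≡ 1 [ZMOD k] := by rwa [mul_comm]
  have nn : ∀ a : ℤ, (((a % k).toNat : ℕ) : ℤ) = a % k := fun a =>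
    Int.toNat_of_nonneg (Int.emod_nonneg _ hk0)
  have lt : ∀ a : ℤ, (a % k).toNat ∈ Finset.range k := fun a => by
    rw [Finset.mem_range]; zify; rw [nn]; exact Int.emod_lt_of_pos _ hkp
  refine Finset.sum_bij' (fun i _ => ((h * i) % k).toNat) (fun i _ => ((h' * i) % k).toNat)
    (fun i _ => lt _) (fun i _ => lt _) ?_ ?_ ?_
  · intro i hi; zify; rw [nn, nn, key h h' hh i hi]
  · intro i hi; zify; rw [nn, nn, key h' h hh' i hi]
  · intro i hi; rw [nn, key h h' hh i hi]

lemma dedS_inv {k : ℕ} (hk : 0 < k) {h h' : ℤ} (hh : h * h' ≡ 1 [ZMOD k]) :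
    dedS h k = dedS h' k := by
  have : dedM h k = dedM h' k := by
    unfold dedM
    rw [sum_reindex hk hh (fun a b => a * b)]
    exact Finset.sum_congr rfl fun i _ => mul_comm _ _
  rw [dedS, this, dedS]

lemma sum_range_cast (k : ℕ) : ∑ i ∈ Finset.range k, (i : ℚ) = k * (k - 1) / 2 := by
  induction k with
  | zero => simp
  | succ n ih => rw [Finset.sum_range_succ, ih]; push_cast; ring

lemma sum_range_sq (k : ℕ) :
    ∑ i ∈ Finset.range k, (i : ℚ) ^ 2 = k * (k - 1) * (2 * k - 1) / 6 := by
  induction k with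
  | zero => simp
  | succ n ih => rw [Finset.sum_range_succ, ih]; push_cast; ring

lemma mul_emod_ne {k : ℕ} {h : ℤ} (hc : IsCoprime h (k : ℤ)) {i : ℕ} (hi0 : 0 < i) (hi : i < k) :
    (h * i) % k ≠ 0 := by
  intro h0
  have h1 : (k : ℤ) ∣ i := hc.symm.dvd_of_dvd_mul_left (Int.dvd_of_emod_eq_zero h0)
  have := Nat.le_of_dvd hi0 (by exact_mod_cast h1)
  omega

lemma dedS_neg {k : ℕ} (hk : 0 < k) {h : ℤ} (hc : IsCoprime h (k : ℤ)) :
    dedS (-h) k = - dedS h k := by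
  have h1 : dedM (-h) k + dedM h k = k * ∑ i ∈ Finset.range k, (i : ℤ) := by
    unfold dedM
    rw [← Finset.sum_add_distrib, Finset.mul_sum]
    refine Finset.sum_congr rfl fun i hi => ?_
    rcases Nat.eq_zero_or_pos i with rfl | hi0
    · simp
    · have hne := mul_emod_ne hc hi0 (Finset.mem_range.mp hi)
      have : (-h * i) % k = k - (h * i) % k := by
        have hp : (0 : ℤ) < k := by positivity
        have a1 := Int.emod_nonneg (h * i) hp.ne'
        have a2 := Int.emod_lt_of_pos (h * i) hp
        have e := Int.mul_ediv_add_emod (h * i) k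
        rw [show -h * (i : ℤ) = (k - (h * i) % k) + k * (-((h * i) / k) - 1) by linarith,
          Int.add_mul_emod_self_left, Int.emod_eq_of_lt] <;> omega
      rw [this]; ring
  have h2 : (dedM (-h) k : ℚ) + dedM h k = k * (k * (k - 1) / 2) := by
    rw [← sum_range_cast]
    have := congrArg (fun z : ℤ => (z : ℚ)) h1
    push_cast at this
    exact this
  have hk' : (k : ℚ) ≠ 0 := by positivity
  have h3 : (dedM (-h) k : ℚ) = k * (k * (k - 1) / 2) - dedM h k := by linarith
  rw [dedS, dedS, h3]
  field_simp
  ring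

/-- The sum of `i * ⌊h * i / k⌋` over `0 ≤ i < k`. -/
def dedF (h k : ℕ) : ℚ := ∑ i ∈ Finset.range k, (i : ℚ) * ((h * i / k : ℕ) : ℚ)

lemma emod_floor (h k i : ℕ) :
    ((((h : ℤ) * i) % k : ℤ) : ℚ) = h * i - k * ((h * i / k : ℕ) : ℚ) := by
  have h1 : k * (h * i / k) + h * i % k = h * i := Nat.div_add_mod _ _
  have h2 : ((h : ℤ) * i) % k = ((h * i % k : ℕ) : ℤ) := by push_cast; rfl
  have h3 : (k : ℚ) * ((h * i / k : ℕ) : ℚ) + ((h * i % k : ℕ) : ℚ) = h * i := by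
    exact_mod_cast h1
  rw [h2, Int.cast_natCast]
  linarith

lemma dedM_eq (h k : ℕ) :
    (dedM h k : ℚ) = h * (k * (k - 1) * (2 * k - 1) / 6) - k * dedF h k := by
  rw [← sum_range_sq, dedF, dedM, Finset.mul_sum, Finset.mul_sum, ← Finset.sum_sub_distrib]
  rw [Int.cast_sum]
  refine Finset.sum_congr rfl fun i _ => ?_
  rw [Int.cast_mul, emod_floor]; push_cast; ring

lemma exists_inv {h k : ℕ} (hc : Nat.Coprime h k) : ∃ h' : ℤ, (h : ℤ) * h' ≡ 1 [ZMOD k] := by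
  obtain ⟨a, b, hab⟩ := Nat.isCoprime_iff_coprime.mpr hc
  refine ⟨a, (Int.modEq_iff_dvd.mpr ⟨b, ?_⟩)⟩
  linarith

lemma sum_floor {h k : ℕ} (hk : 0 < k) (hc : Nat.Coprime h k) :
    ∑ i ∈ Finset.range k, ((h * i / k : ℕ) : ℚ) = (h - 1) * (k - 1) / 2 := by
  obtain ⟨h', hh⟩ := exists_inv hc
  have h1 := congrArg (fun z : ℤ => (z : ℚ)) (sum_reindex hk hh (fun _ b => b))
  have hk' : (k : ℚ) ≠ 0 := by positivity
  push_cast at h1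
  simp only [← Int.cast_natCast (R := ℚ)] at h1
  simp only [emod_floor, Finset.sum_sub_distrib, ← Finset.mul_sum] at h1
  simp only [Int.cast_natCast] at h1
  rw [sum_range_cast] at h1
  apply mul_left_cancel₀ hk'
  linarith

/-- Obtained by summing `(h * i mod k) ^ 2` in two ways. -/
lemma sum_floor_sq {h k : ℕ} (hk : 0 < k) (hc : Nat.Coprime h k) :
    (k : ℚ) ^ 2 * ∑ i ∈ Finset.range k, ((h * i / k : ℕ) : ℚ) ^ 2 =
      (1 - h ^ 2) * (k * (k - 1) * (2 * k - 1) / 6) + 2 * h * k * dedF h k := by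
  obtain ⟨h', hh⟩ := exists_inv hc
  have h1 := congrArg (fun z : ℤ => (z : ℚ)) (sum_reindex hk hh (fun _ b => b ^ 2))
  push_cast at h1
  simp only [← Int.cast_natCast (R := ℚ)] at h1
  simp only [emod_floor] at h1
  simp only [Int.cast_natCast] at h1
  rw [sum_range_sq] at h1
  have h2 : ∑ i ∈ Finset.range k, ((h : ℚ) * i - k * ((h * i / k : ℕ) : ℚ)) ^ 2 =
      h ^ 2 * ∑ i ∈ Finset.range k, (i : ℚ) ^ 2 - 2 * h * k * dedF h k +
      (k : ℚ) ^ 2 * ∑ i ∈ Finset.range k, ((h * i / k : ℕ) : ℚ) ^ 2 := by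
    rw [dedF, Finset.mul_sum, Finset.mul_sum, Finset.mul_sum, ← Finset.sum_sub_distrib,
      ← Finset.sum_add_distrib]
    exact Finset.sum_congr rfl fun i _ => by ring
  rw [h2, sum_range_sq] at h1
  linarith

/-- Writing `m * (m + 1)` as `2 * ∑ j ≤ m, j` turns the left side into a count of lattice points
of the rectangle `[0, k) × [0, h)` on one side of its diagonal, which is summed in the other
order. -/
lemma sum_floor_tri {h k : ℕ} (hh : 0 < h) (hk : 0 < k) (hc : Nat.Coprime h k) :
    ∑ i ∈ Finset.range k, ((h * i / k : ℕ) : ℚ) * (((h * i / k : ℕ) : ℚ) + 1) =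
      (k - 1) * (h * (h - 1)) - 2 * dedF k h := by
  have e1 : ∀ i ∈ Finset.range k, ((h * i / k : ℕ) : ℚ) * (((h * i / k : ℕ) : ℚ) + 1) =
      2 * ∑ j ∈ Finset.range h, if k * j ≤ h * i then (j : ℚ) else 0 := by
    intro i hi
    have hi := Finset.mem_range.mp hi
    have : (Finset.range h).filter (fun j => k * j ≤ h * i) = Finset.range (h * i / k + 1) := by
      ext j
      simp only [Finset.mem_filter, Finset.mem_range, Nat.lt_succ_iff, Nat.le_div_iff_mul_le hk]
      constructor
      · rintro ⟨_, h2⟩; linarith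
      · intro h2
        refine ⟨?_, by linarith⟩
        by_contra! h3
        nlinarith
    rw [← Finset.sum_filter, this, sum_range_cast]
    push_cast; ring
  have e2 : ∀ j ∈ Finset.range h, (∑ i ∈ Finset.range k, if k * j ≤ h * i then (j : ℚ) else 0) =
      j * (k - 1) - j * ((k * j / h : ℕ) : ℚ) := by
    intro j hj
    have hj := Finset.mem_range.mp hj
    rcases Nat.eq_zero_or_pos j with rfl | hj0
    · simp
    have : (Finset.range k).filter (fun i => k * j ≤ h * i) = Finset.Ico (k * j / h + 1) k := by
      ext i
      simp only [Finset.mem_filter, Finset.mem_range, Finset.mem_Ico, Nat.succ_le_iff,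
        Nat.div_lt_iff_lt_mul hh]
      constructor
      · rintro ⟨h1, h2⟩
        refine ⟨lt_of_le_of_ne (by linarith) ?_, h1⟩
        intro h3
        have : h ∣ k * j := ⟨i, by linarith⟩
        have := Nat.le_of_dvd hj0 (hc.dvd_of_dvd_mul_left this)
        omega
      · rintro ⟨h1, h2⟩; exact ⟨h2, by linarith⟩
    have hlt : k * j / h < k := by
      rw [Nat.div_lt_iff_lt_mul hh]; exact Nat.mul_lt_mul_of_pos_left hj hk
    rw [← Finset.sum_filter, this, Finset.sum_const, Nat.card_Ico, nsmul_eq_mul,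
      Nat.cast_sub (by omega)]
    push_cast; ring
  rw [Finset.sum_congr rfl e1, ← Finset.mul_sum, Finset.sum_comm, Finset.sum_congr rfl e2,
    Finset.sum_sub_distrib, ← Finset.sum_mul, sum_range_cast, dedF]
  ring

/-- Reciprocity law for Dedekind sums. -/
theorem dedS_reciprocity {h k : ℕ} (hh : 0 < h) (hk : 0 < k) (hc : Nat.Coprime h k) :
    dedS h k + dedS k h = h / k + k / h + 1 / (h * k) - 3 := by
  have h1 := sum_floor hk hc
  have h2 := sum_floor_sq hk hc
  have h3 := sum_floor_tri hh hk hc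
  simp only [mul_add, mul_one, Finset.sum_add_distrib, ← pow_two] at h3
  rw [h1] at h3
  have h4 : ∑ i ∈ Finset.range k, ((h * i / k : ℕ) : ℚ) ^ 2 =
    (k - 1) * (h * (h - 1)) - 2 * dedF k h - (h - 1) * (k - 1) / 2 := by linarith
  rw [h4] at h2
  have hk' : (k : ℚ) ≠ 0 := by positivity
  have hh' : (h : ℚ) ≠ 0 := by positivity
  have e : dedS h k + dedS k h - (h / k + k / h + 1 / (h * k) - 3) =
      6 / (h * k ^ 2) * ((k : ℚ) ^ 2 *
        ((k - 1) * (h * (h - 1)) - 2 * dedF k h - (h - 1) * (k - 1) / 2) -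
        ((1 - h ^ 2) * (k * (k - 1) * (2 * k - 1) / 6) + 2 * h * k * dedF h k)) := by
    rw [dedS, dedS, dedM_eq, dedM_eq]
    field_simp
    ring
  rw [h2, sub_self, mul_zero] at e
  linarith

/-- The reciprocity law for two columns of a unimodular matrix: there `x` is inverse to `y'` modulo
`y`, and `-x'` is inverse to `y` modulo `y'`. -/
lemma dedS_step {x x' : ℤ} {y y' : ℕ} (hy : 0 < y) (hy' : 0 < y') (h : x * y' - x' * y = 1) :
    dedS x y - dedS x' y' = y / y' + y' / y + 1 / (y * y') - 3 := by
  have h1 : dedS x y = dedS y' y := dedS_inv hy (Int.modEq_iff_dvd.mpr ⟨-x', by linarith⟩)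
  have h2 : dedS (-x') y' = dedS y y' :=
    dedS_inv hy' (Int.modEq_iff_dvd.mpr ⟨x, by linarith⟩)
  rw [dedS_neg hy' ⟨-y, x, by linarith⟩] at h2
  have hc : Nat.Coprime y y' := by
    rw [← Nat.isCoprime_iff_coprime]; exact ⟨-x', x, by linarith⟩
  have := dedS_reciprocity hy hy' hc
  linarith

/-! ### Cyclic sequences of boundary lattice points -/

/-- The standard pairing on `ℤ²`. -/
def dt (f v : ℤ × ℤ) : ℤ := f.1 * v.1 + f.2 * v.2

/-- The determinant of two vectors of `ℤ²`. -/
def cr (v w : ℤ × ℤ) : ℤ := v.1 * w.2 - v.2 * w.1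

/-- Clockwise rotation by a right angle. It takes an inner normal of an edge to the counterclockwise
direction of that edge. -/
def rot (f : ℤ × ℤ) : ℤ × ℤ := (f.2, -f.1)

/-- The combinatorics of the boundary of an `ℓ`-reflexive polygon: `B` is the set of lattice points
on the boundary, and `η v` is the primitive inner normal of the edge that leaves `v ∈ B`
counterclockwise (`η` is arbitrary off `B`). The field `vert` says that `v` is primitive or is not
a vertex, the latter in the form that at most one supporting functional is equal to `-ℓ` at
`v`. -/
structure BoundaryData (ℓ : ℤ) (B : Finset (ℤ × ℤ)) (η : ℤ × ℤ → ℤ × ℤ) : Prop where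
  pos : 0 < ℓ
  nonempty : B.Nonempty
  on : ∀ v ∈ B, dt (η v) v = -ℓ
  ge : ∀ v ∈ B, ∀ w ∈ B, -ℓ ≤ dt (η v) w
  prim : ∀ v ∈ B, IsCoprime (η v).1 (η v).2
  next : ∀ v ∈ B, v + rot (η v) ∈ B
  vert : ∀ v ∈ B, IsCoprime v.1 v.2 ∨ ∀ f g, dt f v = -ℓ → dt g v = -ℓ →
    (∀ w ∈ B, -ℓ ≤ dt f w) → (∀ w ∈ B, -ℓ ≤ dt g w) → f = g

lemma dt_add (f v w : ℤ × ℤ) : dt f (v + w) = dt f v + dt f w := by simp [dt]; ring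
lemma dt_rot (f g : ℤ × ℤ) : dt f (rot g) = cr f g := by simp [dt, rot, cr]; ring
lemma cr_anti (f g : ℤ × ℤ) : cr g f = - cr f g := by simp [cr]; ring

/-- Two parallel functionals with the same nonzero value at some point are equal. -/
lemma eq_of_cr_eq_zero {ℓ : ℤ} (hℓ : ℓ ≠ 0) {f g p : ℤ × ℤ} (hf : dt f p = -ℓ)
    (hg : dt g p = -ℓ) (h : cr f g = 0) : f = g := by
  simp only [dt, cr] at *
  ext
  · apply mul_left_cancel₀ hℓ
    linear_combination f.1 * hg - g.1 * hf - p.2 * h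
  · apply mul_left_cancel₀ hℓ
    linear_combination f.2 * hg - g.2 * hf + p.1 * h

namespace BoundaryData

variable {ℓ : ℤ} {B : Finset (ℤ × ℤ)} {η : ℤ × ℤ → ℤ × ℤ}

lemma cr_next (h : BoundaryData ℓ B η) {v : ℤ × ℤ} (hv : v ∈ B) : cr v (v + rot (η v)) = ℓ := by
  have := h.on v hv
  simp only [dt, cr, rot, Prod.fst_add, Prod.snd_add] at *
  linear_combination -this

lemma on_next (h : BoundaryData ℓ B η) {v : ℤ × ℤ} (hv : v ∈ B) :
    dt (η v) (v + rot (η v)) = -ℓ := by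
  rw [dt_add, h.on v hv, dt_rot]; simp [cr]; ring

lemma next_injOn (h : BoundaryData ℓ B η) : Set.InjOn (fun v => v + rot (η v)) B := by
  intro v hv w hw hvw
  simp only [Finset.mem_coe] at hv hw
  simp only at hvw
  have a1 := h.on_next hv
  have b1 := h.on_next hw
  have a2 := h.ge v hv w hw
  have b2 := h.ge w hw v hv
  have c1 : dt (η v) (v + rot (η v)) = dt (η v) w + cr (η v) (η w) := by
    rw [hvw, dt_add, dt_rot]
  have c2 : dt (η w) (w + rot (η w)) = dt (η w) v + cr (η w) (η v) := by
    rw [← hvw, dt_add, dt_rot]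
  rw [cr_anti] at c2
  have e : η v = η w :=
    eq_of_cr_eq_zero h.pos.ne' a1 (by rw [hvw]; exact b1) (by linarith)
  rw [e] at hvw
  exact add_right_cancel hvw

lemma sum_next (h : BoundaryData ℓ B η) {O : Finset (ℤ × ℤ)} (hO : O ⊆ B)
    (hc : ∀ v ∈ O, v + rot (η v) ∈ O) {M : Type*} [AddCommMonoid M] (f : ℤ × ℤ → M) :
    ∑ v ∈ O, f (v + rot (η v)) = ∑ v ∈ O, f v := by
  have inj : Set.InjOn (fun v => v + rot (η v)) (O : Set (ℤ × ℤ)) :=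
    h.next_injOn.mono (by exact_mod_cast hO)
  exact Finset.sum_nbij (fun v => v + rot (η v)) hc inj
    (Finset.surjOn_of_injOn_of_card_le _ hc inj le_rfl) (fun _ _ => rfl)

/-- Passing to the next boundary point is injective on the finite set `B`, hence has an inverse
`τ`. -/
lemma exists_prev (h : BoundaryData ℓ B η) : ∃ τ : ℤ × ℤ → ℤ × ℤ,
    (∀ v ∈ B, τ v ∈ B) ∧ (∀ v ∈ B, τ v + rot (η (τ v)) = v) ∧
      ∀ v ∈ B, τ (v + rot (η v)) = v := by
  have surj := Finset.surjOn_of_injOn_of_card_le _ h.next h.next_injOn le_rfl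
  have : ∀ v, ∃ u, v ∈ B → u ∈ B ∧ u + rot (η u) = v := by
    intro v
    by_cases hv : v ∈ B
    · obtain ⟨u, hu, e⟩ := surj hv
      exact ⟨u, fun _ => ⟨hu, e⟩⟩
    · exact ⟨v, fun h => absurd h hv⟩
  choose τ hτ using this
  refine ⟨τ, fun v hv => (hτ v hv).1, fun v hv => (hτ v hv).2, fun v hv => ?_⟩
  have := hτ _ (h.next v hv)
  exact h.next_injOn this.1 hv this.2

/-- A boundary point in the closed cone spanned by two consecutive boundary points is one of
them. -/
lemma cone (h : BoundaryData ℓ B η) {v w : ℤ × ℤ} (hv : v ∈ B) (hw : w ∈ B)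
    (h1 : cr w v ≤ 0) (h2 : 0 ≤ cr w (v + rot (η v))) : w = v ∨ w = v + rot (η v) := by
  have hℓ := h.pos
  have hcr := h.cr_next hv
  have o1 := h.on v hv
  have o2 := h.ge v hv w hw
  have o3 := h.on w hw
  have o4 := h.ge w hw v hv
  have o5 := h.ge w hw _ (h.next v hv)
  obtain ⟨p, q, hpq⟩ := h.prim v hv
  have on' := h.on_next hv
  set u := v + rot (η v) with hu
  -- Cramer's rule: `ℓ w = α v + β u` with `α, β ≥ 0`
  have k1 : ℓ * w.1 = cr w u * v.1 - cr w v * u.1 := by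
    rw [← hcr]; simp only [cr]; ring
  have k2 : ℓ * w.2 = cr w u * v.2 - cr w v * u.2 := by
    rw [← hcr]; simp only [cr]; ring
  have k3 : dt (η v) w = -(cr w u - cr w v) := by
    apply mul_left_cancel₀ hℓ.ne'
    simp only [dt] at o1 on' ⊢
    linear_combination (η v).1 * k1 + (η v).2 * k2 + cr w u * o1 - cr w v * on'
  have k4 : ℓ * dt (η w) w = cr w u * dt (η w) v - cr w v * dt (η w) u := by
    simp only [dt]
    linear_combination (η w).1 * k1 + (η w).2 * k2
  have k5 : ℓ ≤ cr w u - cr w v := by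
    rw [o3] at k4
    have := mul_le_mul_of_nonneg_left o4 h2
    have := mul_le_mul_of_nonneg_left o5 (neg_nonneg.mpr h1)
    have : ℓ * ℓ ≤ ℓ * (cr w u - cr w v) := by linarith
    exact le_of_mul_le_mul_left this hℓ
  have k6 : cr w u - cr w v = ℓ := by linarith
  have u1 : u.1 = v.1 + (η v).2 := by simp [hu, rot]
  have u2 : u.2 = v.2 - (η v).1 := by simp [hu, rot]; ring
  have d1 : ℓ * (w.1 - v.1) = - cr w v * (η v).2 := by
    rw [u1] at k1; linear_combination k1 + v.1 * k6
  have d2 : ℓ * (w.2 - v.2) = cr w v * (η v).1 := by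
    rw [u2] at k2; linear_combination k2 + v.2 * k6
  -- primitivity of the normal forces `ℓ ∣ β`
  obtain ⟨m, hm⟩ : ℓ ∣ cr w v :=
    ⟨p * (w.2 - v.2) - q * (w.1 - v.1), by linear_combination (-cr w v) * hpq - p * d2 + q * d1⟩
  have m0 : m ≤ 0 := by
    by_contra! hm0
    nlinarith
  have m1 : -1 ≤ m := by
    by_contra! hm0
    nlinarith
  have e1 : w.1 - v.1 = -m * (η v).2 := by
    apply mul_left_cancel₀ hℓ.ne'; rw [d1, hm]; ring
  have e2 : w.2 - v.2 = m * (η v).1 := by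
    apply mul_left_cancel₀ hℓ.ne'; rw [d2, hm]; ring
  obtain rfl | rfl : m = 0 ∨ m = -1 := by omega
  · left; ext <;> linarith
  · right; ext
    · rw [u1]; linarith
    · rw [u2]; linarith

/-- The boundary points form a single cycle. If `w ∈ B` were missed by a nonempty set `O` closed under
passing to the next point, then by `cone` no step inside `O` could cross the ray through `w`. The
sign of `cr w` would then be constant along the orbits in `O`, and the cotangent
`dt w v / cr w v` of the angle from `w` would decrease strictly along them, which is impossible
on a cycle. -/
theorem eq_of_closed (h : BoundaryData ℓ B η) {O : Finset (ℤ × ℤ)} (hO : O ⊆ B)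
    (hne : O.Nonempty) (hc : ∀ v ∈ O, v + rot (η v) ∈ O) : O = B := by
  refine Finset.Subset.antisymm hO fun w hw => ?_
  by_contra hwO
  have key : ∀ v ∈ O, 0 < cr w v ∨ cr w (v + rot (η v)) < 0 := by
    intro v hv
    by_contra! hcon
    rcases h.cone (hO hv) hw hcon.1 hcon.2 with e | e
    · exact hwO (e ▸ hv)
    · exact hwO (e ▸ hc v hv)
  have hle : ∀ v ∈ O, (cr w (v + rot (η v))).sign ≤ (cr w v).sign := by
    intro v hv
    rcases key v hv with h1 | h1
    · rw [Int.sign_eq_one_of_pos h1]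
      rcases lt_trichotomy (cr w (v + rot (η v))) 0 with h2 | h2 | h2
      · rw [Int.sign_eq_neg_one_of_neg h2]; norm_num
      · rw [h2]; simp
      · rw [Int.sign_eq_one_of_pos h2]
    · rw [Int.sign_eq_neg_one_of_neg h1]
      rcases lt_trichotomy (cr w v) 0 with h2 | h2 | h2
      · rw [Int.sign_eq_neg_one_of_neg h2]
      · rw [h2]; simp
      · rw [Int.sign_eq_one_of_pos h2]; norm_num
  have heq := (Finset.sum_eq_sum_iff_of_le hle).mp (h.sum_next hO hc fun v => (cr w v).sign)
  have hpos : ∀ v ∈ O, 0 < cr w v * cr w (v + rot (η v)) := by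
    intro v hv
    have e := heq v hv
    rcases key v hv with h1 | h1
    · rw [Int.sign_eq_one_of_pos h1, Int.sign_eq_one_iff_pos] at e
      exact mul_pos h1 e
    · rw [Int.sign_eq_neg_one_of_neg h1, eq_comm, Int.sign_eq_neg_one_iff_neg] at e
      exact mul_pos_of_neg_of_neg e h1
  have hw0 : 0 < w.1 ^ 2 + w.2 ^ 2 := by
    have o := h.on w hw
    have := h.pos
    by_contra! h0
    have e1 : w.1 = 0 := by nlinarith [sq_nonneg w.1, sq_nonneg w.2]
    have e2 : w.2 = 0 := by nlinarith [sq_nonneg w.1, sq_nonneg w.2]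
    simp [dt, e1, e2] at o
    omega
  have hlt : ∑ v ∈ O, (dt w (v + rot (η v)) : ℚ) / cr w (v + rot (η v)) <
      ∑ v ∈ O, (dt w v : ℚ) / cr w v := by
    refine Finset.sum_lt_sum_of_nonempty hne fun v hv => ?_
    have hp := hpos v hv
    have n1 : (cr w v : ℚ) ≠ 0 := by
      have := left_ne_zero_of_mul hp.ne'; exact_mod_cast this
    have n2 : (cr w (v + rot (η v)) : ℚ) ≠ 0 := by
      have := right_ne_zero_of_mul hp.ne'; exact_mod_cast this
    have hp' : (0 : ℚ) < cr w v * cr w (v + rot (η v)) := by exact_mod_cast hp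
    have id : dt w v * cr w (v + rot (η v)) - dt w (v + rot (η v)) * cr w v =
        (w.1 ^ 2 + w.2 ^ 2) * ℓ := by
      rw [← h.cr_next (hO hv)]; simp only [dt, cr]; ring
    have id' : (dt w v : ℚ) * cr w (v + rot (η v)) - dt w (v + rot (η v)) * cr w v =
        (w.1 ^ 2 + w.2 ^ 2) * ℓ := by exact_mod_cast id
    have hr : (0 : ℚ) < (w.1 ^ 2 + w.2 ^ 2) * ℓ := by
      have := mul_pos hw0 h.pos; exact_mod_cast this
    have : (dt w v : ℚ) / cr w v - dt w (v + rot (η v)) / cr w (v + rot (η v)) =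
        (w.1 ^ 2 + w.2 ^ 2) * ℓ / (cr w v * cr w (v + rot (η v))) := by
      rw [← id']; field_simp
    have := div_pos hr hp'
    linarith
  exact absurd (h.sum_next hO hc fun v => (dt w v : ℚ) / cr w v) hlt.ne

/-- The normals before and after `v` differ by a nonnegative integral multiple of `rot v`. At a
primitive `v` this holds because the difference vanishes on `v`, and the sign expresses convexity;
elsewhere the two normals agree. -/
lemma exists_bend (h : BoundaryData ℓ B η) {τ : ℤ × ℤ → ℤ × ℤ} (hτ : ∀ v ∈ B, τ v ∈ B)
    (hτ' : ∀ v ∈ B, τ v + rot (η (τ v)) = v) : ∃ c : ℤ × ℤ → ℤ,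
    ∀ v ∈ B, 0 ≤ c v ∧ η v = η (τ v) + c v • rot v := by
  have : ∀ v, ∃ c : ℤ, v ∈ B → 0 ≤ c ∧ η v = η (τ v) + c • rot v := by
    intro v
    by_cases hv : v ∈ B
    swap
    · exact ⟨0, fun h => absurd h hv⟩
    have g1 := h.on v hv
    have f1 : dt (η (τ v)) v = -ℓ := by
      have := h.on_next (hτ v hv); rwa [hτ' v hv] at this
    rcases h.vert v hv with hcop | huniq
    · have o : ((η v).1 - (η (τ v)).1) * v.1 + ((η v).2 - (η (τ v)).2) * v.2 = 0 := by
        simp only [dt] at f1 g1; linear_combination g1 - f1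
      obtain ⟨a, b, hab⟩ := hcop
      set A := (η v).1 - (η (τ v)).1 with hA
      set C := (η v).2 - (η (τ v)).2 with hC
      refine ⟨A * b - C * a, fun _ => ?_⟩
      have e : η v = η (τ v) + (A * b - C * a) • rot v := by
        ext
        · simp only [rot, Prod.fst_add, Prod.smul_fst, smul_eq_mul]
          linear_combination (-hA) - A * hab + a * o
        · simp only [rot, Prod.snd_add, Prod.smul_snd, smul_eq_mul]
          linear_combination (-hC) - C * hab + b * o
      refine ⟨?_, e⟩
      have g2 := h.ge (τ v) (hτ v hv) _ (h.next v hv)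
      rw [dt_add, f1, dt_rot] at g2
      have : cr (η (τ v)) (η v) = (A * b - C * a) * ℓ := by
        conv_lhs => rw [e]
        simp only [cr, rot, Prod.fst_add, Prod.smul_fst, smul_eq_mul, Prod.snd_add, Prod.smul_snd]
        simp only [dt] at f1
        linear_combination (-(A * b - C * a)) * f1
      have hℓ := h.pos
      by_contra! hneg
      nlinarith
    · refine ⟨0, fun _ => ⟨le_rfl, ?_⟩⟩
      rw [zero_smul, add_zero]
      exact huniq _ _ g1 f1 (h.ge v hv) (h.ge _ (hτ v hv))
  choose c hc using this
  exact ⟨c, hc⟩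

end BoundaryData

/-! ### The length of the cycle and its bends -/

/-- `dedS`, extended to all integral vectors so that it is invariant under `(x, y) ↦ (-x, -y)` and
vanishes for `y = 0`. -/
def dS (x y : ℤ) : ℚ :=
  if 0 < y then dedS x y.natAbs else if y < 0 then dedS (-x) y.natAbs else 0

/-- The ratio `y' / y`, replaced by `x' / x` when `y = 0`. If `v + v' = a • w`, then the ratios of `v`
and of `v'` to `w` add up to `a`. -/
def rho (x y x' y' : ℤ) : ℚ := if y = 0 then (x' : ℚ) / x else (y' : ℚ) / y

lemma dS_pos {x y x' y' : ℤ} (hy : 0 < y) (hy' : 0 < y') (h : x * y' - x' * y = 1) :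
    dS x y - dS x' y' = y / y' + y' / y + 1 / (y * y') - 3 := by
  lift y to ℕ using hy.le
  lift y' to ℕ using hy'.le
  have e := dedS_step (by exact_mod_cast hy) (by exact_mod_cast hy') h
  rw [dS, dS, if_pos hy, if_pos hy']
  simpa using e

lemma dS_neg_neg (x y : ℤ) : dS (-x) (-y) = dS x y := by
  unfold dS
  rcases lt_trichotomy y 0 with h | h | h
  · simp [h, h.le]
  · simp [h]
  · simp [h, h.le]

lemma dedS_one (x : ℤ) : dedS x 1 = 0 := by simp [dedS, dedM]

lemma dS_one (x : ℤ) : dS x 1 = 0 := by simp [dS, dedS_one]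
lemma dS_neg_one (x : ℤ) : dS x (-1) = 0 := by simp [dS, dedS_one]
lemma dS_zero (x : ℤ) : dS x 0 = 0 := by simp [dS]

/-- Reciprocity as a telescoping identity along a sequence of vectors with consecutive determinants
equal to one. The convention `x / 0 = 0` makes the formula hold also for `y = 0` or `y' = 0`. -/
theorem potential_step {x y x' y' : ℤ} (h : x * y' - x' * y = 1) :
    (dS x y - (x : ℚ) / y) - (dS x' y' - (x' : ℚ) / y') =
      rho x y x' y' + rho x' y' x y - 3 * (y.sign * y'.sign : ℤ) := by
  have hQ : (x : ℚ) * y' - x' * y = 1 := by exact_mod_cast h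
  by_cases hy : y = 0
  · subst hy
    rw [mul_zero, sub_zero] at h
    rcases Int.mul_eq_one_iff_eq_one_or_neg_one.mp h with ⟨rfl, rfl⟩ | ⟨rfl, rfl⟩ <;>
      simp [dS_one, dS_neg_one, dS_zero, rho]
  by_cases hy' : y' = 0
  · subst hy'
    have h' : x' * (-y) = 1 := by linarith
    rcases Int.mul_eq_one_iff_eq_one_or_neg_one.mp h' with ⟨rfl, h2⟩ | ⟨rfl, h2⟩
    · obtain rfl : y = -1 := by linarith
      simp [dS_neg_one, dS_zero, rho, div_neg]
    · obtain rfl : y = 1 := by linarith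
      simp [dS_one, dS_zero, rho, div_neg]
  have hyQ : (y : ℚ) ≠ 0 := by exact_mod_cast hy
  have hyQ' : (y' : ℚ) ≠ 0 := by exact_mod_cast hy'
  have hx : (x : ℚ) / y - x' / y' = 1 / (y * y') := by
    rw [← hQ]; field_simp
  simp only [rho, hy, hy', if_false]
  rcases lt_or_gt_of_ne hy with s | s <;> rcases lt_or_gt_of_ne hy' with s' | s'
  · have := dS_pos (x := -x) (x' := -x') (neg_pos.mpr s) (neg_pos.mpr s') (by linarith)
    rw [dS_neg_neg, dS_neg_neg] at this
    push_cast at this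
    rw [Int.sign_eq_neg_one_of_neg s, Int.sign_eq_neg_one_of_neg s']
    simp only [neg_div_neg_eq, neg_mul_neg] at this
    push_cast
    linarith
  · have := dS_pos (x := x') (x' := -x) s' (neg_pos.mpr s) (by linarith)
    rw [dS_neg_neg] at this
    push_cast at this
    rw [Int.sign_eq_neg_one_of_neg s, Int.sign_eq_one_of_pos s']
    simp only [div_neg, neg_div, mul_neg] at this
    rw [mul_comm (y' : ℚ) y] at this
    push_cast
    linarith
  · have := dS_pos (x := -x') (x' := x) (neg_pos.mpr s') s (by linarith)
    rw [dS_neg_neg] at this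
    push_cast at this
    rw [Int.sign_eq_one_of_pos s, Int.sign_eq_neg_one_of_neg s']
    simp only [div_neg, neg_div, neg_mul] at this
    rw [mul_comm (y' : ℚ) y] at this
    push_cast
    linarith
  · have := dS_pos s s' h
    rw [Int.sign_eq_one_of_pos s, Int.sign_eq_one_of_pos s']
    push_cast
    linarith

namespace BoundaryData

variable {ℓ : ℤ} {B : Finset (ℤ × ℤ)} {η : ℤ × ℤ → ℤ × ℤ}

lemma next_add_prev {τ : ℤ × ℤ → ℤ × ℤ}
    (hτ' : ∀ v ∈ B, τ v + rot (η (τ v)) = v) {c : ℤ × ℤ → ℤ}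
    (hc : ∀ v ∈ B, 0 ≤ c v ∧ η v = η (τ v) + c v • rot v) {v : ℤ × ℤ} (hv : v ∈ B) :
    (v + rot (η v)) + τ v = (2 - c v) • v := by
  have e1 := hτ' v hv
  have e2 := (hc v hv).2
  rw [Prod.ext_iff] at e1 e2
  simp only [rot, Prod.fst_add, Prod.snd_add, Prod.smul_fst, Prod.smul_snd, smul_eq_mul] at e1 e2
  ext
  · simp only [rot, Prod.fst_add, Prod.smul_fst, smul_eq_mul]
    linear_combination e1.1 + e2.2
  · simp only [rot, Prod.snd_add, Prod.smul_snd, smul_eq_mul]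
    linear_combination e1.2 - e2.1

/-- Every point of `B` is an integral combination of `v₀` and its successor: this passes from two
consecutive points to the next one by `next_add_prev`, and `B` is a single cycle. -/
lemma dvd_cr (h : BoundaryData ℓ B η) {τ : ℤ × ℤ → ℤ × ℤ}
    (hτ2 : ∀ v ∈ B, τ (v + rot (η v)) = v)
    (hτ' : ∀ v ∈ B, τ v + rot (η (τ v)) = v) {c : ℤ × ℤ → ℤ}
    (hc : ∀ v ∈ B, 0 ≤ c v ∧ η v = η (τ v) + c v • rot v) {v₀ : ℤ × ℤ} (hv₀ : v₀ ∈ B) :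
    ∀ v ∈ B, ℓ ∣ cr v₀ v := by
  classical
  let O := B.filter fun v => ℓ ∣ cr v₀ v ∧ ℓ ∣ cr v₀ (v + rot (η v))
  have hO : O = B := by
    refine h.eq_of_closed (Finset.filter_subset _ _) ⟨v₀, ?_⟩ fun v hv => ?_
    · refine Finset.mem_filter.mpr ⟨hv₀, ?_, ?_⟩
      · simp [cr, mul_comm]
      · rw [h.cr_next hv₀]
    · obtain ⟨hvB, d1, d2⟩ := Finset.mem_filter.mp hv
      refine Finset.mem_filter.mpr ⟨h.next v hvB, d2, ?_⟩
      have e := next_add_prev hτ' hc (h.next v hvB)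
      rw [hτ2 v hvB] at e
      set u := v + rot (η v)
      have : cr v₀ (u + rot (η u)) = (2 - c u) * cr v₀ u - cr v₀ v := by
        rw [eq_sub_of_add_eq e]
        simp only [cr, Prod.fst_sub, Prod.snd_sub, Prod.smul_fst, Prod.smul_snd, smul_eq_mul]
        ring
      rw [this]
      exact dvd_sub (d2.mul_left _) d1
  intro v hv
  rw [← hO] at hv
  exact (Finset.mem_filter.mp hv).2.1

/-- The bends of the cyclic sequence and its length add up to twelve. -/
theorem card_add_sum_bend (h : BoundaryData ℓ B η) {τ : ℤ × ℤ → ℤ × ℤ}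
    (hτ2 : ∀ v ∈ B, τ (v + rot (η v)) = v)
    (hτ' : ∀ v ∈ B, τ v + rot (η (τ v)) = v) {c : ℤ × ℤ → ℤ}
    (hc : ∀ v ∈ B, 0 ≤ c v ∧ η v = η (τ v) + c v • rot v) :
    (B.card : ℤ) + ∑ v ∈ B, c v = 12 := by
  classical
  have hℓ := h.pos
  obtain ⟨v₀, hv₀⟩ := h.nonempty
  set v₁ := v₀ + rot (η v₀) with hv₁
  have hv₁B : v₁ ∈ B := h.next v₀ hv₀
  have h01 : cr v₀ v₁ = ℓ := h.cr_next hv₀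
  have hY : ∀ v, ∃ y : ℤ, v ∈ B → cr v₀ v = ℓ * y := fun v => by
    by_cases hv : v ∈ B
    · obtain ⟨y, hy⟩ := h.dvd_cr hτ2 hτ' hc hv₀ v hv
      exact ⟨y, fun _ => hy⟩
    · exact ⟨0, fun h => absurd h hv⟩
  have hX : ∀ v, ∃ x : ℤ, v ∈ B → cr v v₁ = ℓ * x := fun v => by
    by_cases hv : v ∈ B
    · obtain ⟨y, hy⟩ := h.dvd_cr hτ2 hτ' hc hv₁B v hv
      exact ⟨-y, fun _ => by rw [cr_anti, hy]; ring⟩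
    · exact ⟨0, fun h => absurd h hv⟩
  -- `(X v, Y v)` are the coordinates of `v` in the basis `v₀, v₁`.
  choose Y hY using hY
  choose X hX using hX
  have hdet : ∀ v ∈ B, X v * Y (v + rot (η v)) - X (v + rot (η v)) * Y v = 1 := by
    intro v hv
    have e := h.cr_next hv
    have a1 := hX v hv
    have a2 := hY v hv
    have a3 := hX _ (h.next v hv)
    have a4 := hY _ (h.next v hv)
    set u := v + rot (η v)
    -- the Plücker relation
    have pl : cr v v₁ * cr v₀ u - cr u v₁ * cr v₀ v = cr v₀ v₁ * cr v u := by
      simp only [cr]; ring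
    rw [a1, a2, a3, a4, e, h01] at pl
    apply mul_left_cancel₀ (mul_pos hℓ hℓ).ne'
    linear_combination pl
  have hprevB : ∀ v ∈ B, τ v ∈ B := by
    have := h.exists_prev
    obtain ⟨τ', t1, t2, -⟩ := this
    intro v hv
    have e := hτ2 _ (t1 v hv)
    rw [t2 v hv] at e
    rw [e]; exact t1 v hv
  have hXrec : ∀ v ∈ B, X (v + rot (η v)) + X (τ v) = (2 - c v) * X v := by
    intro v hv
    apply mul_left_cancel₀ hℓ.ne'
    have e := next_add_prev hτ' hc hv
    have a1 := hX v hv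
    have a3 := hX _ (h.next v hv)
    have a4 := hX _ (hprevB v hv)
    rw [mul_add, ← a3, ← a4, mul_left_comm, ← a1]
    calc _ = cr ((v + rot (η v)) + τ v) v₁ := by simp [cr]; ring
      _ = _ := by rw [e]; simp [cr]; ring
  have hYrec : ∀ v ∈ B, Y (v + rot (η v)) + Y (τ v) = (2 - c v) * Y v := by
    intro v hv
    apply mul_left_cancel₀ hℓ.ne'
    have e := next_add_prev hτ' hc hv
    have a1 := hY v hv
    have a3 := hY _ (h.next v hv)
    have a4 := hY _ (hprevB v hv)
    rw [mul_add, ← a3, ← a4, mul_left_comm, ← a1]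
    calc _ = cr v₀ ((v + rot (η v)) + τ v) := by simp [cr]; ring
      _ = _ := by rw [e]; simp [cr]; ring
  have hrho : ∀ v ∈ B, rho (X v) (Y v) (X (v + rot (η v))) (Y (v + rot (η v))) +
      rho (X v) (Y v) (X (τ v)) (Y (τ v)) = 2 - c v := by
    intro v hv
    have eX : (X (v + rot (η v)) : ℚ) + X (τ v) = (2 - c v) * X v := by
      exact_mod_cast hXrec v hv
    have eY : (Y (v + rot (η v)) : ℚ) + Y (τ v) = (2 - c v) * Y v := by
      exact_mod_cast hYrec v hv
    unfold rho
    split_ifs with hy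
    · have hx : (X v : ℚ) ≠ 0 := by
        intro hx
        have hx : X v = 0 := by exact_mod_cast hx
        have := hdet v hv
        simp [hx, hy] at this
      rw [← add_div, eX]; field_simp
    · have hy' : (Y v : ℚ) ≠ 0 := by exact_mod_cast hy
      rw [← add_div, eY]; field_simp
  -- `Y` changes sign exactly twice along the cycle
  have hsign : ∑ v ∈ B, (1 - (Y v).sign * (Y (v + rot (η v))).sign) = 4 := by
    have e : ∀ v ∈ B, 1 - (Y v).sign * (Y (v + rot (η v))).sign =
        ((Y v).sign - (Y (v + rot (η v))).sign) +
          2 * ((if v = v₀ then 1 else 0) + (if v + rot (η v) = v₀ then 1 else 0)) := by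
      intro v hv
      have Y0 : Y v₀ = 0 := by
        have := hY v₀ hv₀
        have z : cr v₀ v₀ = 0 := by simp [cr, mul_comm]
        rw [z] at this
        rcases mul_eq_zero.mp this.symm with h0 | h0
        · omega
        · exact h0
      by_cases c1 : v = v₀
      · have hne : ¬ v₀ + rot (η v₀) = v₀ := by
          intro hh
          rw [hv₁, hh] at h01
          simp [cr, mul_comm] at h01
          omega
        have Y1 : Y v₁ = 1 := by
          have := hY v₁ hv₁B
          rw [h01] at this
          have : ℓ * Y v₁ = ℓ * 1 := by linarith
          exact mul_left_cancel₀ hℓ.ne' this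
        subst c1
        rw [if_pos rfl, if_neg hne, Y0, ← hv₁, Y1]; norm_num
      by_cases c2 : v + rot (η v) = v₀
      · have Ym : Y v = -1 := by
          have e1 := h.cr_next hv
          have := hY v hv
          rw [c2] at e1
          rw [cr_anti, e1] at this
          have : ℓ * Y v = ℓ * (-1) := by linarith
          exact mul_left_cancel₀ hℓ.ne' this
        rw [if_neg c1, if_pos c2, c2, Y0, Ym]; norm_num
      rw [if_neg c1, if_neg c2]
      have key : 0 < Y v ∨ Y (v + rot (η v)) < 0 := by
        by_contra! hcon
        have := h.cone hv hv₀ (by rw [hY v hv]; nlinarith [hcon.1])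
          (by rw [hY _ (h.next v hv)]; exact mul_nonneg hℓ.le hcon.2)
        rcases this with e | e
        · exact c1 e.symm
        · exact c2 e.symm
      rcases key with k | k
      · rw [Int.sign_eq_one_of_pos k]; ring
      · rw [Int.sign_eq_neg_one_of_neg k]; ring
    rw [Finset.sum_congr rfl e, Finset.sum_add_distrib, Finset.sum_sub_distrib,
      h.sum_next subset_rfl h.next (fun v => (Y v).sign), sub_self, zero_add, ← Finset.mul_sum,
      Finset.sum_add_distrib,
      h.sum_next subset_rfl h.next (fun v => if v = v₀ then (1 : ℤ) else 0)]
    simp [hv₀]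
  -- The potential `dS - x / y` telescopes around the cycle.
  have hpot := Finset.sum_congr (rfl : B = B) fun v hv => potential_step (hdet v hv)
  rw [Finset.sum_sub_distrib,
    h.sum_next subset_rfl h.next (fun v => dS (X v) (Y v) - (X v : ℚ) / Y v), sub_self,
    Finset.sum_sub_distrib, Finset.sum_add_distrib] at hpot
  have hre : ∑ v ∈ B, rho (X (v + rot (η v))) (Y (v + rot (η v))) (X v) (Y v) =
      ∑ v ∈ B, rho (X v) (Y v) (X (τ v)) (Y (τ v)) := by
    rw [← h.sum_next subset_rfl h.next (fun v => rho (X v) (Y v) (X (τ v)) (Y (τ v)))]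
    exact Finset.sum_congr rfl fun v hv => by rw [hτ2 v hv]
  rw [hre, ← Finset.sum_add_distrib, Finset.sum_congr rfl hrho, ← Finset.mul_sum,
    ← Int.cast_sum] at hpot
  rw [Finset.sum_sub_distrib] at hsign
  simp only [Finset.sum_sub_distrib, Finset.sum_const, nsmul_eq_mul, mul_one] at hsign hpot
  have hpot' : (0 : ℤ) = B.card * 2 - ∑ v ∈ B, c v -
      3 * ∑ v ∈ B, (Y v).sign * (Y (v + rot (η v))).sign := by
    exact_mod_cast hpot
  linarith

end BoundaryData

/-! ### Counting dual points -/

namespace BoundaryData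

variable {ℓ : ℤ} {B : Finset (ℤ × ℤ)} {η : ℤ × ℤ → ℤ × ℤ}

lemma eq_zero_of_dt_rot (x w : ℤ × ℤ) (h1 : dt x w = 0) (h2 : dt (rot x) w = 0) (hx : x ≠ 0) :
    w = 0 := by
  simp only [dt, rot] at h1 h2
  have hx0 : x.1 ^ 2 + x.2 ^ 2 ≠ 0 := by
    intro h0
    apply hx
    have e1 : x.1 = 0 := by nlinarith [sq_nonneg x.1, sq_nonneg x.2]
    have e2 : x.2 = 0 := by nlinarith [sq_nonneg x.1, sq_nonneg x.2]
    ext <;> simpa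
  ext
  · apply mul_left_cancel₀ hx0
    simp only [Prod.fst_zero]
    linear_combination x.1 * h1 + x.2 * h2
  · apply mul_left_cancel₀ hx0
    simp only [Prod.snd_zero]
    linear_combination x.2 * h1 - x.1 * h2

/-- The integral functionals with minimum `-ℓ` on `B` are counted by the bends. Each of them belongs to
the clockwise-most point `v` at which the minimum is attained; there it is
`η (τ v) + j • rot v` with `0 < j ≤ c v`. -/
theorem ncard_dual (h : BoundaryData ℓ B η) {τ : ℤ × ℤ → ℤ × ℤ} (hτ : ∀ v ∈ B, τ v ∈ B)
    (hτ' : ∀ v ∈ B, τ v + rot (η (τ v)) = v) {c : ℤ × ℤ → ℤ}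
    (hc : ∀ v ∈ B, 0 ≤ c v ∧ η v = η (τ v) + c v • rot v) :
    ({x : ℤ × ℤ | (∀ w ∈ B, -ℓ ≤ dt x w) ∧ ∃ w ∈ B, dt x w = -ℓ}.ncard : ℤ) =
      ∑ v ∈ B, c v := by
  classical
  have hℓ := h.pos
  have f1 : ∀ v ∈ B, dt (η (τ v)) v = -ℓ := fun v hv => by
    have := h.on_next (hτ v hv); rwa [hτ' v hv] at this
  have dadd : ∀ (f g : ℤ × ℤ) (j : ℤ) (w : ℤ × ℤ),
      dt (f + j • g) w = dt f w + j * dt g w := fun f g j w => by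
    simp only [dt, Prod.fst_add, Prod.snd_add, Prod.smul_fst, Prod.smul_snd, smul_eq_mul]; ring
  have drot : ∀ v : ℤ × ℤ, dt (rot v) v = 0 := fun v => by simp only [dt, rot]; ring
  have hv0 : ∀ v ∈ B, rot v ≠ 0 := fun v hv h0 => by
    have := h.on v hv
    simp only [rot, Prod.mk_eq_zero, neg_eq_zero] at h0
    simp [dt, h0.1, h0.2] at this
    omega
  have tprev : ∀ v ∈ B, ∀ x, dt x (τ v) = dt x v - cr x (η (τ v)) := fun v hv x => by
    have := congrArg (dt x) (hτ' v hv)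
    rw [dt_add, dt_rot] at this; linarith
  have crj : ∀ v ∈ B, ∀ j : ℤ, cr (η (τ v) + j • rot v) (η (τ v)) = - j * ℓ := fun v hv j => by
    have := f1 v hv
    simp only [dt, cr, rot, Prod.fst_add, Prod.snd_add, Prod.smul_fst, Prod.smul_snd,
      smul_eq_mul] at this ⊢
    linear_combination j * this
  -- the dual points that belong to `v`
  let D : ℤ × ℤ → Finset (ℤ × ℤ) := fun v =>
    (Finset.Ioc 0 (c v)).image fun j => η (τ v) + j • rot v
  have hD : {x : ℤ × ℤ | (∀ w ∈ B, -ℓ ≤ dt x w) ∧ ∃ w ∈ B, dt x w = -ℓ} =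
      (B.biUnion D : Finset (ℤ × ℤ)) := by
    ext x
    simp only [Set.mem_ofPred_eq, Finset.coe_biUnion, Set.mem_iUnion, Finset.mem_coe, D,
      Finset.mem_image, Finset.mem_Ioc, exists_prop]
    constructor
    · rintro ⟨hx, w₀, hw₀, hxw₀⟩
      obtain ⟨v, hv, hmin⟩ := (B.filter fun w => dt x w = -ℓ).exists_min_image
        (fun w => dt (rot x) w) ⟨w₀, Finset.mem_filter.mpr ⟨hw₀, hxw₀⟩⟩
      obtain ⟨hvB, hxv⟩ := Finset.mem_filter.mp hv
      have hlt : cr x (η (τ v)) < 0 := by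
        have k := hx _ (hτ v hvB)
        rw [tprev v hvB, hxv] at k
        rcases (show cr x (η (τ v)) ≤ 0 by linarith).lt_or_eq with k | k
        · exact k
        exfalso
        have m := hmin (τ v) (Finset.mem_filter.mpr
          ⟨hτ v hvB, by rw [tprev v hvB, hxv, k]; ring⟩)
        rw [tprev v hvB] at m
        have e := eq_of_cr_eq_zero hℓ.ne' hxv (f1 v hvB) k
        rw [← e] at m
        have : cr (rot x) x = x.1 ^ 2 + x.2 ^ 2 := by simp only [cr, rot]; ring
        rw [this] at m
        have e1 : x.1 = 0 := by nlinarith [sq_nonneg x.1, sq_nonneg x.2]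
        have e2 : x.2 = 0 := by nlinarith [sq_nonneg x.1, sq_nonneg x.2]
        simp [dt, e1, e2] at hxv
        omega
      refine ⟨v, hvB, ?_⟩
      rcases h.vert v hvB with hcop | huniq
      · obtain ⟨a, b, hab⟩ := hcop
        have f1v := f1 v hvB
        set f := η (τ v) with hf
        have o : (x.1 - f.1) * v.1 + (x.2 - f.2) * v.2 = 0 := by
          simp only [dt] at hxv f1v; linear_combination hxv - f1v
        set t := (x.1 - f.1) * b - (x.2 - f.2) * a with ht
        have e : f + t • rot v = x := by
          ext
          · simp only [rot, Prod.fst_add, Prod.smul_fst, smul_eq_mul]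
            linear_combination v.2 * ht + (x.1 - f.1) * hab - a * o
          · simp only [rot, Prod.snd_add, Prod.smul_snd, smul_eq_mul]
            linear_combination - v.1 * ht + (x.2 - f.2) * hab - b * o
        refine ⟨t, ⟨?_, ?_⟩, e⟩
        · rw [← e, crj v hvB] at hlt
          by_contra! hcon
          nlinarith
        · have k := hx _ (h.next v hvB)
          rw [dt_add, hxv, dt_rot] at k
          have : cr x (η v) = (c v - t) * ℓ := by
            rw [(hc v hvB).2, ← e]
            simp only [dt, cr, rot, Prod.fst_add, Prod.snd_add, Prod.smul_fst, Prod.smul_snd,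
              smul_eq_mul] at f1v ⊢
            linear_combination (t - c v) * f1v
          rw [this] at k
          by_contra! hcon
          nlinarith
      · exfalso
        have e := huniq x (η (τ v)) hxv (f1 v hvB) hx (h.ge _ (hτ v hvB))
        rw [e] at hlt
        simp [cr, mul_comm] at hlt
    · rintro ⟨v, hv, j, ⟨j0, j1⟩, rfl⟩
      refine ⟨fun w hw => ?_, v, hv, by rw [dadd, drot, f1 v hv]; ring⟩
      have a1 := h.ge v hv w hw
      have a2 := h.ge _ (hτ v hv) w hw
      rw [(hc v hv).2, dadd] at a1
      rw [dadd]
      rcases le_total 0 (dt (rot v) w) with s | s <;> nlinarith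
  -- For `x ∈ D v`, the point `v` is the first one along the face on which `x` is minimal.
  have hdisj : (B : Set (ℤ × ℤ)).PairwiseDisjoint D := by
    have key : ∀ v ∈ B, ∀ v' ∈ B, ∀ x ∈ D v, x ∈ D v' → dt (rot x) v' ≤ dt (rot x) v := by
      intro v hv v' hv' x hx hx'
      simp only [D, Finset.mem_image, Finset.mem_Ioc] at hx hx'
      obtain ⟨j, ⟨j0, -⟩, rfl⟩ := hx
      obtain ⟨j', ⟨j0', -⟩, hj'⟩ := hx'
      set x := η (τ v) + j • rot v with hx
      have xv : dt x v = -ℓ := by rw [hx, dadd, drot, f1 v hv]; ring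
      have xv' : dt x v' = -ℓ := by rw [← hj', dadd, drot, f1 v' hv']; ring
      have neg : cr x (η (τ v')) < 0 := by rw [← hj', crj v' hv']; nlinarith
      have ge := h.ge _ (hτ v' hv') v hv
      have eq := f1 v' hv'
      set f := η (τ v')
      have id : (x.1 ^ 2 + x.2 ^ 2) * (dt f v - dt f v') =
          -cr x f * (dt (rot x) v - dt (rot x) v') := by
        simp only [dt, cr, rot] at xv xv' ⊢
        linear_combination (f.1 * x.1 + f.2 * x.2) * (xv - xv')
      by_contra! hcon
      have p1 : 0 ≤ (x.1 ^ 2 + x.2 ^ 2) * (dt f v - dt f v') :=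
        mul_nonneg (by positivity) (by linarith)
      have p2 : 0 < -cr x f * (dt (rot x) v' - dt (rot x) v) :=
        mul_pos (by linarith) (by linarith)
      linarith
    intro v hv v' hv' hne
    simp only [Function.onFun]
    rw [Finset.disjoint_left]
    intro x hx hx'
    apply hne
    have k1 := key v hv v' hv' x hx hx'
    have k2 := key v' hv' v hv x hx' hx
    simp only [D, Finset.mem_image, Finset.mem_Ioc] at hx hx'
    obtain ⟨j, ⟨j0, -⟩, rfl⟩ := hx
    obtain ⟨j', ⟨j0', -⟩, hj'⟩ := hx'
    set x := η (τ v) + j • rot v with hx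
    have xv : dt x v = -ℓ := by rw [hx, dadd, drot, f1 v hv]; ring
    have xv' : dt x v' = -ℓ := by rw [← hj', dadd, drot, f1 v' hv']; ring
    have dsub : ∀ f : ℤ × ℤ, dt f (v - v') = dt f v - dt f v' := fun f => by
      simp only [dt, Prod.fst_sub, Prod.snd_sub]; ring
    apply sub_eq_zero.mp
    refine eq_zero_of_dt_rot x _ (by rw [dsub]; linarith) (by rw [dsub]; linarith) ?_
    intro h0
    simp [h0, dt] at xv
    omega
  rw [hD, Set.ncard_coe_finset, Finset.card_biUnion hdisj]
  push_cast
  refine Finset.sum_congr rfl fun v hv => ?_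
  rw [Finset.card_image_of_injective, Int.card_Ioc, sub_zero, Int.toNat_of_nonneg (hc v hv).1]
  intro i j hij
  have := add_left_cancel hij
  exact smul_left_injective ℤ (hv0 v hv) this

theorem twelve (h : BoundaryData ℓ B η) :
    B.card +
      {x : ℤ × ℤ | (∀ w ∈ B, -ℓ ≤ dt x w) ∧ ∃ w ∈ B, dt x w = -ℓ}.ncard = 12 := by
  obtain ⟨τ, t1, t2, t3⟩ := h.exists_prev
  obtain ⟨c, hc⟩ := h.exists_bend t1 t2
  have e1 := h.card_add_sum_bend t3 t2 hc
  have e2 := h.ncard_dual t1 t2 hc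
  rw [← e2] at e1
  exact_mod_cast e1

end BoundaryData

/-! ### Convex geometry of ℓ-reflexive polygons -/

/-- The inclusion of `ℤ²` into the plane. -/
def toV (p : ℤ × ℤ) : V := ((p.1 : ℝ), (p.2 : ℝ))

lemma toV_injective : Function.Injective toV := by
  intro p q h
  simp only [toV, Prod.mk.injEq, Int.cast_inj] at h
  exact Prod.ext h.1 h.2

lemma mem_latticePts {x : V} : x ∈ latticePts ↔ ∃ p, x = toV p := Iff.rfl

lemma dotV_toV (p q : ℤ × ℤ) : dotV (toV p) (toV q) = dt p q := by
  simp [dotV, toV, dt]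

lemma dotV_combo (f x y : V) (a b : ℝ) :
    dotV f (a • x + b • y) = a * dotV f x + b * dotV f y := by
  simp only [dotV, Prod.fst_add, Prod.snd_add, Prod.smul_fst, Prod.smul_snd, smul_eq_mul]; ring

lemma dotV_smul (f x : V) (a : ℝ) : dotV f (a • x) = a * dotV f x := by
  simp only [dotV, Prod.smul_fst, Prod.smul_snd, smul_eq_mul]; ring

lemma smul_dotV (f x : V) (a : ℝ) : dotV (a • f) x = a * dotV f x := by
  simp only [dotV, Prod.smul_fst, Prod.smul_snd, smul_eq_mul]; ring

lemma convex_dotV_ge (f : V) (c : ℝ) : Convex ℝ {y : V | c ≤ dotV f y} := by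
  intro x hx y hy a b ha hb hab
  simp only [Set.mem_ofPred_eq] at *
  rw [dotV_combo]
  calc c = a * c + b * c := by rw [← add_mul, hab, one_mul]
    _ ≤ _ := by gcongr

/-- Supporting functional at a point outside the interior, normalised to be `-1` there. -/
lemma exists_support {Q : Set V} (hQ : Convex ℝ Q) (h0 : (0 : V) ∈ interior Q) {p : V}
    (hp : p ∉ interior Q) : ∃ φ : V, dotV φ p = -1 ∧ ∀ y ∈ Q, -1 ≤ dotV φ y := by
  obtain ⟨f, hf⟩ := geometric_hahn_banach_open_point hQ.interior isOpen_interior hp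
  have hfp : 0 < f p := by simpa using hf 0 h0
  have hle : ∀ y ∈ Q, f y ≤ f p := by
    have hcl : Q ⊆ closure (interior Q) := by
      rw [hQ.closure_interior_eq_closure_of_nonempty_interior ⟨0, h0⟩]
      exact subset_closure
    intro y hy
    have : closure (interior Q) ⊆ {y | f y ≤ f p} :=
      closure_minimal (fun y hy => (hf y hy).le) (isClosed_le f.continuous continuous_const)
    exact this (hcl hy)
  have hrep : ∀ y : V, f y = y.1 * f (1, 0) + y.2 * f (0, 1) := by
    intro y
    have : y = y.1 • ((1, 0) : V) + y.2 • ((0, 1) : V) := by ext <;> simp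
    conv_lhs => rw [this, map_add, map_smul, map_smul]
    rfl
  have hd : ∀ y, dotV (-f (1, 0) / f p, -f (0, 1) / f p) y = - (f y / f p) := by
    intro y
    rw [hrep y]
    simp only [dotV]
    ring
  refine ⟨(-f (1, 0) / f p, -f (0, 1) / f p), ?_, fun y hy => ?_⟩
  · rw [hd, div_self hfp.ne']
  · rw [hd]
    have := (div_le_one hfp).mpr (hle y hy)
    linarith

/-- A functional attaining a negative minimum on `S` at `p` drops below it at `(1 + ε) • p`, so these
points are not in `S`. -/
lemma notMem_interior {S : Set V} {f p : V} {c : ℝ} (hc : 0 < c) (hp : dotV f p = -c)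
    (hS : ∀ y ∈ S, -c ≤ dotV f y) : p ∉ interior S := by
  intro hint
  have ht : Filter.Tendsto (fun t : ℝ => (1 + t) • p) (nhds 0) (nhds p) := by
    have : Continuous fun t : ℝ => (1 + t) • p := by fun_prop
    simpa using this.tendsto 0
  have ev := ht.eventually (isOpen_interior.mem_nhds hint)
  obtain ⟨ε, hε, hb⟩ := Metric.eventually_nhds_iff.mp ev
  have h1 : (1 + ε / 2) • p ∈ interior S := hb (by simp [abs_of_pos hε]; linarith)
  have h2 := hS _ (interior_subset h1)
  rw [dotV_smul, hp] at h2
  nlinarith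

lemma IsPrimitive.exists_coprime {v : V} (hv : IsPrimitive v) :
    ∃ p : ℤ × ℤ, v = toV p ∧ IsCoprime p.1 p.2 := by
  obtain ⟨⟨p, rfl⟩, hne, hseg⟩ := hv
  refine ⟨p, rfl, ?_⟩
  rw [Int.isCoprime_iff_gcd_eq_one]
  obtain ⟨a, ha⟩ : ((Int.gcd p.1 p.2 : ℕ) : ℤ) ∣ p.1 := Int.gcd_dvd_left ..
  obtain ⟨b, hb⟩ : ((Int.gcd p.1 p.2 : ℕ) : ℤ) ∣ p.2 := Int.gcd_dvd_right ..
  set g := Int.gcd p.1 p.2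
  have hg0 : g ≠ 0 := by
    intro h
    apply hne
    simp [ha, hb, h]
  have hg1 : (1 : ℝ) ≤ g := by exact_mod_cast Nat.one_le_iff_ne_zero.mpr hg0
  have hgp : (0 : ℝ) < g := by linarith
  have hmem : toV (a, b) ∈ segment ℝ (0 : V) ((p.1 : ℝ), (p.2 : ℝ)) ∩ latticePts := by
    refine ⟨⟨1 - (g : ℝ)⁻¹, (g : ℝ)⁻¹, ?_, by positivity, by ring, ?_⟩, _, rfl⟩
    · have := inv_le_one_of_one_le₀ hg1; linarith
    · have e1 : (p.1 : ℝ) = g * a := by exact_mod_cast ha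
      have e2 : (p.2 : ℝ) = g * b := by exact_mod_cast hb
      rw [e1, e2]
      ext <;> simp [toV] <;> field_simp
  rw [hseg] at hmem
  rcases hmem with h | h
  · exfalso
    apply hne
    simp only [toV, Prod.mk_eq_zero, Int.cast_eq_zero] at h
    simp [ha, hb, h.1, h.2]
  · have h' : toV (a, b) = toV p := h
    have h'' := toV_injective h'
    have k1 : p.1 = a := by rw [← h'']
    have k2 : p.2 = b := by rw [← h'']
    by_contra hcon
    have hg2 : (g : ℤ) - 1 ≠ 0 := by omega
    have z1 : ((g : ℤ) - 1) * a = 0 := by linear_combination k1 - ha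
    have z2 : ((g : ℤ) - 1) * b = 0 := by linear_combination k2 - hb
    have a0 := (mul_eq_zero.mp z1).resolve_left hg2
    have b0 := (mul_eq_zero.mp z2).resolve_left hg2
    apply hne
    simp [k1, k2, a0, b0]

lemma exists_dotV_neg {Q : Set V} (h0 : (0 : V) ∈ interior Q) {g : V} (hg : g ≠ 0) :
    ∃ y ∈ Q, dotV g y < 0 := by
  have ht : Filter.Tendsto (fun t : ℝ => (-t) • g) (nhds 0) (nhds 0) := by
    have : Continuous fun t : ℝ => (-t) • g := by fun_prop
    simpa using this.tendsto 0
  obtain ⟨ε, hε, hb⟩ := Metric.eventually_nhds_iff.mp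
    (ht.eventually (isOpen_interior.mem_nhds h0))
  refine ⟨_, interior_subset (hb (y := ε / 2) (by simp [abs_of_pos hε]; linarith)), ?_⟩
  have hpos : 0 < dotV g g := by
    simp only [dotV]
    by_contra! hcon
    apply hg
    ext
    · simp only [Prod.fst_zero]; nlinarith [mul_self_nonneg g.1, mul_self_nonneg g.2]
    · simp only [Prod.snd_zero]; nlinarith [mul_self_nonneg g.1, mul_self_nonneg g.2]
  rw [dotV_smul]
  nlinarith

namespace IsLReflexive

variable {ℓ : ℕ} {Q : Set V}

/-- A polygon is compact, has finitely many vertices, and is their convex hull. -/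
lemma exists_vertices (hQ : IsLReflexive ℓ Q) :
    ∃ E : Finset V, (E : Set V) = extremePoints ℝ Q ∧ convexHull ℝ (E : Set V) = Q ∧
      IsCompact Q := by
  obtain ⟨A, hA, -⟩ := hQ.polygon
  have hfin : (extremePoints ℝ Q).Finite :=
    A.finite_toSet.subset (by rw [hA]; exact extremePoints_convexHull_subset)
  have hcomp : IsCompact Q := by rw [hA]; exact A.finite_toSet.isCompact_convexHull ℝ
  have hconv : Convex ℝ Q := by rw [hA]; exact convex_convexHull ℝ _
  refine ⟨hfin.toFinset, by simp, ?_, hcomp⟩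
  rw [hfin.coe_toFinset, ← (hfin.isClosed_convexHull ℝ).closure_eq]
  exact closure_convexHull_extremePoints hcomp hconv

lemma ge_of_vertices {E : Finset V} (hE : convexHull ℝ (E : Set V) = Q) {f : V} {c : ℝ}
    (h : ∀ e ∈ E, c ≤ dotV f e) : ∀ y ∈ Q, c ≤ dotV f y := by
  rw [← hE]
  exact convexHull_min h (convex_dotV_ge f c)

lemma vertex_lattice (hQ : IsLReflexive ℓ Q) {e : V} (he : e ∈ extremePoints ℝ Q) :
    ∃ p : ℤ × ℤ, e = toV p ∧ IsCoprime p.1 p.2 :=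
  (hQ.vertices_primitive e he).exists_coprime

/-- At a boundary lattice point `p` there is a primitive normal `η` of the edge that leaves `p`
counterclockwise, and `p + rot η` is again on that edge. The edge is found by tilting a supporting
functional `φ` at `p` to `ψ = φ + t • w`, where `w` vanishes on `p` and is positive on the
counterclockwise side, by the smallest amount for which `ψ` becomes `-1` at a vertex on that
side. -/
lemma exists_next (hQ : IsLReflexive ℓ Q) (hℓ : 0 < ℓ) {p : ℤ × ℤ} (hp : toV p ∈ Q)
    (hpi : toV p ∉ interior Q) :
    ∃ η : ℤ × ℤ, IsCoprime η.1 η.2 ∧ dt η p = -ℓ ∧ (∀ y ∈ Q, -(ℓ : ℝ) ≤ dotV (toV η) y) ∧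
      toV (p + rot η) ∈ Q := by
  classical
  obtain ⟨E, hE, hEQ, -⟩ := hQ.exists_vertices
  have hconv : Convex ℝ Q := hEQ ▸ convex_convexHull ℝ _
  have hEsub : ∀ e ∈ E, e ∈ Q := fun e he => by rw [← hEQ]; exact subset_convexHull ℝ _ he
  have hℓR : (0 : ℝ) < ℓ := by exact_mod_cast hℓ
  obtain ⟨φ, hφp, hφ⟩ := exists_support hconv hQ.zero_mem_interior hpi
  let w : V := (-(p.2 : ℝ), (p.1 : ℝ))
  have hwp : dotV w (toV p) = 0 := by simp only [dotV, toV, w]; ring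
  have hw0 : w ≠ 0 := by
    intro h
    simp only [w, Prod.mk_eq_zero, neg_eq_zero] at h
    simp [toV, dotV, h.1, h.2] at hφp
  obtain ⟨e₀, he₀, hwe₀⟩ : ∃ e ∈ E, 0 < dotV w e := by
    by_contra! hcon
    obtain ⟨y, hy, hyn⟩ := exists_dotV_neg hQ.zero_mem_interior (neg_ne_zero.mpr hw0)
    have := ge_of_vertices (c := 0) (f := -w) hEQ (fun e he => by
      have := hcon e he
      simp only [dotV, Prod.fst_neg, Prod.snd_neg] at this ⊢; linarith) y hy
    linarith
  obtain ⟨e, he, hmax⟩ := (E.filter fun e => 0 < dotV w e).exists_max_image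
    (fun e => (-1 - dotV φ e) / dotV w e) ⟨e₀, Finset.mem_filter.mpr ⟨he₀, hwe₀⟩⟩
  obtain ⟨heE, hwe⟩ := Finset.mem_filter.mp he
  set t := (-1 - dotV φ e) / dotV w e with ht
  have htw : t * dotV w e = -1 - dotV φ e := div_mul_cancel₀ _ hwe.ne'
  have ht0 : t ≤ 0 := div_nonpos_of_nonpos_of_nonneg
    (by linarith [hφ e (hEsub e heE)]) hwe.le
  set ψ : V := φ + t • w with hψ
  have hψd : ∀ y, dotV ψ y = dotV φ y + t * dotV w y := fun y => by
    simp only [hψ, dotV, Prod.fst_add, Prod.snd_add, Prod.smul_fst, Prod.smul_snd, smul_eq_mul]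
    ring
  have hψge : ∀ y ∈ Q, -1 ≤ dotV ψ y := ge_of_vertices hEQ fun e' he' => by
    rw [hψd]
    rcases lt_or_ge 0 (dotV w e') with hpos | hneg
    · have := hmax e' (Finset.mem_filter.mpr ⟨he', hpos⟩)
      rw [div_le_iff₀ hpos] at this
      linarith
    · have := hφ e' (hEsub e' he')
      nlinarith [mul_nonneg_of_nonpos_of_nonpos ht0 hneg]
  have hψp : dotV ψ (toV p) = -1 := by rw [hψd, hφp, hwp]; ring
  have hψe : dotV ψ e = -1 := by rw [hψd, htw]; ring
  have hψ0 : ψ ≠ 0 := by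
    intro h
    rw [h] at hψp
    simp [dotV] at hψp
  have hpe : toV p ≠ e := by
    rintro rfl
    exact hwe.ne' hwp
  have mem_face : ∀ y ∈ Q, dotV ψ y = -1 → y ∈ {y ∈ Q | ∀ z ∈ Q, dotV ψ y ≤ dotV ψ z} :=
    fun y hy h => ⟨hy, fun z hz => by rw [h]; exact hψge z hz⟩
  obtain ⟨η', hη', hsub⟩ := hQ.edge_cond {y ∈ Q | ∀ z ∈ Q, dotV ψ y ≤ dotV ψ z}
    ⟨⟨ψ, hψ0, rfl⟩, _, mem_face _ hp hψp, _, mem_face _ (hEsub e heE) hψe, hpe⟩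
  obtain ⟨η, rfl, hcop⟩ := hη'.exists_coprime
  have hηp : dotV (toV η) (toV p) = -ℓ := hsub (mem_face _ hp hψp)
  have hηe : dotV (toV η) e = -ℓ := hsub (mem_face _ (hEsub e heE) hψe)
  obtain ⟨q, rfl, -⟩ := hQ.vertex_lattice (e := e) (by rw [← hE]; exact heE)
  -- Two functionals that agree on the independent points `p` and `q` coincide.
  have hψη : ∀ y, dotV (toV η) y = ℓ * dotV ψ y := by
    intro y
    apply mul_left_cancel₀ hwe.ne'
    simp only [dotV, toV, w] at hηp hηe hψp hψe ⊢
    linear_combination (y.1 * q.2 - y.2 * q.1) * (hηp - ℓ * hψp) +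
      (p.1 * y.2 - p.2 * y.1) * (hηe - ℓ * hψe)
  have hge : ∀ y ∈ Q, -(ℓ : ℝ) ≤ dotV (toV η) y := fun y hy => by
    rw [hψη]; nlinarith [hψge y hy]
  rw [dotV_toV] at hηp hηe
  have hηp' : dt η p = -(ℓ : ℤ) := by exact_mod_cast hηp
  have hηq' : dt η q = -(ℓ : ℤ) := by exact_mod_cast hηe
  refine ⟨η, hcop, hηp', hge, ?_⟩
  -- `q - p` is killed by the primitive functional `η`, so it is a multiple of `rot η`.
  obtain ⟨a, b, hab⟩ := hcop
  have hdw : 0 < cr p q := by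
    have : ((cr p q : ℤ) : ℝ) = dotV w (toV q) := by simp only [cr, dotV, w, toV]; push_cast; ring
    exact_mod_cast this ▸ hwe
  set k := (q.1 - p.1) * b - (q.2 - p.2) * a with hk
  simp only [dt] at hηp' hηq'
  have k1 : q.1 = p.1 + k * η.2 := by
    linear_combination (p.1 - q.1) * hab + a * (hηq' - hηp') - η.2 * hk
  have k2 : q.2 = p.2 - k * η.1 := by
    linear_combination (p.2 - q.2) * hab + b * (hηq' - hηp') + η.1 * hk
  have hkℓ : cr p q = k * ℓ := by
    simp only [cr]
    rw [k1, k2]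
    linear_combination -k * hηp'
  have hk1 : 1 ≤ k := by
    rw [hkℓ] at hdw
    have : (0 : ℤ) < ℓ := by exact_mod_cast hℓ
    by_contra! hcon
    nlinarith
  have hkR : (1 : ℝ) ≤ k := by exact_mod_cast hk1
  have hk0 : (k : ℝ) ≠ 0 := by linarith
  have hcomb : toV (p + rot η) = (1 - (k : ℝ)⁻¹) • toV p + (k : ℝ)⁻¹ • toV q := by
    have k1R : (q.1 : ℝ) = p.1 + k * η.2 := by exact_mod_cast k1
    have k2R : (q.2 : ℝ) = p.2 - k * η.1 := by exact_mod_cast k2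
    ext
    · simp only [toV, rot, Prod.fst_add, Prod.smul_fst, smul_eq_mul, k1R]
      push_cast
      field_simp
      ring
    · simp only [toV, rot, Prod.snd_add, Prod.smul_snd, smul_eq_mul, k2R]
      push_cast
      field_simp
      ring
  rw [hcomb]
  exact hconv hp (hEsub _ heE) (by have := inv_le_one_of_one_le₀ hkR; linarith)
    (by positivity) (by ring)

lemma finite_lattice {K : Set V} (hK : IsCompact K) : {p : ℤ × ℤ | toV p ∈ K}.Finite := by
  obtain ⟨R, hR⟩ := hK.isBounded.subset_closedBall (0 : V)
  refine (Set.finite_Icc ((-⌈R⌉, -⌈R⌉) : ℤ × ℤ) (⌈R⌉, ⌈R⌉)).subset fun p hp => ?_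
  have h := hR hp
  rw [mem_closedBall_zero_iff, Prod.norm_def, max_le_iff, Real.norm_eq_abs, Real.norm_eq_abs,
    abs_le, abs_le] at h
  simp only [toV] at h
  have hc := Int.le_ceil R
  refine ⟨⟨?_, ?_⟩, ?_, ?_⟩ <;> simp only <;> rify <;> linarith

lemma dualPolygon_eq {E : Finset V} (hℓ : 0 < ℓ) (hEQ : convexHull ℝ (E : Set V) = Q) :
    dualPolygon ℓ Q = {x | ∀ e ∈ E, -(ℓ : ℝ) ≤ dotV x e} := by
  have hℓR : (0 : ℝ) < ℓ := by exact_mod_cast hℓ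
  ext x
  simp only [dualPolygon, polarPolygon, Set.mem_image, Set.mem_ofPred_eq]
  constructor
  · rintro ⟨z, hz, rfl⟩ e he
    rw [smul_dotV]
    nlinarith [hz e (hEQ ▸ subset_convexHull ℝ _ he)]
  · intro h
    refine ⟨(ℓ : ℝ)⁻¹ • x, fun y hy => ?_, smul_inv_smul₀ hℓR.ne' x⟩
    have := ge_of_vertices hEQ h y hy
    rw [smul_dotV, inv_mul_eq_div, le_div_iff₀ hℓR]
    linarith

lemma mem_frontier_dual {E : Finset V} (hℓ : 0 < ℓ) (hEQ : convexHull ℝ (E : Set V) = Q) {x : V} :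
    x ∈ frontier (dualPolygon ℓ Q) ↔
      (∀ y ∈ Q, -(ℓ : ℝ) ≤ dotV x y) ∧ ∃ e ∈ E, dotV x e = -ℓ := by
  have hℓR : (0 : ℝ) < ℓ := by exact_mod_cast hℓ
  have hEsub : ∀ e ∈ E, e ∈ Q := fun e he => hEQ ▸ subset_convexHull ℝ _ he
  have hcont : ∀ e : V, Continuous fun x : V => dotV x e := fun e => by
    unfold dotV; fun_prop
  have hcomm : ∀ x y : V, dotV x y = dotV y x := fun x y => by simp only [dotV]; ring
  have hcl : IsClosed (dualPolygon ℓ Q) := by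
    rw [dualPolygon_eq hℓ hEQ]
    simp only [Set.ofPred_forall]
    exact isClosed_biInter fun e _ => isClosed_le continuous_const (hcont e)
  rw [hcl.frontier_eq]
  constructor
  · rintro ⟨hx, hxi⟩
    rw [dualPolygon_eq hℓ hEQ] at hx
    refine ⟨ge_of_vertices hEQ hx, ?_⟩
    by_contra! hcon
    apply hxi
    have hop : IsOpen {x : V | ∀ e ∈ E, -(ℓ : ℝ) < dotV x e} := by
      simp only [Set.ofPred_forall]
      exact isOpen_biInter_finset fun e _ => isOpen_lt continuous_const (hcont e)
    refine interior_maximal ?_ hop fun e he => lt_of_le_of_ne (hx e he) (hcon e he).symm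
    rw [dualPolygon_eq hℓ hEQ]
    exact fun z hz e he => (hz e he).le
  · rintro ⟨hx, e, he, hxe⟩
    refine ⟨by rw [dualPolygon_eq hℓ hEQ]; exact fun e he => hx e (hEsub e he), ?_⟩
    refine notMem_interior (f := e) hℓR (by rw [hcomm, hxe]) fun y hy => ?_
    rw [dualPolygon_eq hℓ hEQ] at hy
    rw [hcomm]
    exact hy e he

/-- A boundary lattice point that is not a vertex lies inside a segment in `Q`. Every supporting
functional at that point is constant on the segment, which determines it. -/
lemma eq_of_not_vertex {B : Finset (ℤ × ℤ)} (hℓ : 0 < ℓ)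
    {E : Finset V} (hEB : ∀ e ∈ E, ∃ q ∈ B, e = toV q)
    (hEQ : convexHull ℝ (E : Set V) = Q) {v : ℤ × ℤ} (hv : toV v ∈ Q)
    (hvE : toV v ∉ extremePoints ℝ Q) {f g : ℤ × ℤ} (hf : dt f v = -ℓ) (hg : dt g v = -ℓ)
    (hfB : ∀ w ∈ B, -(ℓ : ℤ) ≤ dt f w) (hgB : ∀ w ∈ B, -(ℓ : ℤ) ≤ dt g w) : f = g := by
  have hℓZ : (ℓ : ℤ) ≠ 0 := by exact_mod_cast hℓ.ne'
  have up : ∀ f : ℤ × ℤ, (∀ w ∈ B, -(ℓ : ℤ) ≤ dt f w) → ∀ y ∈ Q, -(ℓ : ℝ) ≤ dotV (toV f) y := by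
    intro f hf
    refine ge_of_vertices hEQ fun e he => ?_
    obtain ⟨q, hq, rfl⟩ := hEB e he
    rw [dotV_toV]
    exact_mod_cast hf q hq
  obtain ⟨x, hx, y, hy, ⟨a, b, ha, hb, hab, hxy⟩, hne⟩ :
      ∃ x ∈ Q, ∃ y ∈ Q, toV v ∈ openSegment ℝ x y ∧ x ≠ y := by
    by_contra! hcon
    apply hvE
    rw [mem_extremePoints]
    refine ⟨hv, fun x hx y hy h => ?_⟩
    have := hcon x hx y hy h
    subst this
    simp only [openSegment_same, Set.mem_singleton_iff] at h
    exact ⟨h.symm, h.symm⟩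
  have van : ∀ f : ℤ × ℤ, dt f v = -ℓ → (∀ w ∈ B, -(ℓ : ℤ) ≤ dt f w) →
      dotV (toV f) x = -ℓ ∧ dotV (toV f) y = -ℓ := by
    intro f hf hfB
    have h1 := up f hfB x hx
    have h2 := up f hfB y hy
    have h3 : a * dotV (toV f) x + b * dotV (toV f) y = -ℓ := by
      rw [← dotV_combo, hxy, dotV_toV, hf]; push_cast; rfl
    constructor <;> nlinarith
  obtain ⟨f1, f2⟩ := van f hf hfB
  obtain ⟨g1, g2⟩ := van g hg hgB
  apply eq_of_cr_eq_zero hℓZ hf hg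
  by_contra hcr
  have hcrR : (f.1 * g.2 - f.2 * g.1 : ℝ) ≠ 0 := by exact_mod_cast hcr
  apply hne
  simp only [dotV, toV] at f1 f2 g1 g2
  ext
  · apply mul_left_cancel₀ hcrR
    linear_combination g.2 * (f1 - f2) - f.2 * (g1 - g2)
  · apply mul_left_cancel₀ hcrR
    linear_combination -g.1 * (f1 - f2) + f.1 * (g1 - g2)

/-- The boundary lattice points of an `ℓ`-reflexive polygon form a `BoundaryData`, in terms of which
the boundary lattice points of the dual polygon are described. -/
theorem exists_boundaryData (hQ : IsLReflexive ℓ Q) (hℓ : 0 < ℓ) :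
    ∃ (B : Finset (ℤ × ℤ)) (η : ℤ × ℤ → ℤ × ℤ), BoundaryData ℓ B η ∧
      (∀ p, p ∈ B ↔ toV p ∈ frontier Q) ∧
      ∀ x, toV x ∈ frontier (dualPolygon ℓ Q) ↔
        (∀ w ∈ B, -(ℓ : ℤ) ≤ dt x w) ∧ ∃ w ∈ B, dt x w = -(ℓ : ℤ) := by
  obtain ⟨E, hE, hEQ, hcomp⟩ := hQ.exists_vertices
  have hℓR : (0 : ℝ) < ℓ := by exact_mod_cast hℓ
  have hfr : frontier Q = Q \ interior Q := hcomp.isClosed.frontier_eq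
  have hsub : frontier Q ⊆ Q := by rw [hfr]; exact Set.sdiff_subset
  have hfin : {p : ℤ × ℤ | toV p ∈ frontier Q}.Finite :=
    (finite_lattice hcomp).subset fun p hp => hsub hp
  obtain ⟨B, hB⟩ : ∃ B : Finset (ℤ × ℤ), ∀ p, p ∈ B ↔ toV p ∈ frontier Q :=
    ⟨hfin.toFinset, fun p => by simp⟩
  have hEB : ∀ e ∈ E, ∃ q ∈ B, e = toV q := by
    intro e he
    have he' : e ∈ extremePoints ℝ Q := by rw [← hE]; exact he
    obtain ⟨q, rfl, -⟩ := hQ.vertex_lattice he'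
    refine ⟨q, (hB q).mpr ?_, rfl⟩
    rw [hfr]
    exact ⟨he'.1, fun hi => Set.disjoint_left.mp (disjoint_interior_extremePoints Q) hi he'⟩
  have hBiff : ∀ f : ℤ × ℤ, (∀ w ∈ B, -(ℓ : ℤ) ≤ dt f w) ↔
      ∀ y ∈ Q, -(ℓ : ℝ) ≤ dotV (toV f) y := by
    refine fun f => ⟨fun hf => ge_of_vertices hEQ fun e he => ?_, fun hf w hw => ?_⟩
    · obtain ⟨q, hq, rfl⟩ := hEB e he
      rw [dotV_toV]
      exact_mod_cast hf q hq
    · have := hf _ (hsub ((hB w).mp hw))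
      rw [dotV_toV] at this
      exact_mod_cast this
  have hnext : ∀ v : ℤ × ℤ, ∃ η : ℤ × ℤ, v ∈ B → IsCoprime η.1 η.2 ∧ dt η v = -ℓ ∧
      (∀ y ∈ Q, -(ℓ : ℝ) ≤ dotV (toV η) y) ∧ toV (v + rot η) ∈ Q := by
    intro v
    by_cases hv : v ∈ B
    · have h := (hB v).mp hv
      rw [hfr] at h
      obtain ⟨η, hη⟩ := hQ.exists_next hℓ h.1 h.2
      exact ⟨η, fun _ => hη⟩
    · exact ⟨0, fun h => absurd h hv⟩
  choose η hη using hnext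
  refine ⟨B, η, ⟨by exact_mod_cast hℓ, ?_, fun v hv => (hη v hv).2.1,
    fun v hv => (hBiff _).mpr (hη v hv).2.2.1, fun v hv => (hη v hv).1, ?_, ?_⟩, hB, ?_⟩
  · obtain ⟨e, he⟩ : (E : Set V).Nonempty := by
      rw [← convexHull_nonempty_iff (𝕜 := ℝ), hEQ]
      exact ⟨0, interior_subset hQ.zero_mem_interior⟩
    obtain ⟨q, hq, -⟩ := hEB e he
    exact ⟨q, hq⟩
  · intro v hv
    obtain ⟨-, h1, h2, h3⟩ := hη v hv
    rw [hB, hfr]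
    refine ⟨h3, notMem_interior (f := toV (η v)) hℓR ?_ h2⟩
    rw [dotV_toV, dt_add, dt_rot, h1]
    simp [cr, mul_comm]
  · intro v hv
    by_cases hvE : toV v ∈ extremePoints ℝ Q
    · obtain ⟨q, hq, hcop⟩ := hQ.vertex_lattice hvE
      rw [toV_injective hq]
      exact Or.inl hcop
    · exact Or.inr fun f g hf hg hfB hgB =>
        eq_of_not_vertex hℓ hEB hEQ (hsub ((hB v).mp hv)) hvE hf hg hfB hgB
  · intro x
    rw [mem_frontier_dual hℓ hEQ, hBiff]
    refine and_congr_right fun hx => ⟨?_, ?_⟩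
    · rintro ⟨e, he, hxe⟩
      obtain ⟨q, hq, rfl⟩ := hEB e he
      rw [dotV_toV] at hxe
      exact ⟨q, hq, by exact_mod_cast hxe⟩
    · rintro ⟨w, hw, hxw⟩
      -- A functional is minimal on `Q` at some vertex.
      by_contra! hcon
      obtain ⟨e, he, hmin⟩ := E.exists_min_image (dotV (toV x)) (by
        rw [← Finset.coe_nonempty, ← convexHull_nonempty_iff (𝕜 := ℝ), hEQ]
        exact ⟨0, interior_subset hQ.zero_mem_interior⟩)
      have h1 := ge_of_vertices hEQ hmin _ (hsub ((hB w).mp hw))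
      rw [dotV_toV, hxw] at h1
      have h2 := hx e (hEQ ▸ subset_convexHull ℝ _ he)
      push_cast at h1
      exact hcon e he (le_antisymm h1 h2)

end IsLReflexive

lemma ncard_inter_lattice (S : Set V) :
    (S ∩ latticePts).ncard = {p : ℤ × ℤ | toV p ∈ S}.ncard := by
  rw [← Set.ncard_image_of_injective _ toV_injective]
  congr 1
  ext x
  constructor
  · rintro ⟨hx, p, rfl⟩
    exact ⟨p, hx, rfl⟩
  · rintro ⟨p, hp, rfl⟩
    exact ⟨hp, p, rfl⟩

/-- **Twelve-Point Theorem for ℓ-reflexive pairs.** -/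
theorem twelve_point_theorem_ell_reflexive (ℓ : ℕ) (hℓ : 0 < ℓ) (Q : Set V)
    (hQ : IsLReflexive ℓ Q) :
    (frontier Q ∩ latticePts).ncard + (frontier (dualPolygon ℓ Q) ∩ latticePts).ncard = 12 := by
  obtain ⟨B, η, h, hB, hD⟩ := hQ.exists_boundaryData hℓ
  rw [ncard_inter_lattice, ncard_inter_lattice]
  simp only [← hB, hD]
  rw [← h.twelve]
  congr 1
  exact Set.ncard_coe_finset B
end
end

section
/- Twelve-Point Theorem for reflexive polygons: Let Q ⊆ ℝ² be a reflexive polygon with respect to ℤ². Then #(frontier Q ∩ ℤ²) + #(frontier Q° ∩ ℤ²) = 12. -/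
/-!
The lattice points `S` of a reflexive polygon `Q` and the lattice points `T` of its polar determine
each other: `S` is exactly the set of integer points pairing to at least `-1` with all of `T`, and
conversely. Both sets are finite and contain `0`, every other lattice point of `Q` or `Q°` lies on
the frontier, so the theorem becomes `S.card + T.card = 14` for every such dual pair
(`DualPair.card_add_card`). The only geometric input is that the extreme points of `Q` and of `Q°`
are lattice points; for `Q°` an extreme point is the primitive normal of an edge of `Q`
(`extremePoints_polarPolygon_subset`). Separation and the Krein-Milman theorem do the rest.

The count for a dual pair distinguishes two cases.

* If `S` contains some `u ≠ 0` together with `-u`, choose coordinates with `u = (0, 1)`. Then `T`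
  lives in the rows of height `-1`, `0`, `1`. If the rows of height `1` and `-1` start at `l₁` and
  `l₂`, and `ε ∈ {0, 1}` tells whether `(-1, 0) ∈ T`, then exactly `4 + l₁ + l₂ - ε` points of `S`
  have positive abscissa (`DualPair.card_pos_columns`), and symmetrically on the other side. Adding
  the three points of `S` with abscissa zero and the lengths of the rows of `T`, every parameter
  cancels (`DualPair.card_add_card_of_vertical`).
* Otherwise no two distinct points of `S` are congruent modulo 2: their midpoint would be a point of
  an edge of the hull of `S` with lattice neighbours on both sides along the edge, and that forces
  an antipodal pair (`DualPair.antipodal_of_midpoint`). Hence `S` has at most four points, and up to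
  coordinates it is `{0, (1, 0), (0, 1), (-1, -1)}`, whose dual has ten points
  (`DualPair.card_add_card_of_card_le`).
-/


open Set

noncomputable section

/-! ### Dual pairs of finite sets of lattice points -/

/-- Two finite sets of integer vectors, each being the set of all integer vectors whose pairing
with every element of the other is at least `-1`. Both sets contain `0`. -/
structure DualPair (S T : Finset (ℤ × ℤ)) : Prop where
  mem_left : ∀ p : ℤ × ℤ, p ∈ S ↔ ∀ q ∈ T, -1 ≤ p.1 * q.1 + p.2 * q.2
  mem_right : ∀ q : ℤ × ℤ, q ∈ T ↔ ∀ p ∈ S, -1 ≤ p.1 * q.1 + p.2 * q.2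

namespace DualPair

variable {S T : Finset (ℤ × ℤ)}

lemma symm (h : DualPair S T) : DualPair T S where
  mem_left q := by
    rw [h.mem_right]
    exact forall₂_congr fun p _ => by rw [mul_comm p.1, mul_comm p.2]
  mem_right p := by
    rw [h.mem_left]
    exact forall₂_congr fun q _ => by rw [mul_comm p.1, mul_comm p.2]

lemma le (h : DualPair S T) {x y s t : ℤ} (hp : (x, y) ∈ S) (hq : (s, t) ∈ T) :
    -1 ≤ x * s + y * t :=
  (h.mem_left _).1 hp _ hq

lemma mem_of (h : DualPair S T) {x y : ℤ} (H : ∀ s t : ℤ, (s, t) ∈ T → -1 ≤ x * s + y * t) :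
    (x, y) ∈ S :=
  (h.mem_left _).2 fun q hq => H q.1 q.2 hq

/-- Finiteness of `S` says that `T` positively spans the plane: all multiples of a vector that is
nonnegative on `T` belong to `S`. -/
lemma eq_zero (h : DualPair S T) {x y : ℤ} (H : ∀ s t : ℤ, (s, t) ∈ T → 0 ≤ x * s + y * t) :
    x = 0 ∧ y = 0 := by
  by_contra hne
  have hmem : ∀ k : ℕ, ((k : ℤ) * x, (k : ℤ) * y) ∈ S := fun k => h.mem_of fun s t hst => by
    have := mul_nonneg (Int.natCast_nonneg k) (H s t hst)
    linarith
  have hinj : Function.Injective fun k : ℕ => ((k : ℤ) * x, (k : ℤ) * y) := by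
    intro i j hij
    simp only [Prod.mk.injEq, mul_eq_mul_right_iff, Nat.cast_inj] at hij
    tauto
  exact (Set.infinite_of_injective_forall_mem hinj hmem) S.finite_toSet

/-- Every nonzero element of `S` lies on the frontier of the polygon cut out by `T`. -/
lemma exists_eq_neg_one (h : DualPair S T) {x y : ℤ} (hp : (x, y) ∈ S)
    (hne : ¬(x = 0 ∧ y = 0)) : ∃ s t : ℤ, (s, t) ∈ T ∧ x * s + y * t = -1 := by
  by_contra! hc
  refine hne (h.eq_zero fun s t hst => ?_)
  have h1 := h.le hp hst
  have h2 := hc s t hst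
  omega

/-- Change of lattice basis by a matrix in `SL₂(ℤ)`, acting on `T` by the inverse transpose. -/
lemma transform (h : DualPair S T) (a b c d : ℤ) (hdet : a * d - b * c = 1) :
    ∃ S' T' : Finset (ℤ × ℤ), DualPair S' T' ∧ S'.card = S.card ∧ T'.card = T.card ∧
      (∀ x y, (a * x + b * y, c * x + d * y) ∈ S' ↔ (x, y) ∈ S) ∧
      (∀ s t, (s, t) ∈ T' ↔ (a * s + c * t, b * s + d * t) ∈ T) := by
  let e : ℤ × ℤ ≃ ℤ × ℤ :=
    { toFun := fun p => (a * p.1 + b * p.2, c * p.1 + d * p.2)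
      invFun := fun p => (d * p.1 - b * p.2, -c * p.1 + a * p.2)
      left_inv := fun p => by
        ext
        · linear_combination p.1 * hdet
        · linear_combination p.2 * hdet
      right_inv := fun p => by
        ext
        · linear_combination p.1 * hdet
        · linear_combination p.2 * hdet }
  let f : ℤ × ℤ ≃ ℤ × ℤ :=
    { toFun := fun p => (d * p.1 - c * p.2, -b * p.1 + a * p.2)
      invFun := fun p => (a * p.1 + c * p.2, b * p.1 + d * p.2)
      left_inv := fun p => by
        ext
        · linear_combination p.1 * hdet
        · linear_combination p.2 * hdet
      right_inv := fun p => by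
        ext
        · linear_combination p.1 * hdet
        · linear_combination p.2 * hdet }
  have hef : ∀ p q : ℤ × ℤ, (e p).1 * (f q).1 + (e p).2 * (f q).2 = p.1 * q.1 + p.2 * q.2 := by
    intro p q
    simp only [e, f, Equiv.coe_fn_mk]
    linear_combination (p.1 * q.1 + p.2 * q.2) * hdet
  refine ⟨S.map e.toEmbedding, T.map f.toEmbedding, ⟨?_, ?_⟩, S.card_map _, T.card_map _,
    fun x y => ?_, fun s t => ?_⟩
  · intro p
    obtain ⟨p, rfl⟩ := e.surjective p
    rw [Finset.mem_map_equiv, Equiv.symm_apply_apply, h.mem_left, Finset.forall_mem_map]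
    exact forall₂_congr fun q _ => by rw [← hef p q]; rfl
  · intro q
    obtain ⟨q, rfl⟩ := f.surjective q
    rw [Finset.mem_map_equiv, Equiv.symm_apply_apply, h.mem_right, Finset.forall_mem_map]
    exact forall₂_congr fun p _ => by rw [← hef p q]; rfl
  · exact Finset.mem_map' e.toEmbedding (a := (x, y))
  · rw [Finset.mem_map_equiv]
    rfl

/-- Reflection in the vertical axis, a change of basis of determinant `-1`. -/
lemma reflect (h : DualPair S T) :
    DualPair (S.map ((Equiv.neg ℤ).prodCongr (Equiv.refl ℤ)).toEmbedding)
      (T.map ((Equiv.neg ℤ).prodCongr (Equiv.refl ℤ)).toEmbedding) := by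
  set e := (Equiv.neg ℤ).prodCongr (Equiv.refl ℤ)
  have hee : ∀ p q : ℤ × ℤ, (e p).1 * (e q).1 + (e p).2 * (e q).2 = p.1 * q.1 + p.2 * q.2 := by
    intro p q
    simp [e]
  constructor
  · intro p
    obtain ⟨p, rfl⟩ := e.surjective p
    rw [Finset.mem_map_equiv, Equiv.symm_apply_apply, h.mem_left, Finset.forall_mem_map]
    exact forall₂_congr fun q _ => by rw [← hee p q]; rfl
  · intro p
    obtain ⟨p, rfl⟩ := e.surjective p
    rw [Finset.mem_map_equiv, Equiv.symm_apply_apply, h.mem_right, Finset.forall_mem_map]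
    exact forall₂_congr fun q _ => by rw [← hee q p]; rfl

lemma mem_reflect {x y : ℤ} :
    (x, y) ∈ S.map ((Equiv.neg ℤ).prodCongr (Equiv.refl ℤ)).toEmbedding ↔ (-x, y) ∈ S := by
  rw [Finset.mem_map_equiv]
  rfl

/-- A relation `⟨(x, y), (s, t)⟩ = -1` is a Bézout identity, so there are coordinates in which
`(x, y)` becomes `(0, 1)` and `(s, t)` becomes `(0, -1)`. -/
lemma normalize (h : DualPair S T) {x y s t : ℤ} (hq : (s, t) ∈ T) (he : x * s + y * t = -1) :
    ∃ S' T' : Finset (ℤ × ℤ), DualPair S' T' ∧ S'.card = S.card ∧ T'.card = T.card ∧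
      (0, -1) ∈ T' ∧
      ∀ x' y', (y * x' - x * y', -(s * x' + t * y')) ∈ S' ↔ (x', y') ∈ S := by
  obtain ⟨S', T', h', hS, hT, hmS, hmT⟩ := h.transform y (-x) (-s) (-t) (by linarith)
  refine ⟨S', T', h', hS, hT, (hmT _ _).2 (by simpa using hq), fun x' y' => ?_⟩
  rw [← hmS x' y']
  ring_nf

/-- The triangle with vertices `0`, `(0, 1)` and `(x, y)` with `x > 0` meets the line of abscissa
`1` in a segment of length `1 - 1 / x` with endpoints in `ℤ / x`, which contains a lattice point. -/
lemma exists_column_one (h : DualPair S T) (h0 : (0, 1) ∈ S) : ∃ a : ℤ, (1, a) ∈ S := by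
  obtain ⟨x, y, hxy, hx⟩ : ∃ x y : ℤ, (x, y) ∈ S ∧ 0 < x := by
    by_contra! hc
    have := h.symm.eq_zero (x := -1) (y := 0) fun x y hxy => by linarith [hc x y hxy]
    omega
  refine ⟨(y + x - 1) / x, h.mem_of fun s t hst => ?_⟩
  have h1 := h.le h0 hst
  have h2 := h.le hxy hst
  have h3 := Int.mul_ediv_add_emod (y + x - 1) x
  have h4 := Int.emod_nonneg (y + x - 1) hx.ne'
  have h5 := Int.emod_lt_of_pos (y + x - 1) hx
  set a := (y + x - 1) / x
  set r := (y + x - 1) % x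
  by_contra! hc
  have h6 : x * (1 * s + a * t + 2) ≤ 0 := by nlinarith
  nlinarith [mul_nonneg (show 0 ≤ x - 1 - r by omega) (show 0 ≤ t + 1 by omega)]

/-- With `(±1, 1)` and some `(x, -k)` in `S`, `x, k > 0`, the point `(1, 0)` is in `S`, and then so
is some `(l, -1)` with `l ≥ 1`. If `l = 1` it is antipodal to `(-1, 1)`; if `l ≥ 2` the midpoint
of `(l, -1)` and `(1, 1)` is beyond `(1, 0)`, which contradicts `eq_zero`. -/
lemma antipodal_aux (h : DualPair S T) (h1 : (1, 1) ∈ S) (h2 : (-1, 1) ∈ S)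
    {x k : ℤ} (hx : 0 < x) (hk : 0 < k) (hxk : (x, -k) ∈ S) :
    ∃ x y : ℤ, (x, y) ∈ S ∧ (-x, -y) ∈ S ∧ ¬(x = 0 ∧ y = 0) := by
  have he1 : ∀ s t : ℤ, (s, t) ∈ T → -1 ≤ s := fun s t hst => by
    have := h.le h1 hst
    have := h.le hxk hst
    by_contra! hc
    nlinarith
  obtain ⟨l, hl, hl1⟩ : ∃ l : ℤ, (l, -1) ∈ S ∧ 1 ≤ l := by
    refine ⟨(x + k - 1) / k, h.mem_of fun s t hst => ?_, ?_⟩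
    · have h1 := he1 s t hst
      have h2 := h.le hxk hst
      have h3 := Int.mul_ediv_add_emod (x + k - 1) k
      have h4 := Int.emod_nonneg (x + k - 1) hk.ne'
      have h5 := Int.emod_lt_of_pos (x + k - 1) hk
      set a := (x + k - 1) / k
      set r := (x + k - 1) % k
      by_contra! hc
      have h6 : k * (a * s + -1 * t + 2) ≤ 0 := by nlinarith
      nlinarith [mul_nonneg (show 0 ≤ k - 1 - r by omega) (show 0 ≤ s + 1 by omega)]
    · rw [Int.le_ediv_iff_mul_le hk]
      omega
  rcases hl1.eq_or_lt with rfl | hl2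
  · exact ⟨1, -1, hl, by simpa using h2, by simp⟩
  · have := h.eq_zero (x := 1) (y := 0) fun s t hst => by
      have := h.le h1 hst
      have := h.le hl hst
      by_contra! hc
      nlinarith
    omega

lemma antipodal_of_row (h : DualPair S T) (h0 : (0, 1) ∈ S) {k : ℤ} (hk : 0 < k)
    (h1 : (k, 1) ∈ S) (h2 : (-k, 1) ∈ S) :
    ∃ x y : ℤ, (x, y) ∈ S ∧ (-x, -y) ∈ S ∧ ¬(x = 0 ∧ y = 0) := by
  have h1 : (1, 1) ∈ S := h.mem_of fun s t hst => by
    have := h.le h0 hst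
    have := h.le h1 hst
    by_contra! hc
    nlinarith
  have h2 : (-1, 1) ∈ S := h.mem_of fun s t hst => by
    have := h.le h0 hst
    have := h.le h2 hst
    by_contra! hc
    nlinarith
  obtain ⟨x, y, hxy, hy⟩ : ∃ x y : ℤ, (x, y) ∈ S ∧ y < 0 := by
    by_contra! hc
    have := h.symm.eq_zero (x := 0) (y := 1) fun x y hxy => by linarith [hc x y hxy]
    omega
  rcases lt_trichotomy x 0 with hx | rfl | hx
  · obtain ⟨u, v, hu, hv, hne⟩ := h.reflect.antipodal_aux (x := -x) (k := -y)
      (mem_reflect.2 h2) (mem_reflect.2 (by simpa using h1)) (by omega) (by omega)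
      (mem_reflect.2 (by simpa using hxy))
    exact ⟨-u, v, mem_reflect.1 hu, mem_reflect.1 hv, by omega⟩
  · refine ⟨0, 1, h0, h.mem_of fun s t hst => ?_, by simp⟩
    have := h.le hxy hst
    by_contra! hc
    nlinarith
  · exact h.antipodal_aux h1 h2 (x := x) (k := -y) hx (by omega) (by simpa using hxy)

/-- Two distinct points of `S` whose midpoint is a lattice point force an antipodal pair. If the
midpoint is not `0` itself, some `q ∈ T` equals `-1` on it, hence on both points, and in the
coordinates given by `normalize` all three points lie in the row of height `1`. -/
lemma antipodal_of_midpoint (h : DualPair S T) {x y u v : ℤ} (hw : ¬(u = 0 ∧ v = 0))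
    (h1 : (x + u, y + v) ∈ S) (h2 : (x - u, y - v) ∈ S) :
    ∃ x y : ℤ, (x, y) ∈ S ∧ (-x, -y) ∈ S ∧ ¬(x = 0 ∧ y = 0) := by
  by_cases hm : x = 0 ∧ y = 0
  · obtain ⟨rfl, rfl⟩ := hm
    exact ⟨u, v, by simpa using h1, by simpa using h2, hw⟩
  have h0 : (x, y) ∈ S := h.mem_of fun s t hst => by
    have := h.le h1 hst
    have := h.le h2 hst
    linarith
  obtain ⟨s, t, hst, he⟩ := h.exists_eq_neg_one h0 hm
  have hw0 : u * s + v * t = 0 := by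
    have := h.le h1 hst
    have := h.le h2 hst
    linarith
  obtain ⟨S', T', h', -, -, -, hS⟩ := h.normalize hst he
  have hk : y * u - x * v ≠ 0 := by
    intro hk
    refine hw ⟨?_, ?_⟩
    · linear_combination u * he - x * hw0 - t * hk
    · linear_combination v * he - y * hw0 + s * hk
  have g0 : (0, 1) ∈ S' := by
    convert (hS x y).2 h0 using 2 <;> linarith
  have g1 : (y * u - x * v, 1) ∈ S' := by
    convert (hS _ _).2 h1 using 2 <;> linarith
  have g2 : (-(y * u - x * v), 1) ∈ S' := by
    convert (hS _ _).2 h2 using 2 <;> linarith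
  have key : ∃ x y : ℤ, (x, y) ∈ S' ∧ (-x, -y) ∈ S' ∧ ¬(x = 0 ∧ y = 0) := by
    rcases hk.lt_or_gt with hk | hk
    · exact h'.antipodal_of_row g0 (k := -(y * u - x * v)) (by omega) g2 (by simpa using g1)
    · exact h'.antipodal_of_row g0 hk g1 g2
  obtain ⟨p, q, hp, hq, hne⟩ := key
  -- pull back along the inverse change of coordinates
  have e1 : p = y * (-t * p + x * q) - x * (s * p + y * q) := by
    linear_combination p * he
  have e2 : q = -(s * (-t * p + x * q) + t * (s * p + y * q)) := by
    linear_combination q * he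
  refine ⟨-t * p + x * q, s * p + y * q, (hS _ _).1 (by rwa [← e1, ← e2]), (hS _ _).1 ?_, ?_⟩
  · convert hq using 2
    · linear_combination e1
    · linear_combination e2
  · rintro ⟨z1, z2⟩
    rw [z1, z2] at e1 e2
    exact hne ⟨by simpa using e1, by simpa using e2⟩

/-- Here `l₁` and `l₂` are the left ends of the rows of `T` of heights `1` and `-1`. The points of
`S` with positive abscissa `x` satisfy `-1 - x * l₁ ≤ y ≤ 1 + x * l₂`. If `(-1, 0) ∈ T`, only `x = 1`
occurs, giving `3 + l₁ + l₂` points; otherwise `l₁ + l₂ = -1`, and the columns `x = 1` and `x = 2`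
contribute two points and one point. -/
lemma card_pos_columns (h : DualPair S T) (hT : ∀ s t : ℤ, (s, t) ∈ T → -1 ≤ t ∧ t ≤ 1)
    {l₁ l₂ : ℤ} (h₁ : (l₁, 1) ∈ T) (h₂ : (l₂, -1) ∈ T)
    (m₁ : ∀ s : ℤ, (s, 1) ∈ T → l₁ ≤ s) (m₂ : ∀ s : ℤ, (s, -1) ∈ T → l₂ ≤ s) :
    ((S.filter fun p => 0 < p.1).card : ℤ) = 4 + (l₁ + l₂) - if (-1, 0) ∈ T then 1 else 0 := by
  have m₀ : ∀ s : ℤ, (s, 0) ∈ T → -1 ≤ s := by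
    intro s hs
    by_contra! hc
    have := h.symm.eq_zero (x := -1) (y := 0) fun x y hxy => by
      have := h.le hxy hs
      by_contra! hc'
      nlinarith
    omega
  have memS : ∀ x y : ℤ, 0 < x → ((x, y) ∈ S ↔ -1 ≤ x * l₁ + y ∧ -1 ≤ x * l₂ - y ∧
      ((-1, 0) ∈ T → x ≤ 1)) := by
    intro x y hx
    constructor
    · intro hxy
      refine ⟨by linarith [h.le hxy h₁], by linarith [h.le hxy h₂], fun h0 => ?_⟩
      linarith [h.le hxy h0]
    · rintro ⟨g1, g2, g3⟩
      refine h.mem_of fun s t hst => ?_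
      obtain rfl | rfl | rfl : t = -1 ∨ t = 0 ∨ t = 1 := by have := hT s t hst; omega
      · nlinarith [m₂ s hst]
      · rcases (m₀ s hst).eq_or_lt with rfl | hs
        · linarith [g3 hst]
        · nlinarith
      · nlinarith [m₁ s hst]
  have hpos : ∃ x y : ℤ, (x, y) ∈ S ∧ 0 < x := by
    by_contra! hc
    have := h.symm.eq_zero (x := -1) (y := 0) fun x y hxy => by linarith [hc x y hxy]
    omega
  obtain ⟨x₀, y₀, hxy₀, hx₀⟩ := hpos
  -- makes the length `3 + l₁ + l₂` of the column `x = 1` positive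
  have hL : -2 ≤ l₁ + l₂ := by
    obtain ⟨g1, g2, -⟩ := (memS _ _ hx₀).1 hxy₀
    by_contra! hc
    nlinarith
  split_ifs with h0
  · have hS : S.filter (fun p => 0 < p.1) =
        (Finset.Icc (-1 - l₁) (1 + l₂)).map ⟨fun y => ((1 : ℤ), y), Prod.mk_right_injective 1⟩ := by
      ext ⟨x, y⟩
      simp only [Finset.mem_filter, Finset.mem_map, Finset.mem_Icc, Function.Embedding.coeFn_mk,
        Prod.mk.injEq]
      constructor
      · rintro ⟨hxy, hx⟩
        obtain ⟨g1, g2, g3⟩ := (memS _ _ hx).1 hxy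
        obtain rfl : x = 1 := by have := g3 h0; omega
        exact ⟨y, by omega, rfl, rfl⟩
      · rintro ⟨y, hy, rfl, rfl⟩
        exact ⟨(memS _ _ one_pos).2 ⟨by omega, by omega, fun _ => le_rfl⟩, one_pos⟩
    rw [hS, Finset.card_map, Int.card_Icc, Int.toNat_of_nonneg (by omega)]
    ring
  · have hL1 : l₁ + l₂ = -1 := by
      apply le_antisymm
      · by_contra! hc
        have := h.eq_zero (x := 1) (y := -l₁) fun s t hst => by
          obtain rfl | rfl | rfl : t = -1 ∨ t = 0 ∨ t = 1 := by have := hT s t hst; omega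
          · linarith [m₂ s hst]
          · have := m₀ s hst
            have : s ≠ -1 := by rintro rfl; exact h0 hst
            omega
          · linarith [m₁ s hst]
        omega
      · by_contra! hc
        refine h0 (h.symm.mem_of fun x y hxy => ?_)
        by_contra! hx
        have := h.le hxy h₁
        have := h.le hxy h₂
        nlinarith
    obtain rfl : l₂ = -1 - l₁ := by omega
    have hS : S.filter (fun p => 0 < p.1) = {(1, -1 - l₁), (1, -l₁), (2, -1 - 2 * l₁)} := by
      ext ⟨x, y⟩
      simp only [Finset.mem_filter, Finset.mem_insert, Finset.mem_singleton, Prod.mk.injEq]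
      constructor
      · rintro ⟨hxy, hx⟩
        obtain ⟨g1, g2, -⟩ := (memS _ _ hx).1 hxy
        have : x ≤ 2 := by nlinarith
        interval_cases x <;> omega
      · rintro (⟨rfl, rfl⟩ | ⟨rfl, rfl⟩ | ⟨rfl, rfl⟩)
        all_goals
          refine ⟨(memS _ _ (by norm_num)).2 ⟨by linarith, by linarith, fun g => (h0 g).elim⟩,
            by norm_num⟩
    rw [hS, Finset.card_eq_three.2 ⟨_, _, _, ?_, ?_, ?_, rfl⟩]
    · omega
    all_goals simp [Prod.ext_iff]

lemma card_add_card_of_vertical (h : DualPair S T) (h1 : (0, 1) ∈ S) (h2 : (0, -1) ∈ S) :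
    S.card + T.card = 14 := by
  have hT : ∀ s t : ℤ, (s, t) ∈ T → -1 ≤ t ∧ t ≤ 1 := fun s t hst => by
    have := h.le h1 hst
    have := h.le h2 hst
    omega
  have row : ∀ c : ℤ, c = 1 ∨ c = 0 ∨ c = -1 → (c = 0 ∨ ∃ s : ℤ, (s, c) ∈ T) →
      ∃ l r : ℤ, (l, c) ∈ T ∧ (r, c) ∈ T ∧ ∀ s : ℤ, (s, c) ∈ T ↔ l ≤ s ∧ s ≤ r := by
    intro c hc hne
    have hne' : (T.filter fun q => q.2 = c).Nonempty := by
      rcases hne with rfl | ⟨s, hs⟩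
      · exact ⟨(0, 0), Finset.mem_filter.2 ⟨h.symm.mem_of fun s t _ => by simp, rfl⟩⟩
      · exact ⟨(s, c), Finset.mem_filter.2 ⟨hs, rfl⟩⟩
    obtain ⟨⟨l, c₁⟩, hl, hlm⟩ := Finset.exists_min_image _ Prod.fst hne'
    obtain ⟨⟨r, c₂⟩, hr, hrm⟩ := Finset.exists_max_image _ Prod.fst hne'
    obtain ⟨hlT, hc₁⟩ := Finset.mem_filter.1 hl
    obtain ⟨hrT, hc₂⟩ := Finset.mem_filter.1 hr
    obtain rfl : c₁ = c := hc₁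
    obtain rfl : c₂ = c₁ := hc₂
    refine ⟨l, r, hlT, hrT, fun s => ⟨fun hs => ⟨hlm _ (Finset.mem_filter.2 ⟨hs, rfl⟩),
      hrm _ (Finset.mem_filter.2 ⟨hs, rfl⟩)⟩, fun ⟨hls, hsr⟩ => h.symm.mem_of fun x y hxy => ?_⟩⟩
    have e1 := h.le hxy hlT
    have e2 := h.le hxy hrT
    rcases le_total 0 x with hx | hx <;> nlinarith
  have up : ∃ s : ℤ, (s, 1) ∈ T := by
    by_contra! hc
    have := h.eq_zero (x := 0) (y := -1) fun s t hst => by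
      have := hT s t hst
      have : t ≠ 1 := by rintro rfl; exact hc s hst
      omega
    omega
  have down : ∃ s : ℤ, (s, -1) ∈ T := by
    by_contra! hc
    have := h.eq_zero (x := 0) (y := 1) fun s t hst => by
      have := hT s t hst
      have : t ≠ -1 := by rintro rfl; exact hc s hst
      omega
    omega
  obtain ⟨l₁, r₁, hl₁, hr₁, m₁⟩ := row 1 (by simp) (Or.inr up)
  obtain ⟨l₂, r₂, hl₂, hr₂, m₂⟩ := row (-1) (by simp) (Or.inr down)
  obtain ⟨l₀, r₀, hl₀, hr₀, m₀⟩ := row 0 (by simp) (Or.inl rfl)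
  have z0 : (0, 0) ∈ T := h.symm.mem_of fun s t _ => by simp
  have hl0 : l₀ = -(if ((-1, 0) : ℤ × ℤ) ∈ T then 1 else 0) := by
    have := (m₀ 0).1 z0
    have : -1 ≤ l₀ := by
      by_contra! hc
      have := h.symm.eq_zero (x := -1) (y := 0) fun x y hxy => by
        have := h.le hxy hl₀
        by_contra! hc'
        nlinarith
      omega
    split_ifs with hi <;> rw [m₀] at hi <;> omega
  have hr0 : r₀ = if ((1, 0) : ℤ × ℤ) ∈ T then 1 else 0 := by
    have := (m₀ 0).1 z0
    have : r₀ ≤ 1 := by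
      by_contra! hc
      have := h.symm.eq_zero (x := 1) (y := 0) fun x y hxy => by
        have := h.le hxy hr₀
        by_contra! hc'
        nlinarith
      omega
    split_ifs with hi <;> rw [m₀] at hi <;> omega
  have right := h.card_pos_columns hT hl₁ hl₂ (fun s hs => ((m₁ s).1 hs).1)
    (fun s hs => ((m₂ s).1 hs).1)
  have left := h.reflect.card_pos_columns (l₁ := -r₁) (l₂ := -r₂)
    (fun s t hst => hT _ _ (mem_reflect.1 hst))
    (mem_reflect.2 (by simpa using hr₁)) (mem_reflect.2 (by simpa using hr₂))
    (fun s hs => by have := ((m₁ _).1 (mem_reflect.1 hs)).2; omega)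
    (fun s hs => by have := ((m₂ _).1 (mem_reflect.1 hs)).2; omega)
  rw [Finset.filter_map, Finset.card_map] at left
  simp only [mem_reflect, neg_neg] at left
  have left' : ((S.filter fun p => p.1 < 0).card : ℤ) =
      4 + (-r₁ + -r₂) - if (1, 0) ∈ T then 1 else 0 := by
    rw [← left]
    congr 3
    ext p
    simp
  have mid : S.filter (fun p => p.1 = 0) = {(0, -1), (0, 0), (0, 1)} := by
    ext ⟨x, y⟩
    simp only [Finset.mem_filter, Finset.mem_insert, Finset.mem_singleton, Prod.mk.injEq]
    constructor
    · rintro ⟨hxy, rfl⟩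
      have := h.le hxy hl₁
      have := h.le hxy hl₂
      omega
    · rintro (⟨rfl, rfl⟩ | ⟨rfl, rfl⟩ | ⟨rfl, rfl⟩)
      · exact ⟨h2, rfl⟩
      · exact ⟨h.mem_of fun s t _ => by simp, rfl⟩
      · exact ⟨h1, rfl⟩
  have hScard : S.card = (S.filter fun p => 0 < p.1).card + (S.filter fun p => p.1 < 0).card
      + 3 := by
    have : (S.filter fun p => p.1 = 0).card = 3 := by rw [mid]; rfl
    rw [← this, ← Finset.card_filter_add_card_filter_not (s := S) (fun p => 0 < p.1), add_assoc]
    congr 1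
    rw [← Finset.card_filter_add_card_filter_not (s := S.filter fun p => ¬ 0 < p.1)
      (fun p => p.1 < 0), Finset.filter_filter, Finset.filter_filter]
    congr 2 <;> ext p <;> simp only [Finset.mem_filter] <;> constructor <;> intro hp <;>
      exact ⟨hp.1, by omega⟩
  have rows : T = (Finset.Icc l₁ r₁).image (fun s => (s, (1 : ℤ))) ∪
      ((Finset.Icc l₂ r₂).image (fun s => (s, (-1 : ℤ))) ∪
        (Finset.Icc l₀ r₀).image (fun s => (s, (0 : ℤ)))) := by
    ext ⟨s, t⟩
    simp only [Finset.mem_union, Finset.mem_image, Finset.mem_Icc, ← m₀, ← m₁, ← m₂, Prod.mk.injEq]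
    constructor
    · intro hst
      obtain rfl | rfl | rfl : t = -1 ∨ t = 0 ∨ t = 1 := by have := hT s t hst; omega
      all_goals simpa using hst
    · rintro (⟨s, hs, rfl, rfl⟩ | ⟨s, hs, rfl, rfl⟩ | ⟨s, hs, rfl, rfl⟩) <;> exact hs
  have inj : ∀ c : ℤ, Function.Injective fun s : ℤ => (s, c) := fun c => Prod.mk_left_injective c
  have hTcard : T.card = (r₁ + 1 - l₁).toNat + ((r₂ + 1 - l₂).toNat + (r₀ + 1 - l₀).toNat) := by
    conv_lhs => rw [rows]
    rw [Finset.card_union_of_disjoint, Finset.card_union_of_disjoint,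
      Finset.card_image_of_injective _ (inj _), Finset.card_image_of_injective _ (inj _),
      Finset.card_image_of_injective _ (inj _), Int.card_Icc, Int.card_Icc, Int.card_Icc]
    · simp only [Finset.disjoint_left, Finset.mem_image]
      rintro _ ⟨s, -, rfl⟩ ⟨s', -, hs⟩
      simp at hs
    · simp only [Finset.disjoint_left, Finset.mem_image, Finset.mem_union]
      rintro _ ⟨s, -, rfl⟩ (⟨s', -, hs⟩ | ⟨s', -, hs⟩) <;> simp at hs
  have i1 := ((m₁ _).1 hl₁).2
  have i2 := ((m₂ _).1 hl₂).2
  have i3 := ((m₀ _).1 hl₀).2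
  omega

lemma card_add_card_of_antipodal (h : DualPair S T) {x y : ℤ} (h1 : (x, y) ∈ S)
    (h2 : (-x, -y) ∈ S) (hne : ¬(x = 0 ∧ y = 0)) : S.card + T.card = 14 := by
  obtain ⟨s, t, hst, he⟩ := h.exists_eq_neg_one h1 hne
  obtain ⟨S', T', h', hS, hT, -, hm⟩ := h.normalize hst he
  rw [← hS, ← hT]
  apply h'.card_add_card_of_vertical
  · convert (hm _ _).2 h1 using 2 <;> linarith
  · convert (hm _ _).2 h2 using 2 <;> linarith

/-- Here `S` is `{0, (0, 1), (1, a), (-1, b)}`; positive spanning forces `a + b < 0`, and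
`a + b ≤ -2` would put `(0, -1)` into `S`. -/
lemma card_add_card_of_card_le (h : DualPair S T) (h1 : (0, 1) ∈ S) (hcard : S.card ≤ 4)
    (hanti : (0, -1) ∉ S) : S.card + T.card = 14 := by
  obtain ⟨a, ha⟩ := h.exists_column_one h1
  obtain ⟨b, hb⟩ := h.reflect.exists_column_one (mem_reflect.2 (by simpa using h1))
  rw [mem_reflect] at hb
  have hS : {(0, 0), (0, 1), (1, a), (-1, b)} = S := by
    apply Finset.eq_of_subset_of_card_le
    · intro p hp
      simp only [Finset.mem_insert, Finset.mem_singleton] at hp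
      rcases hp with rfl | rfl | rfl | rfl
      · exact h.mem_of fun s t _ => by simp
      all_goals assumption
    · refine hcard.trans (le_of_eq ?_)
      simp [Finset.card_insert_of_notMem]
  have hab : a + b < 0 := by
    by_contra! hc
    have := h.symm.eq_zero (x := -a) (y := 1) fun x y hxy => by
      rw [← hS] at hxy
      simp only [Finset.mem_insert, Finset.mem_singleton, Prod.mk.injEq] at hxy
      rcases hxy with ⟨rfl, rfl⟩ | ⟨rfl, rfl⟩ | ⟨rfl, rfl⟩ | ⟨rfl, rfl⟩ <;> linarith
    omega
  have hab' : a + b = -1 := by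
    by_contra hc
    refine hanti (h.mem_of fun s t hst => ?_)
    have := h.le ha hst
    have := h.le hb hst
    by_contra! hc
    have : a + b ≤ -2 := by omega
    nlinarith
  obtain rfl : b = -1 - a := by omega
  -- in the sheared coordinate `z = s + a * t` the set `T` is a fixed triangle
  have hT : T = (((Finset.Icc (-1 : ℤ) 2) ×ˢ (Finset.Icc (-1 : ℤ) 2)).filter
      fun p => p.1 + p.2 ≤ 1).image fun p => (p.1 - a * p.2, p.2) := by
    ext ⟨s, t⟩
    rw [h.mem_right, ← hS]
    simp only [Finset.forall_mem_insert, Finset.mem_singleton, forall_eq, Finset.mem_image,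
      Finset.mem_filter, Finset.mem_product, Finset.mem_Icc, Prod.mk.injEq]
    constructor
    · rintro ⟨-, g1, g2, g3⟩
      refine ⟨(s + a * t, t), ⟨⟨⟨?_, ?_⟩, ?_, ?_⟩, ?_⟩, ?_, rfl⟩ <;> simp only <;> linarith
    · rintro ⟨⟨z, t⟩, ⟨⟨⟨k1, -⟩, k2, -⟩, k3⟩, rfl, rfl⟩
      simp only at *
      refine ⟨?_, ?_, ?_, ?_⟩ <;> linarith
  have hTc : T.card = 10 := by
    rw [hT, Finset.card_image_of_injective]
    · decide
    · rintro ⟨x, y⟩ ⟨x', y'⟩ hp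
      simp only [Prod.mk.injEq] at hp
      obtain ⟨hp, rfl⟩ := hp
      simpa using hp
  have hSc : S.card = 4 := by
    rw [← hS]
    simp [Finset.card_insert_of_notMem]
  omega

/-- The twelve-point theorem for dual pairs; the origin is counted once in each set. -/
theorem card_add_card (h : DualPair S T) : S.card + T.card = 14 := by
  by_cases hA : ∃ x y : ℤ, (x, y) ∈ S ∧ (-x, -y) ∈ S ∧ ¬(x = 0 ∧ y = 0)
  · obtain ⟨x, y, h1, h2, hne⟩ := hA
    exact h.card_add_card_of_antipodal h1 h2 hne
  have hcard : S.card ≤ 4 := by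
    have : S.card ≤ (Finset.univ : Finset (ZMod 2 × ZMod 2)).card := by
      refine Finset.card_le_card_of_injOn (fun p => ((p.1 : ZMod 2), (p.2 : ZMod 2)))
        (fun _ _ => Finset.mem_coe.2 (Finset.mem_univ _)) ?_
      rintro ⟨x, y⟩ hp ⟨x', y'⟩ hq hpq
      simp only [Prod.mk.injEq, ZMod.intCast_eq_intCast_iff_dvd_sub] at hpq
      obtain ⟨⟨u, hu⟩, ⟨v, hv⟩⟩ := hpq
      by_contra hne
      refine hA (h.antipodal_of_midpoint (x := x + u) (y := y + v) (u := u) (v := v) ?_ ?_ ?_)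
      · rintro ⟨rfl, rfl⟩
        exact hne (by ext <;> simp only <;> push_cast at hu hv <;> omega)
      · convert Finset.mem_coe.1 hq using 2 <;> push_cast at hu hv <;> omega
      · simpa using hp
    simpa [Fintype.card_prod, ZMod.card] using this
  obtain ⟨x, y, hxy, hne⟩ : ∃ x y : ℤ, (x, y) ∈ S ∧ ¬(x = 0 ∧ y = 0) := by
    by_contra! hc
    have := h.symm.eq_zero (x := 1) (y := 0) fun x y hxy => by simp [(hc x y hxy).1]
    omega
  obtain ⟨s, t, hst, he⟩ := h.exists_eq_neg_one hxy hne
  obtain ⟨S', T', h', hS, hT, -, hm⟩ := h.normalize hst he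
  rw [← hS, ← hT]
  apply h'.card_add_card_of_card_le
  · convert (hm _ _).2 hxy using 2 <;> linarith
  · omega
  · intro hcon
    refine hA ⟨x, y, hxy, (hm _ _).1 ?_, hne⟩
    convert hcon using 2 <;> linarith

end DualPair

/-! ### Lattice points of the polygon and of its polar -/

/-- The inclusion of `ℤ²` into `ℝ²`. -/
def latticeEmbed (p : ℤ × ℤ) : V := ((p.1 : ℝ), (p.2 : ℝ))

lemma latticeEmbed_injective : Function.Injective latticeEmbed := by
  rintro ⟨a, b⟩ ⟨c, d⟩ h
  simpa [latticeEmbed] using h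

lemma dotV_latticeEmbed (p q : ℤ × ℤ) :
    dotV (latticeEmbed p) (latticeEmbed q) = ((p.1 * q.1 + p.2 * q.2 : ℤ) : ℝ) := by
  simp [dotV, latticeEmbed]

lemma neg_one_le_dotV_latticeEmbed (p q : ℤ × ℤ) :
    -1 ≤ dotV (latticeEmbed p) (latticeEmbed q) ↔ -1 ≤ p.1 * q.1 + p.2 * q.2 := by
  rw [dotV_latticeEmbed]
  exact_mod_cast Iff.rfl

lemma dotV_comm (x y : V) : dotV x y = dotV y x := by
  simp only [dotV]
  ring

lemma continuous_dotV (x : V) : Continuous (dotV x) := by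
  unfold dotV
  fun_prop

lemma convex_halfPlane (x : V) : Convex ℝ {y : V | -1 ≤ dotV x y} := by
  intro y hy z hz a b ha hb hab
  simp only [mem_ofPred_eq, dotV, Prod.fst_add, Prod.snd_add, Prod.smul_fst, Prod.smul_snd,
    smul_eq_mul] at *
  nlinarith [mul_le_mul_of_nonneg_left hy ha, mul_le_mul_of_nonneg_left hz hb]

lemma isClosed_halfPlane (x : V) : IsClosed {y : V | -1 ≤ dotV x y} :=
  isClosed_le continuous_const (continuous_dotV x)

/-- The point `x` may be scaled by a factor slightly larger than `1` inside `P`. -/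
lemma neg_one_lt_dotV_of_mem_interior {P : Set V} {p x : V} (hx : x ∈ interior P)
    (hp : ∀ y ∈ P, -1 ≤ dotV p y) : -1 < dotV p x := by
  have hc : ContinuousAt (fun t : ℝ => t • x) 1 := by fun_prop
  have hev : ∀ᶠ t : ℝ in nhds 1, t • x ∈ P :=
    hc.eventually (by simpa using mem_interior_iff_mem_nhds.1 hx)
  obtain ⟨t, ht, ht1⟩ := ((hev.filter_mono nhdsWithin_le_nhds).and
    (self_mem_nhdsWithin : Ioi (1 : ℝ) ∈ nhdsWithin 1 (Ioi 1))).exists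
  have h1 := hp _ ht
  have h2 : dotV p (t • x) = t * dotV p x := by
    simp only [dotV, Prod.smul_fst, Prod.smul_snd, smul_eq_mul]
    ring
  rw [h2] at h1
  have ht1 : 1 < t := ht1
  by_contra! hc
  nlinarith

lemma finite_latticeEmbed_preimage {P : Set V} (hP : Bornology.IsBounded P) :
    {p : ℤ × ℤ | latticeEmbed p ∈ P}.Finite := by
  obtain ⟨M, hM⟩ := hP.exists_norm_le
  refine ((Set.finite_Icc (-⌈M⌉) ⌈M⌉).prod (Set.finite_Icc (-⌈M⌉) ⌈M⌉)).subset fun p hp => ?_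
  have h := (hM _ hp).trans (Int.le_ceil M)
  rw [Prod.norm_def, max_le_iff] at h
  simp only [latticeEmbed, Real.norm_eq_abs, abs_le] at h
  simp only [mem_prod, mem_Icc]
  exact_mod_cast h

/-- If the lattice points of `P` form one half of a dual pair, the other half being valid
inequalities for `P`, then all of them except `0` lie on the frontier of `P`. -/
lemma ncard_frontier {P : Set V} {S T : Finset (ℤ × ℤ)} (h : DualPair S T) (hP : IsClosed P)
    (h0 : (0 : V) ∈ interior P) (hS : ∀ p, p ∈ S ↔ latticeEmbed p ∈ P)
    (hT : ∀ q ∈ T, ∀ y ∈ P, -1 ≤ dotV (latticeEmbed q) y) :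
    (frontier P ∩ latticePts).ncard + 1 = S.card := by
  have hzero : latticeEmbed (0, 0) = 0 := by simp [latticeEmbed]
  have hset : frontier P ∩ latticePts = latticeEmbed '' (S.erase (0, 0) : Finset (ℤ × ℤ)) := by
    ext x
    rw [hP.frontier_eq]
    constructor
    · rintro ⟨⟨hx, hxi⟩, p, rfl⟩
      refine ⟨p, Finset.mem_coe.2 (Finset.mem_erase.2 ⟨?_, (hS p).2 hx⟩), rfl⟩
      rintro rfl
      exact hxi (show latticeEmbed (0, 0) ∈ interior P by rwa [hzero])
    · rintro ⟨⟨x, y⟩, hp, rfl⟩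
      obtain ⟨hne, hpS⟩ := Finset.mem_erase.1 (Finset.mem_coe.1 hp)
      refine ⟨⟨(hS _).1 hpS, fun hi => hne ?_⟩, (x, y), rfl⟩
      have := h.eq_zero (x := x) (y := y) fun s t hst => by
        have h1 := neg_one_lt_dotV_of_mem_interior hi (hT _ hst)
        rw [dotV_latticeEmbed] at h1
        have h2 : -1 < s * x + t * y := by exact_mod_cast h1
        linarith
      rw [this.1, this.2]
  rw [hset, Set.ncard_image_of_injective _ latticeEmbed_injective, Set.ncard_coe_finset,
    Finset.card_erase_add_one]
  rw [hS, hzero]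
  exact interior_subset h0

/-- A form of the Krein-Milman theorem. -/
lemma dotV_ge_of_extremePoints {K : Set V} (hK : IsCompact K) (hconv : Convex ℝ K) {x : V}
    (hx : ∀ y ∈ extremePoints ℝ K, -1 ≤ dotV x y) : ∀ y ∈ K, -1 ≤ dotV x y := by
  intro y hy
  rw [← closure_convexHull_extremePoints hK hconv] at hy
  exact closure_minimal (convexHull_min hx (convex_halfPlane x)) (isClosed_halfPlane x) hy

lemma polarPolygon_eq (Q : Set V) : polarPolygon Q = ⋂ y ∈ Q, {x : V | -1 ≤ dotV y x} := by
  ext x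
  simp [polarPolygon, dotV_comm]

lemma isClosed_polarPolygon (Q : Set V) : IsClosed (polarPolygon Q) := by
  rw [polarPolygon_eq]
  exact isClosed_biInter fun y _ => isClosed_halfPlane y

lemma convex_polarPolygon (Q : Set V) : Convex ℝ (polarPolygon Q) := by
  rw [polarPolygon_eq]
  exact convex_iInter₂ fun y _ => convex_halfPlane y

lemma isCompact_polarPolygon {Q : Set V} (h0 : (0 : V) ∈ interior Q) :
    IsCompact (polarPolygon Q) := by
  obtain ⟨ε, hε, hball⟩ := Metric.nhds_basis_closedBall.mem_iff.1 (mem_interior_iff_mem_nhds.1 h0)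
  refine Metric.isCompact_of_isClosed_isBounded (isClosed_polarPolygon Q)
    (isBounded_iff_forall_norm_le.2 ⟨1 / ε, fun x hx => ?_⟩)
  have key : ∀ y : V, ‖y‖ ≤ ε → -1 ≤ dotV x y := fun y hy => hx y (hball (by simpa using hy))
  have e1 := key (ε, 0) (by simp [Prod.norm_def, abs_of_pos hε, hε.le])
  have e2 := key (-ε, 0) (by simp [Prod.norm_def, abs_of_pos hε, hε.le])
  have e3 := key (0, ε) (by simp [Prod.norm_def, abs_of_pos hε, hε.le])
  have e4 := key (0, -ε) (by simp [Prod.norm_def, abs_of_pos hε, hε.le])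
  simp only [dotV] at e1 e2 e3 e4
  rw [Prod.norm_def, max_le_iff, Real.norm_eq_abs, Real.norm_eq_abs, abs_le, abs_le,
    ← neg_div, le_div_iff₀ hε, le_div_iff₀ hε, div_le_iff₀ hε, div_le_iff₀ hε]
  refine ⟨⟨?_, ?_⟩, ?_, ?_⟩ <;> linarith

lemma zero_mem_interior_polarPolygon {Q : Set V} (hQ : Bornology.IsBounded Q) :
    (0 : V) ∈ interior (polarPolygon Q) := by
  obtain ⟨M, hM0, hM⟩ := hQ.exists_pos_norm_le
  refine mem_interior_iff_mem_nhds.2 (Filter.mem_of_superset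
    (Metric.closedBall_mem_nhds 0 (show 0 < 1 / (2 * M) by positivity)) fun x hx y hy => ?_)
  have hx' : ‖x‖ ≤ 1 / (2 * M) := by simpa using hx
  have bound : ∀ a b : ℝ, |a| ≤ 1 / (2 * M) → |b| ≤ M → -(1 / 2) ≤ a * b := by
    intro a b ha hb
    have h1 : |a * b| ≤ 1 / (2 * M) * M := by
      rw [abs_mul]
      gcongr
    have h2 : 1 / (2 * M) * M = 1 / 2 := by field_simp
    rw [h2] at h1
    exact (abs_le.1 h1).1
  have h1 := bound x.1 y.1 ((norm_fst_le x).trans hx') ((norm_fst_le y).trans (hM y hy))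
  have h2 := bound x.2 y.2 ((norm_snd_le x).trans hx') ((norm_snd_le y).trans (hM y hy))
  simp only [dotV]
  linarith

/-- Half of the bipolar theorem, from Hahn-Banach separation. -/
lemma exists_mem_polarPolygon_lt {Q : Set V} (hQ : IsClosed Q) (hconv : Convex ℝ Q)
    (h0 : (0 : V) ∈ Q) {p : V} (hp : p ∉ Q) : ∃ x ∈ polarPolygon Q, dotV p x < -1 := by
  obtain ⟨f, u, hu, hup⟩ := geometric_hahn_banach_closed_point hconv hQ hp
  have hu0 : 0 < u := by simpa using hu 0 h0
  -- the separating functional, rescaled so that its bound on `Q` becomes `-1`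
  have hf : ∀ y : V, dotV (-f (1, 0) / u, -f (0, 1) / u) y = -f y / u := by
    intro y
    have : y = y.1 • ((1, 0) : V) + y.2 • ((0, 1) : V) := by ext <;> simp
    conv_rhs => rw [this, map_add, map_smul, map_smul]
    simp only [dotV, smul_eq_mul]
    ring
  refine ⟨(-f (1, 0) / u, -f (0, 1) / u), fun y hy => ?_, ?_⟩
  · rw [hf, le_div_iff₀ hu0]
    linarith [hu y hy]
  · rw [dotV_comm, hf, div_lt_iff₀ hu0]
    linarith

/-- At an extreme point of the polar polygon at least two of the defining inequalities are tight:
otherwise the point can be moved both ways along a line `x + e • w`, with `w` orthogonal to the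
tight constraint if there is one. -/
lemma exists_active_pair {A : Finset V} {x : V}
    (hx : x ∈ extremePoints ℝ (polarPolygon (convexHull ℝ (A : Set V)))) :
    ∃ v₁ ∈ A, ∃ v₂ ∈ A, v₁ ≠ v₂ ∧ dotV x v₁ = -1 ∧ dotV x v₂ = -1 := by
  have hpolar : ∀ z : V, (∀ v ∈ A, -1 ≤ dotV z v) → z ∈ polarPolygon (convexHull ℝ (A : Set V)) :=
    fun z hz y hy => convexHull_min (fun v hv => hz v hv) (convex_halfPlane z) hy
  rw [mem_extremePoints] at hx
  obtain ⟨hxP, hext⟩ := hx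
  by_contra! hc
  obtain ⟨w, hw0, hw⟩ : ∃ w : V, w ≠ 0 ∧ ∀ v ∈ A, dotV x v = -1 → dotV w v = 0 := by
    by_cases hv : ∃ v ∈ A, dotV x v = -1
    · obtain ⟨v, hvA, hv⟩ := hv
      refine ⟨(-v.2, v.1), ?_, fun v' hv'A hv' => ?_⟩
      · intro h
        simp only [Prod.mk_eq_zero, neg_eq_zero] at h
        simp [dotV, h.1, h.2] at hv
      · by_cases hne : v = v'
        · subst hne
          simp only [dotV]
          ring
        · exact (hc v hvA v' hv'A hne hv hv').elim
    · push Not at hv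
      exact ⟨(1, 0), by simp, fun v hvA h => (hv v hvA h).elim⟩
  have hlin : ∀ (e : ℝ) (v : V), dotV (x + e • w) v = dotV x v + e * dotV w v := by
    intro e v
    simp only [dotV, Prod.fst_add, Prod.snd_add, Prod.smul_fst, Prod.smul_snd, smul_eq_mul]
    ring
  have hev : ∀ᶠ e : ℝ in nhds 0, ∀ v ∈ A, -1 ≤ dotV (x + e • w) v := by
    rw [Filter.eventually_all_finset]
    intro v hv
    have hxv : -1 ≤ dotV x v := hxP v (subset_convexHull ℝ _ hv)
    rcases hxv.eq_or_lt with heq | hlt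
    · exact Filter.Eventually.of_forall fun e => by
        rw [hlin, hw v hv heq.symm, mul_zero, add_zero, heq]
    · have hcont : Continuous fun e : ℝ => dotV (x + e • w) v := by
        simp only [hlin]
        fun_prop
      have := hcont.continuousAt.eventually
        (lt_mem_nhds (show -1 < dotV (x + (0 : ℝ) • w) v by simpa using hlt))
      exact this.mono fun e he => he.le
  have hev' : ∀ᶠ e : ℝ in nhds 0, ∀ v ∈ A, -1 ≤ dotV (x + (-e) • w) v :=
    (continuous_neg.tendsto' (0 : ℝ) 0 neg_zero).eventually hev
  obtain ⟨e, ⟨he1, he2⟩, he⟩ := (((hev.and hev').filter_mono nhdsWithin_le_nhds).and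
    (self_mem_nhdsWithin : Ioi (0 : ℝ) ∈ nhdsWithin 0 (Ioi 0))).exists
  have he : 0 < e := he
  have := (hext _ (hpolar _ he1) _ (hpolar _ he2)
    ⟨1 / 2, 1 / 2, by norm_num, by norm_num, by norm_num, by module⟩).1
  rw [add_eq_left, smul_eq_zero] at this
  exact this.elim he.ne' hw0

/-- The two tight constraints at an extreme point `x` of the polar polygon span an edge of `Q`. The
primitive normal `η` of that edge satisfies the same two linear equations as `x`, so `x = η`. -/
lemma extremePoints_polarPolygon_subset {Q : Set V} (hQ : IsLReflexive 1 Q) :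
    extremePoints ℝ (polarPolygon Q) ⊆ latticePts := by
  intro x hx
  obtain ⟨A, rfl, -⟩ := hQ.polygon
  obtain ⟨v, hvA, w, hwA, hne, hv, hw⟩ := exists_active_pair hx
  have hx0 : x ≠ 0 := by
    rintro rfl
    simp [dotV] at hv
  have hmem : ∀ u ∈ A, dotV x u = -1 → u ∈ {y ∈ convexHull ℝ (A : Set V) |
      ∀ z ∈ convexHull ℝ (A : Set V), dotV x y ≤ dotV x z} := fun u hu h =>
    ⟨subset_convexHull ℝ _ hu, fun z hz => h.le.trans ((extremePoints_subset hx) z hz)⟩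
  obtain ⟨η, hη, hF⟩ := hQ.edge_cond _
    ⟨⟨x, hx0, rfl⟩, v, hmem v hvA hv, w, hmem w hwA hw, hne⟩
  have hηv : dotV η v = -1 := by simpa using hF (hmem v hvA hv)
  have hηw : dotV η w = -1 := by simpa using hF (hmem w hwA hw)
  simp only [dotV] at hv hw hηv hηw
  have hdet : v.1 * w.2 - v.2 * w.1 ≠ 0 := by
    intro hd
    refine hne (Prod.ext ?_ ?_)
    · linear_combination v.1 * hw - w.1 * hv - x.2 * hd
    · linear_combination v.2 * hw - w.2 * hv + x.1 * hd
  have : x = η := by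
    refine Prod.ext (mul_left_cancel₀ hdet ?_) (mul_left_cancel₀ hdet ?_)
    · linear_combination w.2 * (hv - hηv) - v.2 * (hw - hηw)
    · linear_combination v.1 * (hw - hηw) - w.1 * (hv - hηv)
  exact this ▸ hη.1

/-- **Twelve-Point Theorem for reflexive polygons.** -/
theorem twelve_point_theorem_reflexive (Q : Set V) (hQ : IsLReflexive 1 Q) :
    (frontier Q ∩ latticePts).ncard + (frontier (polarPolygon Q) ∩ latticePts).ncard = 12 := by
  have hcomp : IsCompact Q := by
    obtain ⟨A, rfl, -⟩ := hQ.polygon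
    exact A.finite_toSet.isCompact_convexHull ℝ
  have hconv : Convex ℝ Q := by
    obtain ⟨A, rfl, -⟩ := hQ.polygon
    exact convex_convexHull ℝ _
  have h0 := hQ.zero_mem_interior
  have hPcomp := isCompact_polarPolygon h0
  have hfS := finite_latticeEmbed_preimage hcomp.isBounded
  have hfT := finite_latticeEmbed_preimage hPcomp.isBounded
  have hS : ∀ p, p ∈ hfS.toFinset ↔ latticeEmbed p ∈ Q := fun p => hfS.mem_toFinset
  have hT : ∀ q, q ∈ hfT.toFinset ↔ latticeEmbed q ∈ polarPolygon Q := fun q => hfT.mem_toFinset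
  have hpair : DualPair hfS.toFinset hfT.toFinset := by
    constructor
    · intro p
      constructor
      · intro hp q hq
        rw [← neg_one_le_dotV_latticeEmbed, dotV_comm]
        exact (hT q).1 hq _ ((hS p).1 hp)
      · intro H
        rw [hS]
        by_contra hp
        obtain ⟨x, hx, hlt⟩ := exists_mem_polarPolygon_lt hcomp.isClosed hconv
          (interior_subset h0) hp
        refine hlt.not_ge (dotV_ge_of_extremePoints hPcomp (convex_polarPolygon Q) ?_ x hx)
        intro y hy
        obtain ⟨q, rfl⟩ := extremePoints_polarPolygon_subset hQ hy
        exact (neg_one_le_dotV_latticeEmbed p q).2 (H q ((hT q).2 (extremePoints_subset hy)))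
    · intro q
      constructor
      · intro hq p hp
        rw [← neg_one_le_dotV_latticeEmbed, dotV_comm]
        exact (hT q).1 hq _ ((hS p).1 hp)
      · intro H
        rw [hT]
        refine dotV_ge_of_extremePoints hcomp hconv fun y hy => ?_
        obtain ⟨p, rfl⟩ := (hQ.vertices_primitive y hy).1
        rw [dotV_comm]
        exact (neg_one_le_dotV_latticeEmbed p q).2 (H p ((hS p).2 (extremePoints_subset hy)))
  have h1 := ncard_frontier hpair hcomp.isClosed h0 hS fun q hq => (hT q).1 hq
  have h2 := ncard_frontier hpair.symm hPcomp.isClosed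
    (zero_mem_interior_polarPolygon hcomp.isBounded) hT fun p hp y hy => by
      rw [dotV_comm]
      exact hy _ ((hS p).1 hp)
  have h3 := hpair.card_add_card
  omega
end
end

section
/- Classification of reflexive polygons: Let Q ⊆ ℝ² be a reflexive polygon with respect to ℤ². Then Q has at most 6 vertices, and there is exactly one index i ∈ {1,…,16} for which some A ∈ GL₂(ℤ) maps Q onto 𝒬ᵢ (i.e. the image of Q under the linear map given by A equals 𝒬ᵢ), where 𝒬₁ = conv{(1,0),(0,1),(−1,−1)}, 𝒬₂ = conv{(1,0),(0,1),(−2,−1)}, 𝒬₃ = conv{(1,0),(0,1),(−1,0),(0,−1)}, 𝒬₄ = conv{(1,0),(0,1),(−1,0),(−1,−1)}, 𝒬₅ = conv{(1,0),(0,1),(−1,1),(−1,−1)}, 𝒬₆ = conv{(1,0),(0,1),(−1,0),(−1,−1),(0,−1)}, 𝒬₇ = conv{(1,−1),(−1,2),(−1,−1)}, 𝒬₈ = conv{(1,0),(−1,1),(−1,−1),(1,−1)}, 𝒬₉ = conv{(1,0),(0,1),(−1,0),(−1,−1),(1,−1)}, 𝒬₁₀ = conv{(1,0),(1,1),(0,1),(−1,0),(−1,−1),(0,−1)},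 𝒬₁₁ = conv{(−1,−1),(1,−1),(1,0),(0,1),(−1,1)}, 𝒬₁₂ = conv{(−1,−1),(0,−1),(1,0),(−1,2)}, 𝒬₁₃ = conv{(−1,−1),(1,−1),(1,0),(−1,2)}, 𝒬₁₄ = conv{(−1,−1),(1,−1),(1,1),(−1,1)}, 𝒬₁₅ = conv{(−1,−1),(1,−1),(−1,3)}, 𝒬₁₆ = conv{(−1,−1),(2,−1),(−1,2)}. -/
/-!
A reflexive polygon `Q` has no interior lattice point other than the origin (`notMem_interior`): on
the boundary point in the direction of such a point, either the point is a vertex, hence primitive,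
or it lies on an edge, where an integral functional equals `-1`. Consequently the triangle `0, a, b`
on two lattice points of `Q` has no lattice point off the side `[a, b]` except `0`, and reduction
modulo `a, b` shows that `det (a, b)` divides both coordinates of `b - a` whenever it is nonzero
(`det_dvd_aux`, `adm_latZ`). Moreover `Q` is the convex hull of its nonzero lattice points
(`hull_latZ`).

Choose lattice points `a, b` of `Q` with maximal determinant `d`. Then `a` and `w = (b - a) / d` form
a basis of `ℤ²`, and in this basis `Q` contains `(1, 0)`, `(1, 1)` and `(1, d)` (`exists_normal`).
Maximality of `d` confines every lattice point to a small box, and the divisibility condition leaves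
only the points `(1, j)` with `0 ≤ j ≤ d` and eight further candidates (`AdmNormal.classify`), while
`d ≤ 4` because `Q` has a point with negative first coordinate (`AdmNormal.d_le`). The remaining
`4 · 2⁸` configurations are checked by computation in the kernel (`enumeration`), each one satisfying
the necessary conditions being mapped onto a standard polygon by an explicit matrix.

For uniqueness, a matrix carrying `Q` onto `Q'` induces, through its transpose, a linear bijection
between the lattice points of the polar polygons. Three elementary counts on the latter (`invt`)
separate the sixteen standard polygons. The bound on the number of vertices follows since each
standard polygon is the convex hull of at most six points.
-/

open Set

noncomputable section

/-- The linear map on ℝ² given by an integer 2×2 matrix. -/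
def mapGL (A : Matrix (Fin 2) (Fin 2) ℤ) (x : V) : V :=
  ((A 0 0 : ℝ) * x.1 + (A 0 1 : ℝ) * x.2, (A 1 0 : ℝ) * x.1 + (A 1 1 : ℝ) * x.2)

/-- The sixteen reflexive polygons 𝒬₁, …, 𝒬₁₆. -/
def Qstd : Fin 16 → Set V := ![
  convexHull ℝ {(1, 0), (0, 1), (-1, -1)},
  convexHull ℝ {(1, 0), (0, 1), (-2, -1)},
  convexHull ℝ {(1, 0), (0, 1), (-1, 0), (0, -1)},
  convexHull ℝ {(1, 0), (0, 1), (-1, 0), (-1, -1)},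
  convexHull ℝ {(1, 0), (0, 1), (-1, 1), (-1, -1)},
  convexHull ℝ {(1, 0), (0, 1), (-1, 0), (-1, -1), (0, -1)},
  convexHull ℝ {(1, -1), (-1, 2), (-1, -1)},
  convexHull ℝ {(1, 0), (-1, 1), (-1, -1), (1, -1)},
  convexHull ℝ {(1, 0), (0, 1), (-1, 0), (-1, -1), (1, -1)},
  convexHull ℝ {(1, 0), (1, 1), (0, 1), (-1, 0), (-1, -1), (0, -1)},
  convexHull ℝ {(-1, -1), (1, -1), (1, 0), (0, 1), (-1, 1)},
  convexHull ℝ {(-1, -1), (0, -1), (1, 0), (-1, 2)},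
  convexHull ℝ {(-1, -1), (1, -1), (1, 0), (-1, 2)},
  convexHull ℝ {(-1, -1), (1, -1), (1, 1), (-1, 1)},
  convexHull ℝ {(-1, -1), (1, -1), (-1, 3)},
  convexHull ℝ {(-1, -1), (2, -1), (-1, 2)}]

/-- The determinant of two lattice vectors. -/
def det2 (a b : ℤ × ℤ) : ℤ := a.1 * b.2 - a.2 * b.1

/-- The lattice vectors listed in the definition of `Qstd`, as integer data. -/
def verts : Fin 16 → List (ℤ × ℤ) := ![
  [(1, 0), (0, 1), (-1, -1)],
  [(1, 0), (0, 1), (-2, -1)],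
  [(1, 0), (0, 1), (-1, 0), (0, -1)],
  [(1, 0), (0, 1), (-1, 0), (-1, -1)],
  [(1, 0), (0, 1), (-1, 1), (-1, -1)],
  [(1, 0), (0, 1), (-1, 0), (-1, -1), (0, -1)],
  [(1, -1), (-1, 2), (-1, -1)],
  [(1, 0), (-1, 1), (-1, -1), (1, -1)],
  [(1, 0), (0, 1), (-1, 0), (-1, -1), (1, -1)],
  [(1, 0), (1, 1), (0, 1), (-1, 0), (-1, -1), (0, -1)],
  [(-1, -1), (1, -1), (1, 0), (0, 1), (-1, 1)],
  [(-1, -1), (0, -1), (1, 0), (-1, 2)],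
  [(-1, -1), (1, -1), (1, 0), (-1, 2)],
  [(-1, -1), (1, -1), (1, 1), (-1, 1)],
  [(-1, -1), (1, -1), (-1, 3)],
  [(-1, -1), (2, -1), (-1, 2)]]

lemma Qstd_eq (i : Fin 16) : Qstd i = convexHull ℝ (toV '' {v | v ∈ verts i}) := by
  have h : ∀ (a : ℤ × ℤ) (l : List (ℤ × ℤ)),
      toV '' {v | v ∈ a :: l} = insert (toV a) (toV '' {v | v ∈ l}) := by
    intro a l
    rw [← Set.image_insert_eq]
    congr 1
    ext v
    simp
  have h0 : ∀ a : ℤ × ℤ, toV '' {v | v ∈ [a]} = {toV a} := by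
    intro a
    simp
  fin_cases i <;> simp [Qstd, verts, h, toV, -List.mem_cons]

/-- The action of an integer matrix on the lattice. -/
def actZ (A : Matrix (Fin 2) (Fin 2) ℤ) (p : ℤ × ℤ) : ℤ × ℤ :=
  (A 0 0 * p.1 + A 0 1 * p.2, A 1 0 * p.1 + A 1 1 * p.2)

lemma mapGL_toV (A : Matrix (Fin 2) (Fin 2) ℤ) (p : ℤ × ℤ) :
    mapGL A (toV p) = toV (actZ A p) := by
  simp [mapGL, toV, actZ]

lemma mapGL_mul (A B : Matrix (Fin 2) (Fin 2) ℤ) (x : V) :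
    mapGL (A * B) x = mapGL A (mapGL B x) := by
  simp only [mapGL, Matrix.mul_apply, Fin.sum_univ_two, Int.cast_add, Int.cast_mul]
  ext <;> simp only <;> ring

lemma mapGL_one (x : V) : mapGL 1 x = x := by
  simp [mapGL]

lemma mapGL_image_convexHull (A : Matrix (Fin 2) (Fin 2) ℤ) (S : Set (ℤ × ℤ)) :
    mapGL A '' convexHull ℝ (toV '' S) = convexHull ℝ (toV '' (actZ A '' S)) := by
  let f : V →ₗ[ℝ] V :=
    { toFun := mapGL A
      map_add' := by intro x y; simp only [mapGL]; ext <;> simp <;> ring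
      map_smul' := by intro c x; simp only [mapGL]; ext <;> simp <;> ring }
  have h : mapGL A = f := rfl
  rw [h, f.image_convexHull, ← h, Set.image_image, Set.image_image]
  simp only [mapGL_toV]

/-! ### Uniqueness -/

/-- The lattice points of the polar polygon. -/
def polarZ (Q : Set V) : Set (ℤ × ℤ) := {u | ∀ q ∈ Q, -1 ≤ dotV (toV u) q}

/-- Three `GL₂(ℤ)`-invariants of a set of lattice points: its size, the number of its points that
are not midpoints of two other points of the set, and the number of points whose negative also
belongs to the set. -/
def invt (S : Set (ℤ × ℤ)) : ℕ × ℕ × ℕ :=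
  (S.ncard, {p | p ∈ S ∧ ∀ q ∈ S, ∀ r ∈ S, q + r = p + p → q = p}.ncard,
    {p | p ∈ S ∧ -p ∈ S}.ncard)

lemma invt_preimage (e : (ℤ × ℤ) ≃+ (ℤ × ℤ)) (S : Set (ℤ × ℤ)) : invt (e ⁻¹' S) = invt S := by
  have key : ∀ T : Set (ℤ × ℤ), (e ⁻¹' T).ncard = T.ncard := fun T =>
    Set.ncard_preimage_of_injective_subset_range e.injective (by simp)
  have h1 : {p | p ∈ e ⁻¹' S ∧ ∀ q ∈ e ⁻¹' S, ∀ r ∈ e ⁻¹' S, q + r = p + p → q = p}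
      = e ⁻¹' {p | p ∈ S ∧ ∀ q ∈ S, ∀ r ∈ S, q + r = p + p → q = p} := by
    ext p
    simp only [Set.mem_preimage, Set.mem_ofPred_eq]
    refine and_congr_right fun _ => ⟨fun h q hq r hr hqr => ?_, fun h q hq r hr hqr => ?_⟩
    · have := h (e.symm q) (by simpa using hq) (e.symm r) (by simpa using hr)
        (e.injective (by simpa using hqr))
      simp [← this]
    · exact e.injective (h _ hq _ hr (by rw [← map_add, hqr, map_add]))
  have h2 : {p | p ∈ e ⁻¹' S ∧ -p ∈ e ⁻¹' S} = e ⁻¹' {p | p ∈ S ∧ -p ∈ S} := by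
    ext p
    simp
  rw [invt, h1, h2, key, key, key, invt]

/-- The transpose of a matrix in `GL₂(ℤ)`, acting on the lattice. -/
def transposeEquiv (A : Matrix (Fin 2) (Fin 2) ℤ) (h : A.det = 1 ∨ A.det = -1) :
    (ℤ × ℤ) ≃+ (ℤ × ℤ) where
  toFun u := (A 0 0 * u.1 + A 1 0 * u.2, A 0 1 * u.1 + A 1 1 * u.2)
  invFun u := (A.det * (A 1 1 * u.1 - A 1 0 * u.2), A.det * (A 0 0 * u.2 - A 0 1 * u.1))
  left_inv u := by
    have h2 : A.det * (A 0 0 * A 1 1 - A 0 1 * A 1 0) = 1 := by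
      rw [← Matrix.det_fin_two]; rcases h with h | h <;> simp [h]
    ext
    · simp only; linear_combination u.1 * h2
    · simp only; linear_combination u.2 * h2
  right_inv u := by
    have h2 : A.det * (A 0 0 * A 1 1 - A 0 1 * A 1 0) = 1 := by
      rw [← Matrix.det_fin_two]; rcases h with h | h <;> simp [h]
    ext
    · simp only; linear_combination u.1 * h2
    · simp only; linear_combination u.2 * h2
  map_add' u v := by ext <;> simp <;> ring

lemma invt_polarZ_image (A : Matrix (Fin 2) (Fin 2) ℤ) (h : A.det = 1 ∨ A.det = -1) (Q : Set V) :
    invt (polarZ (mapGL A '' Q)) = invt (polarZ Q) := by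
  rw [← invt_preimage (transposeEquiv A h) (polarZ Q)]
  congr 1
  ext u
  simp only [polarZ, Set.forall_mem_image, Set.mem_preimage, Set.mem_ofPred_eq]
  refine forall₂_congr fun q _ => ?_
  have : dotV (toV u) (mapGL A q) = dotV (toV (transposeEquiv A h u)) q := by
    simp only [dotV, toV, mapGL, transposeEquiv, AddEquiv.coe_mk, Equiv.coe_fn_mk]
    push_cast
    ring
  rw [this]

/-- The lattice points of the polar polygon of `Qstd i`, as an explicit finite set. -/
def polarFin (i : Fin 16) : Finset (ℤ × ℤ) :=
  (Finset.Icc (-3) 3 ×ˢ Finset.Icc (-3) 3).filter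
    fun u => ∀ v ∈ verts i, -1 ≤ u.1 * v.1 + u.2 * v.2

lemma polarZ_Qstd (i : Fin 16) : polarZ (Qstd i) = (polarFin i : Set (ℤ × ℤ)) := by
  have h1 : ∀ u : ℤ × ℤ, u ∈ polarZ (Qstd i) ↔ ∀ v ∈ verts i, -1 ≤ u.1 * v.1 + u.2 * v.2 := by
    intro u
    have hd : ∀ v : ℤ × ℤ, -1 ≤ dotV (toV u) (toV v) ↔ -1 ≤ u.1 * v.1 + u.2 * v.2 := by
      intro v
      simp only [dotV, toV]
      exact_mod_cast Iff.rfl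
    constructor
    · intro h v hv
      rw [← hd]
      refine h _ ?_
      rw [Qstd_eq]
      exact subset_convexHull ℝ _ ⟨v, hv, rfl⟩
    · intro h
      have hc : Convex ℝ {q : V | -1 ≤ dotV (toV u) q} := by
        apply convex_halfSpace_ge
        constructor
        · intro x y; simp [dotV]; ring
        · intro c x; simp [dotV]; ring
      intro q hq
      rw [Qstd_eq] at hq
      refine convexHull_min ?_ hc hq
      rintro _ ⟨v, hv, rfl⟩
      exact (hd v).2 (h v hv)
  ext u
  rw [h1, Finset.mem_coe, polarFin, Finset.mem_filter]
  refine ⟨fun h => ⟨?_, h⟩, fun h => h.2⟩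
  simp only [Finset.mem_product, Finset.mem_Icc]
  fin_cases i <;> simp [verts] at h <;> omega

/-- The values of `invt` on the sixteen polar polygons. -/
def invtTable : Fin 16 → ℕ × ℕ × ℕ := ![
  (10, 3, 7), (9, 3, 5), (9, 4, 9), (9, 4, 7), (8, 4, 5), (8, 5, 7), (7, 3, 3), (7, 4, 5),
  (7, 5, 5), (7, 6, 7), (6, 5, 5), (6, 4, 3), (5, 4, 3), (5, 4, 5), (5, 3, 3), (4, 4, 1)]

lemma invt_polarZ_Qstd (i : Fin 16) : invt (polarZ (Qstd i)) = invtTable i := by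
  have h : ∀ i, ((polarFin i).card,
      ((polarFin i).filter fun p => ∀ q ∈ polarFin i, ∀ r ∈ polarFin i,
        q + r = p + p → q = p).card,
      ((polarFin i).filter fun p => -p ∈ polarFin i).card) = invtTable i := by
    decide +kernel
  rw [← h i, polarZ_Qstd, invt]
  simp only [← Set.ncard_coe_finset, Finset.coe_filter, Finset.mem_coe]

lemma invtTable_injective : Function.Injective invtTable := by
  decide +kernel

lemma index_unique {Q : Set V} {i j : Fin 16} {A B : Matrix (Fin 2) (Fin 2) ℤ}
    (hA : A.det = 1 ∨ A.det = -1) (hAQ : mapGL A '' Q = Qstd i)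
    (hB : B.det = 1 ∨ B.det = -1) (hBQ : mapGL B '' Q = Qstd j) : i = j := by
  apply invtTable_injective
  rw [← invt_polarZ_Qstd, ← invt_polarZ_Qstd, ← hAQ, ← hBQ, invt_polarZ_image A hA,
    invt_polarZ_image B hB]

lemma ncard_extremePoints_le {Q : Set V} {i : Fin 16} {A : Matrix (Fin 2) (Fin 2) ℤ}
    (hA : A.det = 1 ∨ A.det = -1) (hAQ : mapGL A '' Q = Qstd i) :
    (Set.extremePoints ℝ Q).ncard ≤ 6 := by
  have hu : IsUnit A.det := by rcases hA with h | h <;> simp [h]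
  have hQ : Q = mapGL A⁻¹ '' Qstd i := by
    rw [← hAQ, Set.image_image]
    simp only [← mapGL_mul, Matrix.nonsing_inv_mul A hu, mapGL_one, Set.image_id']
  rw [Qstd_eq, mapGL_image_convexHull] at hQ
  have hl : ∀ i, (verts i).length ≤ 6 := by decide
  have hfin : {v | v ∈ verts i} = ((verts i).toFinset : Set (ℤ × ℤ)) := by
    ext; simp
  have hf : ({v | v ∈ verts i} : Set (ℤ × ℤ)).Finite := by
    rw [hfin]; exact Finset.finite_toSet _
  calc (Set.extremePoints ℝ Q).ncard
      ≤ (toV '' (actZ A⁻¹ '' {v | v ∈ verts i})).ncard := by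
        refine Set.ncard_le_ncard ?_ ((hf.image _).image _)
        rw [hQ]
        exact extremePoints_convexHull_subset
    _ ≤ {v | v ∈ verts i}.ncard :=
        (Set.ncard_image_le (hf.image _)).trans (Set.ncard_image_le hf)
    _ ≤ 6 := by
        rw [hfin, Set.ncard_coe_finset]
        exact (List.toFinset_card_le _).trans (hl i)

/-! ### Lattice points of a reflexive polygon -/

/-- The combinatorial conditions on a set `L` of lattice vectors used in the classification:
`L` consists of primitive vectors, it lies in no closed half-plane through the origin, and any two
independent `a, b ∈ L` lie on a lattice line at lattice distance one from the origin. -/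
structure Adm (L : Set (ℤ × ℤ)) : Prop where
  prim : ∀ (p : ℤ × ℤ) (k : ℤ), 2 ≤ k → (k * p.1, k * p.2) ∉ L
  dvd : ∀ a ∈ L, ∀ b ∈ L, det2 a b ≠ 0 → det2 a b ∣ b.1 - a.1 ∧ det2 a b ∣ b.2 - a.2
  neg : ∀ u : ℤ × ℤ, u ≠ 0 → ∃ p ∈ L, u.1 * p.1 + u.2 * p.2 < 0

/-- The nonzero lattice points of `Q`. -/
def latZ (Q : Set V) : Set (ℤ × ℤ) := {p | p ≠ 0 ∧ toV p ∈ Q}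

lemma toV_zero : toV 0 = 0 := by simp [toV]


lemma isCompact_of_reflexive {Q : Set V} (hQ : IsLReflexive 1 Q) : IsCompact Q := by
  obtain ⟨A, rfl, -⟩ := hQ.polygon
  exact A.finite_toSet.isCompact_convexHull ℝ

lemma convex_of_reflexive {Q : Set V} (hQ : IsLReflexive 1 Q) : Convex ℝ Q := by
  obtain ⟨A, rfl, -⟩ := hQ.polygon
  exact convex_convexHull ℝ _

lemma exists_scale_mem {Q : Set V} {y : V} (hy : y ∈ interior Q) :
    ∃ t : ℝ, 1 < t ∧ t • y ∈ Q := by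
  have hc : Filter.Tendsto (fun t : ℝ => t • y) (nhds 1) (nhds y) := by
    have : Continuous fun t : ℝ => t • y := by fun_prop
    simpa using this.tendsto 1
  have h1 : ∀ᶠ t : ℝ in nhdsWithin 1 (Set.Ioi 1), t • y ∈ Q :=
    (hc.eventually (mem_interior_iff_mem_nhds.1 hy)).filter_mono nhdsWithin_le_nhds
  obtain ⟨t, h2, h3⟩ := (h1.and self_mem_nhdsWithin).exists
  exact ⟨t, h3, h2⟩

/-- The farthest point `x = t • y` of `Q` in the direction of a nonzero interior point `y` of `Q`,
together with a functional exposing a face of `Q` through `x`. -/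
lemma exists_supporting {Q : Set V} (hQ : IsLReflexive 1 Q) {y : V} (hy : y ∈ interior Q)
    (hy0 : y ≠ 0) :
    ∃ (t : ℝ) (f : V →L[ℝ] ℝ), 1 < t ∧ t • y ∈ Q ∧ 0 < f (t • y) ∧
      ∀ z ∈ Q, f z ≤ f (t • y) := by
  have hcp := isCompact_of_reflexive hQ
  have hcv := convex_of_reflexive hQ
  obtain ⟨t₁, ht₁, ht₁Q⟩ := exists_scale_mem hy
  have hcont : Continuous fun t : ℝ => t • y := by fun_prop
  let T : Set ℝ := {t : ℝ | 0 ≤ t ∧ t • y ∈ Q}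
  have hTc : IsCompact T := by
    have hcl : IsClosed T := isClosed_Ici.inter (hcp.isClosed.preimage hcont)
    obtain ⟨M, hM⟩ := hcp.isBounded.exists_norm_le
    refine (isCompact_Icc (a := (0 : ℝ)) (b := M / ‖y‖)).of_isClosed_subset hcl ?_
    rintro t ⟨ht0, htQ⟩
    refine ⟨ht0, ?_⟩
    have := hM _ htQ
    rw [norm_smul, Real.norm_of_nonneg ht0] at this
    exact (le_div_iff₀ (norm_pos_iff.2 hy0)).2 this
  obtain ⟨t, ⟨ht0, htQ⟩, hmax⟩ :=
    hTc.exists_isMaxOn ⟨t₁, by linarith, ht₁Q⟩ continuousOn_id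
  have htm : ∀ s : ℝ, 0 ≤ s → s • y ∈ Q → s ≤ t := fun s h1 h2 => hmax (a := s) ⟨h1, h2⟩
  have ht : 1 < t := lt_of_lt_of_le ht₁ (htm t₁ (by linarith) ht₁Q)
  have hni : t • y ∉ interior Q := by
    intro h
    obtain ⟨s, hs, hsQ⟩ := exists_scale_mem h
    rw [smul_smul] at hsQ
    have := htm (s * t) (by positivity) hsQ
    nlinarith
  obtain ⟨f, hf⟩ := geometric_hahn_banach_open_point hcv.interior isOpen_interior hni
  refine ⟨t, f, ht, htQ, by simpa using hf 0 hQ.zero_mem_interior, fun z hz => ?_⟩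
  have hcl : z ∈ closure (interior Q) := by
    rw [hcv.closure_interior_eq_closure_of_nonempty_interior ⟨0, hQ.zero_mem_interior⟩]
    exact subset_closure hz
  have hsub : closure (interior Q) ⊆ {z | f z ≤ f (t • y)} :=
    closure_minimal (fun w hw => (hf w hw).le) (isClosed_le f.continuous continuous_const)
  exact hsub hcl

/-- A reflexive polygon has no interior lattice point besides the origin: the ray through such a
point would leave `Q` either at a non-primitive vertex or on an edge, where the integral functional
equal to `-1` on the edge would take a value in the open interval `(-1, 0)` at the point. -/
lemma notMem_interior_s2 {Q : Set V} (hQ : IsLReflexive 1 Q) {p : ℤ × ℤ} (hp : p ≠ 0) :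
    toV p ∉ interior Q := by
  intro hpi
  have hp0 : toV p ≠ 0 := by
    rw [← toV_zero]; exact fun h => hp (toV_injective h)
  obtain ⟨t, f, ht, htQ, hfpos, hfm⟩ := exists_supporting hQ hpi hp0
  set x := t • toV p with hx
  have hf0 : f ≠ 0 := by
    rintro rfl
    simp at hfpos
  by_cases hone : ∃ y ∈ Q, f y = f x ∧ y ≠ x
  · obtain ⟨y, hyQ, hyf, hyx⟩ := hone
    let η : V := (-f (1, 0), -f (0, 1))
    have hη : ∀ z, dotV η z = -f z := by
      intro z
      have hz : z = z.1 • ((1, 0) : V) + z.2 • ((0, 1) : V) := by ext <;> simp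
      conv_rhs => rw [hz, map_add, map_smul, map_smul]
      simp only [dotV, η, smul_eq_mul]
      ring
    have hη0 : η ≠ 0 := by
      intro h
      apply hf0
      ext
      all_goals
        have := hη
        simp only [h, dotV, Prod.fst_zero, Prod.snd_zero, zero_mul, add_zero] at this
        simp
        linarith [this (1, 0), this (0, 1)]
    obtain ⟨η', hη'p, hη'⟩ := hQ.edge_cond {y ∈ Q | ∀ z ∈ Q, dotV η y ≤ dotV η z}
      ⟨⟨η, hη0, rfl⟩, x, ⟨htQ, fun z hz => by rw [hη, hη]; linarith [hfm z hz]⟩,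
        y, ⟨hyQ, fun z hz => by rw [hη, hη, hyf]; linarith [hfm z hz]⟩, hyx.symm⟩
    have hxη : dotV η' x = -((1 : ℕ) : ℝ) :=
      hη' ⟨htQ, fun z hz => by rw [hη, hη]; linarith [hfm z hz]⟩
    obtain ⟨⟨m, hm⟩, -, -⟩ := hη'p
    rw [hm, hx] at hxη
    have hk : t * ((m.1 * p.1 + m.2 * p.2 : ℤ) : ℝ) = -1 := by
      simp only [dotV, toV, Prod.smul_mk, smul_eq_mul] at hxη
      push_cast at hxη ⊢
      linarith
    have h1 : ((m.1 * p.1 + m.2 * p.2 : ℤ) : ℝ) < 0 := by nlinarith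
    have h2 : (-1 : ℝ) < ((m.1 * p.1 + m.2 * p.2 : ℤ) : ℝ) := by nlinarith
    have h3 : m.1 * p.1 + m.2 * p.2 < 0 := by exact_mod_cast h1
    have h4 : -1 < m.1 * p.1 + m.2 * p.2 := by exact_mod_cast h2
    omega
  · push Not at hone
    have hext : x ∈ Set.extremePoints ℝ Q := by
      refine mem_extremePoints_iff_left.2 ⟨htQ, fun y hy z hz hxyz => ?_⟩
      refine hone y hy (le_antisymm (hfm y hy) ?_)
      obtain ⟨a, b, ha, hb, hab, hxe⟩ := hxyz
      have h1 := congrArg f hxe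
      simp only [map_add, map_smul, smul_eq_mul] at h1
      have h2 := hfm z hz
      have h3 := hfm y hy
      have : a * f x ≤ a * f y := by
        have : b * f z ≤ b * f x := by gcongr
        have : f x = a * f x + b * f x := by rw [← add_mul, hab, one_mul]
        linarith
      exact le_of_mul_le_mul_left this ha
    obtain ⟨-, -, hseg⟩ := hQ.vertices_primitive x hext
    have hmem : toV p ∈ segment ℝ (0 : V) x ∩ latticePts := by
      refine ⟨⟨1 - t⁻¹, t⁻¹, ?_, by positivity, by ring, ?_⟩, p, rfl⟩
      · have := inv_le_one_of_one_le₀ ht.le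
        linarith
      · rw [hx, smul_zero, zero_add, smul_smul, inv_mul_cancel₀ (by positivity), one_smul]
    rw [hseg] at hmem
    rcases hmem with h | h
    · exact hp0 h
    · have h1 : (t - 1) • toV p = 0 := by
        rw [sub_smul, one_smul, ← hx, ← (show toV p = x from h), sub_self]
      rcases smul_eq_zero.1 h1 with h2 | h2
      · linarith
      · exact hp0 h2

/-- A lattice point strictly below the segment `[a, b]` in the cone spanned by two lattice points
`a, b ∈ Q` is the origin. -/
lemma eq_zero_of_mem_triangle {Q : Set V} (hQ : IsLReflexive 1 Q) {a b : ℤ × ℤ}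
    (ha : toV a ∈ Q) (hb : toV b ∈ Q) {α β : ℝ} (hα : 0 ≤ α) (hβ : 0 ≤ β) (hαβ : α + β < 1)
    {p : ℤ × ℤ} (hp : toV p = α • toV a + β • toV b) : p = 0 := by
  by_contra hp0
  have hs : 0 < α + β := by
    rcases (add_nonneg hα hβ).lt_or_eq with h | h
    · exact h
    · have h1 : α = 0 := by linarith
      have h2 : β = 0 := by linarith
      rw [h1, h2, zero_smul, zero_smul, add_zero, ← toV_zero] at hp
      exact absurd (toV_injective hp) hp0
  have hcv := convex_of_reflexive hQ
  refine notMem_interior_s2 hQ hp0 ?_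
  have hq : (α / (α + β)) • toV a + (β / (α + β)) • toV b ∈ Q :=
    hcv ha hb (by positivity) (by positivity) (by field_simp)
  have := hcv.combo_interior_self_mem_interior hQ.zero_mem_interior hq
    (a := 1 - (α + β)) (b := α + β) (by linarith) hs.le (by ring)
  rw [smul_zero, zero_add, smul_add, smul_smul, smul_smul, mul_div_cancel₀ _ hs.ne',
    mul_div_cancel₀ _ hs.ne', ← hp] at this
  exact this

lemma eq_zero_of_det {Q : Set V} (hQ : IsLReflexive 1 Q) {a b p : ℤ × ℤ}
    (ha : toV a ∈ Q) (hb : toV b ∈ Q) (hd : 0 < det2 a b) (h1 : 0 ≤ det2 p b)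
    (h2 : 0 ≤ det2 a p) (h3 : det2 p b + det2 a p < det2 a b) : p = 0 := by
  have hd' : (0 : ℝ) < det2 a b := by exact_mod_cast hd
  refine eq_zero_of_mem_triangle hQ ha hb (α := det2 p b / det2 a b) (β := det2 a p / det2 a b)
    (div_nonneg (by exact_mod_cast h1) hd'.le) (div_nonneg (by exact_mod_cast h2) hd'.le) ?_ ?_
  · rw [← add_div, div_lt_one hd']
    exact_mod_cast h3
  · have hne := hd'.ne'
    simp only [det2] at hne ⊢
    push_cast at hne ⊢
    simp only [toV, Prod.smul_mk, Prod.mk_add_mk, smul_eq_mul]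
    ext <;> simp only
    · rw [div_mul_eq_mul_div, div_mul_eq_mul_div, ← add_div, eq_div_iff hne]
      ring
    · rw [div_mul_eq_mul_div, div_mul_eq_mul_div, ← add_div, eq_div_iff hne]
      ring

/-- The linear functional equal to `det2 a b` at both `a` and `b` takes only multiples of `det2 a b`
as values on the lattice.
Otherwise reducing a suitable `z` modulo `a` and `b`, possibly followed by the reflection
`z ↦ a + b - z`, produces a nonzero lattice point strictly below the segment `[a, b]`. -/
lemma det_dvd_aux {Q : Set V} (hQ : IsLReflexive 1 Q) {a b : ℤ × ℤ}
    (ha : toV a ∈ Q) (hb : toV b ∈ Q) (hd : 0 < det2 a b) (z : ℤ × ℤ) :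
    det2 a b ∣ det2 z b + det2 a z := by
  set d := det2 a b with hdd
  set X := det2 z b with hX
  set Y := det2 a z with hY
  have hx0 := Int.emod_nonneg X hd.ne'
  have hx1 := Int.emod_lt_of_pos X hd
  have hy0 := Int.emod_nonneg Y hd.ne'
  have hy1 := Int.emod_lt_of_pos Y hd
  obtain ⟨m, hXe⟩ : ∃ m, X % d + d * m = X := ⟨_, Int.emod_add_mul_ediv X d⟩
  obtain ⟨n, hYe⟩ : ∃ n, Y % d + d * n = Y := ⟨_, Int.emod_add_mul_ediv Y d⟩
  let z' : ℤ × ℤ := (z.1 - m * a.1 - n * b.1, z.2 - m * a.2 - n * b.2)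
  have e1 : det2 z' b = X % d := by
    have : det2 z' b = X - d * m := by
      simp only [hX, hdd, det2, z']; ring
    linarith
  have e2 : det2 a z' = Y % d := by
    have : det2 a z' = Y - d * n := by
      simp only [hY, hdd, det2, z']; ring
    linarith
  have hsum : X % d + Y % d = 0 ∨ X % d + Y % d = d := by
    rcases lt_trichotomy (X % d + Y % d) d with h | h | h
    · left
      have hz : z' = 0 := eq_zero_of_det hQ ha hb hd (by omega) (by omega) (by omega)
      rw [← e1, ← e2, hz]
      simp [det2]
    · exact Or.inr h
    · exfalso
      let z'' : ℤ × ℤ := (a.1 + b.1 - z'.1, a.2 + b.2 - z'.2)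
      have f1 : det2 z'' b = d - X % d := by
        rw [← e1, hdd]; simp only [det2, z'']; ring
      have f2 : det2 a z'' = d - Y % d := by
        rw [← e2, hdd]; simp only [det2, z'']; ring
      have hz : z'' = 0 := eq_zero_of_det hQ ha hb hd (by omega) (by omega) (by omega)
      rw [hz] at f1
      simp [det2] at f1
      omega
  rw [← hXe, ← hYe]
  have : X % d + d * m + (Y % d + d * n)
      = (X % d + Y % d) + d * (m + n) := by ring
  rw [this]
  rcases hsum with h | h <;> rw [h]
  · simp
  · exact Dvd.intro (1 + (m + n)) (by ring)

lemma adm_latZ {Q : Set V} (hQ : IsLReflexive 1 Q)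
    (hull : Q = convexHull ℝ (toV '' latZ Q)) : Adm (latZ Q) where
  prim p k hk := by
    rintro ⟨h0, hm⟩
    have hk' : (2 : ℝ) ≤ k := by exact_mod_cast hk
    have : p = 0 := by
      refine eq_zero_of_mem_triangle hQ hm hm (α := (k : ℝ)⁻¹) (β := 0) (by positivity) le_rfl
        ?_ ?_
      · rw [add_zero]
        exact inv_lt_one_of_one_lt₀ (by linarith)
      · have : (k : ℝ) ≠ 0 := by positivity
        ext <;> simp [toV] <;> field_simp
    apply h0
    simp [this]
  dvd := by
    have key : ∀ a ∈ latZ Q, ∀ b ∈ latZ Q, 0 < det2 a b →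
        det2 a b ∣ b.1 - a.1 ∧ det2 a b ∣ b.2 - a.2 := by
      intro a ha b hb hd
      constructor
      · have := det_dvd_aux hQ ha.2 hb.2 hd (0, 1)
        have e : det2 (0, 1) b + det2 a (0, 1) = -(b.1 - a.1) := by simp [det2]; ring
        rwa [e, dvd_neg] at this
      · have := det_dvd_aux hQ ha.2 hb.2 hd (1, 0)
        have e : det2 (1, 0) b + det2 a (1, 0) = b.2 - a.2 := by simp [det2]; ring
        rwa [e] at this
    intro a ha b hb hd
    rcases lt_or_gt_of_ne hd with h | h
    · have e : det2 a b = -det2 b a := by simp only [det2]; ring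
      have := key b hb a ha (by omega)
      rw [e, neg_dvd, neg_dvd, ← neg_sub a.1, ← neg_sub a.2, dvd_neg, dvd_neg]
      exact this
    · exact key a ha b hb h
  neg u hu := by
    by_contra! hcon
    -- Otherwise `Q` lies in the closed half-plane `u ≥ 0`, whose interior omits the origin.
    have hsub : Q ⊆ {q : V | 0 ≤ dotV (toV u) q} := by
      have hc : Convex ℝ {q : V | 0 ≤ dotV (toV u) q} := by
        apply convex_halfSpace_ge
        constructor
        · intro x y; simp [dotV]; ring
        · intro c x; simp [dotV]; ring
      conv_lhs => rw [hull]
      refine convexHull_min ?_ hc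
      rintro _ ⟨v, hv, rfl⟩
      have := hcon v hv
      simp only [Set.mem_ofPred_eq, dotV, toV]
      exact_mod_cast this
    have hcont : Filter.Tendsto (fun t : ℝ => t • (-toV u)) (nhds 0) (nhds 0) := by
      have : Continuous fun t : ℝ => t • (-toV u) := by fun_prop
      simpa using this.tendsto 0
    have h1 : ∀ᶠ t : ℝ in nhdsWithin 0 (Set.Ioi 0), t • (-toV u) ∈ Q :=
      (hcont.eventually (mem_interior_iff_mem_nhds.1 hQ.zero_mem_interior)).filter_mono
        nhdsWithin_le_nhds
    obtain ⟨t, h2, h3⟩ := (h1.and self_mem_nhdsWithin).exists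
    have h4 := hsub h2
    simp only [Set.mem_ofPred_eq, dotV, toV, Prod.smul_fst, Prod.smul_snd, Prod.fst_neg,
      Prod.snd_neg, smul_eq_mul] at h4
    have h3' : 0 < t := h3
    have h5 : 0 ≤ t * -((u.1 : ℝ) ^ 2 + (u.2 : ℝ) ^ 2) := by linarith
    have h6 : (u.1 : ℝ) ^ 2 + (u.2 : ℝ) ^ 2 ≤ 0 := by nlinarith
    have h7 : (u.1 : ℝ) = 0 := by nlinarith [sq_nonneg (u.1 : ℝ), sq_nonneg (u.2 : ℝ)]
    have h8 : (u.2 : ℝ) = 0 := by nlinarith [sq_nonneg (u.1 : ℝ), sq_nonneg (u.2 : ℝ)]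
    exact hu (Prod.ext (by exact_mod_cast h7) (by exact_mod_cast h8))

lemma finite_latZ {Q : Set V} (hQ : IsLReflexive 1 Q) : (latZ Q).Finite := by
  obtain ⟨M, hM⟩ := (isCompact_of_reflexive hQ).isBounded.exists_norm_le
  refine ((Set.finite_Icc (-⌈M⌉) ⌈M⌉).prod (Set.finite_Icc (-⌈M⌉) ⌈M⌉)).subset ?_
  rintro p ⟨-, hp⟩
  have h := hM _ hp
  have h1 : |(p.1 : ℝ)| ≤ ⌈M⌉ := ((norm_fst_le (toV p)).trans h).trans (Int.le_ceil M)
  have h2 : |(p.2 : ℝ)| ≤ ⌈M⌉ := ((norm_snd_le (toV p)).trans h).trans (Int.le_ceil M)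
  rw [abs_le] at h1 h2
  exact ⟨⟨by exact_mod_cast h1.1, by exact_mod_cast h1.2⟩,
    ⟨by exact_mod_cast h2.1, by exact_mod_cast h2.2⟩⟩

/-- By Krein–Milman, a reflexive polygon is the convex hull of its nonzero lattice points. -/
lemma hull_latZ {Q : Set V} (hQ : IsLReflexive 1 Q) : Q = convexHull ℝ (toV '' latZ Q) := by
  apply Set.Subset.antisymm
  · have hkm := closure_convexHull_extremePoints (isCompact_of_reflexive hQ)
      (convex_of_reflexive hQ)
    conv_lhs => rw [← hkm]
    refine closure_minimal (convexHull_mono ?_)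
      (((finite_latZ hQ).image _).isCompact_convexHull ℝ).isClosed
    intro v hv
    obtain ⟨⟨p, hp⟩, hv0, -⟩ := hQ.vertices_primitive v hv
    refine ⟨p, ⟨?_, ?_⟩, hp.symm⟩
    · rintro rfl
      exact hv0 (hp.trans toV_zero)
    · have : toV p = v := hp.symm
      rw [this]
      exact hv.1
  · refine convexHull_min ?_ (convex_of_reflexive hQ)
    rintro _ ⟨p, hp, rfl⟩
    exact hp.2

/-! ### Normal form and enumeration -/

lemma det2_swap (a b : ℤ × ℤ) : det2 b a = -det2 a b := by
  simp only [det2]; ring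

/-- Besides the points `(1, j)`, the only lattice vectors that can occur in an admissible set in
normal form. -/
def cands : List (ℤ × ℤ) :=
  [(0, 1), (0, -1), (2, 1), (-1, 0), (-1, -1), (-1, -2), (-2, -1), (-2, -3)]

/-- An admissible set in normal form: it contains the vectors `(1, 0)`, `(1, 1)`, `(1, d)`, and
`d = det2 (1, 0) (1, d)` is the largest determinant of two of its members. -/
structure AdmNormal (L : Set (ℤ × ℤ)) (d : ℤ) : Prop where
  adm : Adm L
  pos : 0 < d
  mem0 : (1, 0) ∈ L
  mem1 : (1, 1) ∈ L
  memd : (1, d) ∈ L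
  max : ∀ a ∈ L, ∀ b ∈ L, det2 a b ≤ d

lemma AdmNormal.classify {L : Set (ℤ × ℤ)} {d : ℤ} (h : AdmNormal L d) {p : ℤ × ℤ} (hp : p ∈ L) :
    (∃ j, 0 ≤ j ∧ j ≤ d ∧ p = (1, j)) ∨ p ∈ cands := by
  obtain ⟨x, y⟩ := p
  have hd := h.pos
  have a1 := h.max _ h.mem0 _ hp
  have a2 := h.max _ hp _ h.mem0
  have a3 := h.max _ h.memd _ hp
  have a4 := h.max _ hp _ h.memd
  have r1 := h.adm.dvd _ h.mem0 _ hp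
  have hp0 : ∀ (q : ℤ × ℤ) (k : ℤ), 2 ≤ k → (k * q.1, k * q.2) ≠ (x, y) := fun q k hk e =>
    h.adm.prim q k hk (e ▸ hp)
  simp only [det2, one_mul, zero_mul, mul_zero, mul_one, sub_zero, zero_sub] at a1 a2 a3 a4 r1
  have hx1 : x ≤ 2 := by nlinarith
  have hx2 : -2 ≤ x := by nlinarith
  have hlist : ∀ q : ℤ × ℤ, q ∈ cands → (∃ j, 0 ≤ j ∧ j ≤ d ∧ q = (1, j)) ∨ q ∈ cands :=
    fun q hq => Or.inr hq
  obtain rfl | rfl | rfl | rfl | rfl : x = -2 ∨ x = -1 ∨ x = 0 ∨ x = 1 ∨ x = 2 := by omega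
  · have hy0 : y ≠ 0 := fun e => hp0 (-1, 0) 2 le_rfl (by simp [e])
    have hy : y ∣ 3 := by simpa using (r1 hy0).1
    have hle := Int.le_of_dvd (by norm_num) ((neg_dvd).2 hy)
    obtain rfl | rfl | rfl : y = -1 ∨ y = -2 ∨ y = -3 := by omega
    · exact hlist _ (by decide)
    · exact absurd hy (by decide)
    · exact hlist _ (by decide)
  · by_cases hy0 : y = 0
    · subst hy0
      exact hlist _ (by decide)
    · have hy : y ∣ 2 := by simpa using (r1 hy0).1
      have hle := Int.le_of_dvd (by norm_num) ((neg_dvd).2 hy)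
      obtain rfl | rfl : y = -1 ∨ y = -2 := by omega
      · exact hlist _ (by decide)
      · exact hlist _ (by decide)
  · have hy1 : y < 2 := by
      by_contra! hc
      exact hp0 (0, 1) y hc (by simp)
    have hy2 : -2 < y := by
      by_contra! hc
      exact hp0 (0, -1) (-y) (by omega) (by simp)
    have hy3 : y ≠ 0 := fun e => hp0 (0, 0) 2 le_rfl (by simp [e])
    obtain rfl | rfl : y = 1 ∨ y = -1 := by omega
    · exact hlist _ (by decide)
    · exact hlist _ (by decide)
  · exact Or.inl ⟨y, by omega, by omega, rfl⟩
  · have hy0 : y ≠ 0 := fun e => hp0 (1, 0) 2 le_rfl (by simp [e])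
    have hy : y ∣ 1 := by simpa using (r1 hy0).1
    have hle := Int.le_of_dvd (by norm_num) hy
    obtain rfl : y = 1 := by omega
    exact hlist _ (by decide)

lemma AdmNormal.d_le {L : Set (ℤ × ℤ)} {d : ℤ} (h : AdmNormal L d) : d ≤ 4 := by
  obtain ⟨p, hp, hlt⟩ := h.adm.neg (1, 0) (by decide)
  have hd := h.pos
  by_contra! hc
  have r := h.adm.dvd _ h.memd _ hp
  rcases h.classify hp with ⟨j, -, -, rfl⟩ | hcand
  · simp at hlt
  · simp only [cands, List.mem_cons, List.not_mem_nil, or_false] at hcand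
    rcases hcand with rfl | rfl | rfl | rfl | rfl | rfl | rfl | rfl <;> norm_num at hlt
    all_goals
      simp only [det2] at r
      have h1 := Int.le_of_dvd (by norm_num) ((dvd_neg).2 (r (by omega)).1)
      omega

/-- The pairwise divisibility condition of `Adm`. -/
def pairOK (a b : ℤ × ℤ) : Bool :=
  det2 a b == 0 || ((b.1 - a.1) % det2 a b == 0 && (b.2 - a.2) % det2 a b == 0)

/-- Small functionals, enough to detect that the origin is not an interior point. -/
def functionals : List (ℤ × ℤ) :=
  ([-2, -1, 0, 1, 2].flatMap fun x => [-2, -1, 0, 1, 2].map fun y => (x, y)).filter (· != (0, 0))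

/-- The computable part of the conditions of `AdmNormal`, for the set made of the points `(1, j)`,
`0 ≤ j ≤ d`, and the elements of `S`. -/
def validB (d : ℤ) (S : List (ℤ × ℤ)) : Bool :=
  let X := (1, 0) :: (1, 1) :: (1, d) :: S
  (X.all fun a => X.all fun b => pairOK a b && decide (det2 a b ≤ d)) &&
    functionals.all fun u => X.any fun p => decide (u.1 * p.1 + u.2 * p.2 < 0)

/-- `p` is a convex combination, with denominator at most four, of two members of `vs`. -/
def onSegB (vs : List (ℤ × ℤ)) (p : ℤ × ℤ) : Bool :=
  vs.any fun a => vs.any fun b => [1, 2, 3, 4].any fun m => [0, 1, 2, 3, 4].any fun k =>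
    decide (k ≤ m) && (m * p.1 == k * a.1 + (m - k) * b.1) &&
      (m * p.2 == k * a.2 + (m - k) * b.2)

/-- The matrix `t` has determinant `±1` and maps the convex hull of `(1, 0)`, `(1, d)` and `S`
onto `Qstd i`. -/
def goodB (d : ℤ) (S : List (ℤ × ℤ)) (t : Fin 16 × ℤ × ℤ × ℤ × ℤ) : Bool :=
  let A : Matrix (Fin 2) (Fin 2) ℤ := !![t.2.1, t.2.2.1; t.2.2.2.1, t.2.2.2.2]
  let X := ((1, 0) :: (1, d) :: S).map (actZ A)
  (t.2.1 * t.2.2.2.2 - t.2.2.1 * t.2.2.2.1 == 1 ||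
    t.2.1 * t.2.2.2.2 - t.2.2.1 * t.2.2.2.1 == -1) &&
  ((verts t.1).all fun v => X.elem v) && X.all fun p => onSegB (verts t.1) p

/-- Matrices (by rows), paired with the index of a standard polygon, that bring every admissible
set in normal form to one of the sixteen standard polygons. -/
def table : List (Fin 16 × ℤ × ℤ × ℤ × ℤ) :=
  [(0, 0, 1, 1, -1), (1, 0, -1, 1, -1), (2, -1, 1, 0, -1), (3, -1, 0, -1, 1),
   (3, -1, 0, 0, -1), (3, 0, -1, 1, -2), (3, 0, 1, 1, -1), (3, 1, -1, 0, 1),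
   (4, -1, 0, -1, 1), (4, -1, 0, 1, -1), (5, -1, 0, -1, 1), (5, -1, 0, 0, -1),
   (5, -1, 1, -1, 2), (5, -1, 1, 0, -1), (5, -1, 1, 0, 1), (5, 0, -1, 1, -2),
   (5, 0, -1, 1, -1), (5, 0, 1, 1, -1), (6, -1, 0, -1, 1), (6, -1, 0, 2, -1),
   (7, -1, 0, -1, 1), (7, -1, 0, 1, -1), (7, -1, 1, -1, 0), (7, 1, -1, -1, 0),
   (8, -1, 1, -1, 0), (9, -1, 0, 0, -1), (9, -1, 1, 0, -1), (10, -1, 0, -1, 1),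
   (10, -1, 0, 1, -1), (11, -1, 0, -1, 1), (11, -1, 0, 2, -1), (12, -1, 0, -1, 1),
   (13, -1, 0, -1, 1), (14, -1, 0, -1, 1), (15, -1, 0, -1, 1)]

/-- The enumeration: for `1 ≤ d ≤ 4`, every `S ⊆ cands` satisfying `validB` spans, together
with `(1, 0)` and `(1, d)`, a polygon equivalent to one of the standard ones. -/
lemma enumeration : ∀ d ∈ [1, 2, 3, 4], ∀ S ∈ cands.sublists,
    validB d S = true → table.any (goodB d S) = true := by
  decide +kernel

lemma mem_convexHull_of_onSegB {vs : List (ℤ × ℤ)} {p : ℤ × ℤ} (h : onSegB vs p = true) :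
    toV p ∈ convexHull ℝ (toV '' {v | v ∈ vs}) := by
  simp only [onSegB, List.any_eq_true, Bool.and_eq_true, decide_eq_true_eq, beq_iff_eq] at h
  obtain ⟨a, ha, b, hb, m, hm, k, hk, ⟨hkm, h1⟩, h2⟩ := h
  have hm0 : 0 < m := by
    simp only [List.mem_cons, List.not_mem_nil, or_false] at hm; omega
  have hk0 : 0 ≤ k := by
    simp only [List.mem_cons, List.not_mem_nil, or_false] at hk; omega
  have hmR : (0 : ℝ) < m := by exact_mod_cast hm0
  have hkR : (0 : ℝ) ≤ k := by exact_mod_cast hk0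
  have hkmR : (0 : ℝ) ≤ m - k := by
    rw [sub_nonneg]; exact_mod_cast hkm
  have e : toV p = ((k : ℝ) / m) • toV a + (((m : ℝ) - k) / m) • toV b := by
    have h1' : (m : ℝ) * p.1 = k * a.1 + (m - k) * b.1 := by exact_mod_cast h1
    have h2' : (m : ℝ) * p.2 = k * a.2 + (m - k) * b.2 := by exact_mod_cast h2
    simp only [toV, Prod.smul_mk, Prod.mk_add_mk, smul_eq_mul]
    ext
    · simp only; field_simp; linarith
    · simp only; field_simp; linarith
  rw [e]
  refine convex_convexHull ℝ _ (subset_convexHull ℝ _ (Set.mem_image_of_mem toV ha))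
    (subset_convexHull ℝ _ (Set.mem_image_of_mem toV hb)) (by positivity) (by positivity) ?_
  field_simp
  ring

lemma AdmNormal.validB {L : Set (ℤ × ℤ)} {d : ℤ} (h : AdmNormal L d) {S : List (ℤ × ℤ)}
    (hS : ∀ p, p ∈ S ↔ p ∈ cands ∧ p ∈ L) : validB d S = true := by
  have hX : ∀ p ∈ (1, 0) :: (1, 1) :: (1, d) :: S, p ∈ L := by
    intro p hp
    simp only [List.mem_cons] at hp
    rcases hp with rfl | rfl | rfl | hp
    exacts [h.mem0, h.mem1, h.memd, ((hS p).1 hp).2]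
  simp only [_root_.validB, Bool.and_eq_true, List.all_eq_true, List.any_eq_true,
    decide_eq_true_eq]
  refine ⟨fun a ha b hb => ⟨?_, h.max a (hX a ha) b (hX b hb)⟩, fun u hu => ?_⟩
  · by_cases h0 : det2 a b = 0
    · simp [pairOK, h0]
    · have := h.adm.dvd a (hX a ha) b (hX b hb) h0
      simp [pairOK, Int.emod_eq_zero_of_dvd this.1, Int.emod_eq_zero_of_dvd this.2]
  · have hu0 : u ≠ 0 := by
      rintro rfl
      exact absurd hu (by decide)
    obtain ⟨p, hp, hneg⟩ := h.adm.neg u hu0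
    rcases h.classify hp with ⟨j, hj0, hjd, rfl⟩ | hc
    · -- A functional negative at `(1, j)` is negative at `(1, 0)` or at `(1, d)`.
      by_cases h1 : u.1 < 0
      · exact ⟨(1, 0), by simp, by simpa using h1⟩
      · refine ⟨(1, d), by simp, ?_⟩
        simp only [mul_one] at hneg ⊢
        have hu2 : u.2 < 0 := by nlinarith
        nlinarith
    · exact ⟨p, by simp [(hS p).2 ⟨hc, hp⟩], hneg⟩

lemma AdmNormal.exists_matrix {L : Set (ℤ × ℤ)} {d : ℤ} (h : AdmNormal L d) :
    ∃ (i : Fin 16) (A : Matrix (Fin 2) (Fin 2) ℤ), (A.det = 1 ∨ A.det = -1) ∧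
      mapGL A '' convexHull ℝ (toV '' L) = Qstd i := by
  classical
  have hd : d ∈ [1, 2, 3, 4] := by
    have := h.pos
    have := h.d_le
    simp only [List.mem_cons, List.not_mem_nil, or_false]
    omega
  set S := cands.filter (fun p => decide (p ∈ L)) with hSdef
  have hS : ∀ p, p ∈ S ↔ p ∈ cands ∧ p ∈ L := by
    intro p
    simp [hSdef, List.mem_filter]
  have hSs : S ∈ cands.sublists := List.mem_sublists.2 List.filter_sublist
  have hg := enumeration d hd S hSs (h.validB hS)
  rw [List.any_eq_true] at hg
  obtain ⟨⟨i, a, b, c, e⟩, -, hg⟩ := hg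
  simp only [goodB, Bool.and_eq_true, List.all_eq_true, Bool.or_eq_true, beq_iff_eq,
    List.elem_eq_mem, decide_eq_true_eq, List.mem_map] at hg
  obtain ⟨⟨hdet, hv⟩, hp⟩ := hg
  refine ⟨i, !![a, b; c, e], by rwa [Matrix.det_fin_two_of], ?_⟩
  rw [mapGL_image_convexHull, Qstd_eq]
  have hcoreL : ∀ p ∈ (1, 0) :: (1, d) :: S, p ∈ L := by
    intro p hp
    simp only [List.mem_cons] at hp
    rcases hp with rfl | rfl | hp
    exacts [h.mem0, h.memd, ((hS p).1 hp).2]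
  have hcore : ∀ p ∈ (1, 0) :: (1, d) :: S,
      toV (actZ !![a, b; c, e] p) ∈ convexHull ℝ (toV '' {v | v ∈ verts i}) :=
    fun p hpm => mem_convexHull_of_onSegB (hp _ ⟨p, hpm, rfl⟩)
  apply Set.Subset.antisymm
  · refine convexHull_min ?_ (convex_convexHull ℝ _)
    rintro _ ⟨_, ⟨p, hpL, rfl⟩, rfl⟩
    rcases h.classify hpL with ⟨j, hj0, hjd, rfl⟩ | hc
    · have hdR : (0 : ℝ) < d := by exact_mod_cast h.pos
      have hjR : (0 : ℝ) ≤ j := by exact_mod_cast hj0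
      have hjdR : (0 : ℝ) ≤ d - j := by
        rw [sub_nonneg]; exact_mod_cast hjd
      have e1 : toV (actZ !![a, b; c, e] (1, j))
          = (((d : ℝ) - j) / d) • toV (actZ !![a, b; c, e] (1, 0))
            + ((j : ℝ) / d) • toV (actZ !![a, b; c, e] (1, d)) := by
        simp only [toV, actZ, Prod.smul_mk, Prod.mk_add_mk, smul_eq_mul]
        push_cast
        ext
        · simp only; field_simp; ring
        · simp only; field_simp; ring
      rw [e1]
      exact convex_convexHull ℝ _ (hcore _ (by simp)) (hcore _ (by simp)) (by positivity)
        (by positivity) (by field_simp; ring)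
    · exact hcore p (by simp [(hS p).2 ⟨hc, hpL⟩])
  · apply convexHull_mono
    rintro _ ⟨v, hvm, rfl⟩
    obtain ⟨p, hpm, hpv⟩ := hv v hvm
    exact ⟨v, ⟨p, hcoreL p hpm, hpv⟩, rfl⟩

/-- Choose `a, b` among the lattice points of `Q` with the largest possible determinant `d`. By
divisibility, `w = (b - a) / d` is integral and `a, w` is a basis of the lattice; in this basis `a`,
`a + w` and `b` become `(1, 0)`, `(1, 1)` and `(1, d)`. -/
lemma exists_normal {Q : Set V} (hQ : IsLReflexive 1 Q) :
    ∃ (M : Matrix (Fin 2) (Fin 2) ℤ) (d : ℤ), M.det = 1 ∧ AdmNormal (actZ M '' latZ Q) d := by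
  have hadm := adm_latZ hQ (hull_latZ hQ)
  have hfin := finite_latZ hQ
  obtain ⟨p₀, hp₀, -⟩ := hadm.neg (1, 0) (by decide)
  obtain ⟨⟨a, b⟩, ⟨ha, hb⟩, hmax⟩ := (hfin.prod hfin).exists_maximalFor
    (fun q : (ℤ × ℤ) × (ℤ × ℤ) => det2 q.1 q.2) _ ⟨(p₀, p₀), hp₀, hp₀⟩
  have hmax' : ∀ p ∈ latZ Q, ∀ q ∈ latZ Q, det2 p q ≤ det2 a b := by
    intro p hp q hq
    rcases le_total (det2 p q) (det2 a b) with h | h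
    · exact h
    · exact hmax (j := (p, q)) ⟨hp, hq⟩ h
  have hdpos : 0 < det2 a b := by
    have hp0 : ((-p₀.2, p₀.1) : ℤ × ℤ) ≠ 0 := by
      intro e
      apply hp₀.1
      simp only [Prod.mk_eq_zero, neg_eq_zero] at e
      exact Prod.ext e.2 e.1
    obtain ⟨q, hq, hneg⟩ := hadm.neg _ hp0
    have := hmax' q hq p₀ hp₀
    have e : det2 q p₀ = -(-p₀.2 * q.1 + p₀.1 * q.2) := by simp only [det2]; ring
    simp only at hneg
    omega
  set d := det2 a b with hd
  obtain ⟨⟨w1, hw1⟩, ⟨w2, hw2⟩⟩ := hadm.dvd a ha b hb hdpos.ne'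
  rw [← hd] at hw1 hw2
  have hb1 : b.1 = a.1 + d * w1 := by linarith
  have hb2 : b.2 = a.2 + d * w2 := by linarith
  have hdet : a.1 * w2 - a.2 * w1 = 1 := by
    have h1 : d * (a.1 * w2 - a.2 * w1) = d * 1 := by
      conv_rhs => rw [mul_one, hd, det2, hb1, hb2]
      ring
    exact mul_left_cancel₀ hdpos.ne' h1
  let M : Matrix (Fin 2) (Fin 2) ℤ := !![w2, -w1; -a.2, a.1]
  have hM : ∀ p, actZ M p = (w2 * p.1 - w1 * p.2, a.1 * p.2 - a.2 * p.1) := by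
    intro p
    simp only [actZ, M, Matrix.of_apply, Matrix.cons_val', Matrix.cons_val_zero,
      Matrix.cons_val_one, Matrix.cons_val_fin_one]
    ext <;> simp only <;> ring
  have hMdet : ∀ p q, det2 (actZ M p) (actZ M q) = det2 p q := by
    intro p q
    rw [hM, hM]
    simp only [det2]
    linear_combination (p.1 * q.2 - p.2 * q.1) * hdet
  -- The point `a + w` belongs to `Q`, being on the segment from `a` to `b`.
  have hmid : ((a.1 + w1, a.2 + w2) : ℤ × ℤ) ∈ latZ Q := by
    constructor
    · intro e
      simp only [Prod.mk_eq_zero] at e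
      have : a.1 * w2 - a.2 * w1 = 0 := by
        linear_combination w2 * e.1 - w1 * e.2
      omega
    · have hdR : (1 : ℝ) ≤ d := by exact_mod_cast hdpos
      have hd0 : (0 : ℝ) < d := by linarith
      have hb1R : (b.1 : ℝ) = a.1 + d * w1 := by exact_mod_cast hb1
      have hb2R : (b.2 : ℝ) = a.2 + d * w2 := by exact_mod_cast hb2
      have e : toV (a.1 + w1, a.2 + w2) = (((d : ℝ) - 1) / d) • toV a + ((1 : ℝ) / d) • toV b := by
        simp only [toV, Prod.smul_mk, Prod.mk_add_mk, smul_eq_mul, hb1R, hb2R]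
        push_cast
        ext
        · simp only; field_simp; ring
        · simp only; field_simp; ring
      rw [e]
      exact convex_of_reflexive hQ ha.2 hb.2 (div_nonneg (by linarith) hd0.le) (by positivity)
        (by field_simp; ring)
  refine ⟨M, d, ?_, ?_⟩
  · rw [Matrix.det_fin_two_of]; linarith
  refine ⟨⟨?_, ?_, ?_⟩, hdpos, ?_, ?_, ?_, ?_⟩
  · rintro p k hk ⟨q, hq, e⟩
    rw [hM, Prod.mk.injEq] at e
    refine hadm.prim (a.1 * p.1 + w1 * p.2, a.2 * p.1 + w2 * p.2) k hk ?_
    have : ((k * (a.1 * p.1 + w1 * p.2), k * (a.2 * p.1 + w2 * p.2)) : ℤ × ℤ) = q := by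
      ext
      · simp only
        linear_combination (-a.1) * e.1 - w1 * e.2 + q.1 * hdet
      · simp only
        linear_combination (-a.2) * e.1 - w2 * e.2 + q.2 * hdet
    exact this ▸ hq
  · rintro _ ⟨p, hp, rfl⟩ _ ⟨q, hq, rfl⟩ h0
    rw [hMdet] at h0 ⊢
    obtain ⟨h1, h2⟩ := hadm.dvd p hp q hq h0
    rw [hM, hM]
    constructor
    · have := dvd_sub (h1.mul_left w2) (h2.mul_left w1)
      have e : w2 * q.1 - w1 * q.2 - (w2 * p.1 - w1 * p.2)
          = w2 * (q.1 - p.1) - w1 * (q.2 - p.2) := by ring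
      exact e ▸ this
    · have := dvd_sub (h2.mul_left a.1) (h1.mul_left a.2)
      have e : a.1 * q.2 - a.2 * q.1 - (a.1 * p.2 - a.2 * p.1)
          = a.1 * (q.2 - p.2) - a.2 * (q.1 - p.1) := by ring
      exact e ▸ this
  · intro u hu
    obtain ⟨p, hp, hneg⟩ := hadm.neg (u.1 * w2 - u.2 * a.2, u.2 * a.1 - u.1 * w1) (by
      intro e
      simp only [Prod.mk_eq_zero] at e
      refine hu (Prod.ext ?_ ?_)
      · show u.1 = 0
        linear_combination a.1 * e.1 + a.2 * e.2 - u.1 * hdet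
      · show u.2 = 0
        linear_combination w1 * e.1 + w2 * e.2 - u.2 * hdet)
    refine ⟨_, ⟨p, hp, rfl⟩, ?_⟩
    rw [hM]
    simp only at hneg ⊢
    linarith
  · refine ⟨a, ha, ?_⟩
    rw [hM]
    ext <;> simp only <;> linarith
  · refine ⟨_, hmid, ?_⟩
    rw [hM]
    ext <;> simp only <;> linarith
  · refine ⟨b, hb, ?_⟩
    rw [hM, hb1, hb2]
    ext
    · simp only; linear_combination hdet
    · simp only; linear_combination d * hdet
  · rintro _ ⟨p, hp, rfl⟩ _ ⟨q, hq, rfl⟩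
    rw [hMdet]
    exact hmax' p hp q hq

lemma exists_matrix {Q : Set V} (hQ : IsLReflexive 1 Q) :
    ∃ (i : Fin 16) (A : Matrix (Fin 2) (Fin 2) ℤ), (A.det = 1 ∨ A.det = -1) ∧
      mapGL A '' Q = Qstd i := by
  obtain ⟨M, d, hM, hN⟩ := exists_normal hQ
  obtain ⟨i, A, hA, hAQ⟩ := hN.exists_matrix
  refine ⟨i, A * M, by rwa [Matrix.det_mul, hM, mul_one], ?_⟩
  rw [← hAQ, ← mapGL_image_convexHull, ← hull_latZ hQ, Set.image_image]
  simp only [mapGL_mul]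

/-- **Classification of reflexive polygons.** -/
theorem classification_of_reflexive_polygons (Q : Set V) (hQ : IsLReflexive 1 Q) :
    (Set.extremePoints ℝ Q).ncard ≤ 6 ∧
    ∃! i : Fin 16, ∃ A : Matrix (Fin 2) (Fin 2) ℤ,
      (A.det = 1 ∨ A.det = -1) ∧ mapGL A '' Q = Qstd i := by
  obtain ⟨i, A, hA, hAQ⟩ := exists_matrix hQ
  refine ⟨ncard_extremePoints_le hA hAQ, i, ⟨A, hA, hAQ⟩, ?_⟩
  rintro j ⟨B, hB, hBQ⟩
  exact index_unique hB hBQ hA hAQ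
end
end
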